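/- Let n ≥ 3 be an integer and set χ = χ_k^{n−2}. Let (L₀, ⟨·,·⟩) be a self-dual positive definite hermitian O_k-lattice of rank n−2, with quadratic form Q(x) = ⟨x,x⟩. Let f ∈ M^{!,∞}_{2−n}(D,χ) have Fourier coefficients c(m), and assume c(m) ∈ ℤ for all m ≤ 0. Then the rational number mult(f) := (1/(n−2))·∑_{m>0} m·c(−m)·#{x ∈ L₀ : Q(x) = m} (a finite sum) is an integer. -/

import Mathlib

/-!
Write `k = n - 2` for the rank of the hermitian lattice. Over `ℤ` it is an even lattice of rank
`r = 2k` with Gram matrix `A` (the trace form), quadratic form `q(x) = Q(x) = xᵀ A x / 2`, level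
dividing `D` and determinant `D^k` (`exists_lattice`).

For indices `i, j` the quadratic weight `P(y) = yᵢ yⱼ - (Aᵢⱼ / r) yᵀ A⁻¹ y` is harmonic, so the theta
series `θ_P(τ) = ∑ P(A x) e(q(x) τ)` is modular of weight `k + 2 = n` on `Γ₀(D)` with character
`χ_k^k`, and it vanishes at all cusps because `P(0) = 0`. This rests on Poisson summation with
harmonic weights (`gauss_poisson`, `good_PH`), on the transformation of theta series under `SL₂(ℤ)`
in terms of Gauss sums (`theta_transform`), and on the evaluation of those Gauss sums modulo a prime
(`kappa_eq`, `G_prime`, `theta_gamma`, `theta_cusp`).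

The product `f θ_P` has weight two and trivial character on `Γ₀(D)` and tends to zero at every cusp
other than `∞`. By the residue theorem (`residue_zero`) its constant term vanishes
(`pairing_zero`), which, as `yᵀ A⁻¹ y = 2 q(x)` for `y = A x`, says
`∑ₓ c(-q(x)) (Ax)ᵢ (Ax)ⱼ = Aᵢⱼ mult(f)` for all `i, j`. The left side is an integer. The entries of
`A` have greatest common divisor one, since `det A = D^k` with `A` of size `2k` and `D` squarefree
(`bezout`). Hence `mult(f)` is an integer (`mult_int`).
-/

noncomputable section

/-- The complex upper half plane, as a subset of `ℂ`. -/
def UHP : Set ℂ := {z : ℂ | 0 < z.im}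

/-- A `2 × 2` integer matrix viewed as a real matrix. -/
def matR (g : Matrix (Fin 2) (Fin 2) ℤ) : Matrix (Fin 2) (Fin 2) ℝ :=
  g.map fun x => (x : ℝ)

/-- The weight `w` slash action of a real `2 × 2` matrix `g = [[a,b],[c,d]]` (of positive
determinant) on functions: `(f ∣[w] g)(τ) = det(g)^{w/2} (cτ+d)^{-w} f((aτ+b)/(cτ+d))`. -/
def slash (w : ℤ) (g : Matrix (Fin 2) (Fin 2) ℝ) (f : ℂ → ℂ) : ℂ → ℂ := fun τ =>
  (Real.sqrt g.det : ℂ) ^ w * ((g 1 0 : ℂ) * τ + (g 1 1 : ℂ)) ^ (-w) *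
    f (((g 0 0 : ℂ) * τ + (g 0 1 : ℂ)) / ((g 1 0 : ℂ) * τ + (g 1 1 : ℂ)))

/-- `χ : ℤ → ℂ` is a quadratic Dirichlet character modulo `D`. -/
structure IsQuadDirChar (D : ℕ) (χ : ℤ → ℂ) : Prop where
  periodic : ∀ a : ℤ, χ (a + D) = χ a
  mul : ∀ a b : ℤ, χ (a * b) = χ a * χ b
  eq_zero_iff : ∀ a : ℤ, χ a = 0 ↔ ¬ IsCoprime a (D : ℤ)
  sq_vals : ∀ a : ℤ, χ a = 0 ∨ χ a = 1 ∨ χ a = -1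

/-- `f : ℍ → ℂ` is a weakly holomorphic modular form of weight `w`, level `Γ₀(D)`, character
`χ`, holomorphic outside the cusp `∞`, with Fourier coefficients `c`; i.e. `f ∈ M^{!,∞}_w(D,χ)`.
Only the restriction of `f` to the upper half plane matters. -/
structure IsWeaklyHolInfty (D : ℕ) (χ : ℤ → ℂ) (w : ℤ) (f : ℂ → ℂ) (c : ℤ → ℂ) : Prop where
  holo : DifferentiableOn ℂ f UHP
  transform : ∀ γ : Matrix.SpecialLinearGroup (Fin 2) ℤ, (D : ℤ) ∣ γ 1 0 →
    ∀ τ ∈ UHP, slash w (matR γ) f τ = χ (γ 1 1) * f τ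
  coeff_bddBelow : ∃ m₀ : ℤ, ∀ m : ℤ, m < -m₀ → c m = 0
  fourier : ∀ τ ∈ UHP,
    HasSum (fun m : ℤ => c m * Complex.exp (2 * (Real.pi : ℂ) * Complex.I * m * τ)) (f τ)
  bdd_at_other_cusps : ∀ γ : Matrix.SpecialLinearGroup (Fin 2) ℤ, ¬ (D : ℤ) ∣ γ 1 0 →
    ∃ C : ℝ, ∀ τ : ℂ, 1 ≤ τ.im → ‖slash w (matR γ) f τ‖ ≤ C

/-- An odd nonnegative representative of `a` modulo `D` (for odd `D`). -/
def oddRep (D : ℕ) (a : ℤ) : ℕ :=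
  if (a % (D : ℤ)).toNat % 2 = 1 then (a % (D : ℤ)).toNat else (a % (D : ℤ)).toNat + D

/-- The quadratic Dirichlet character `χ_k` modulo `D` attached to the imaginary quadratic field
`k` of discriminant `-D`, via the Jacobi symbol. -/
def chiK (D : ℕ) (a : ℤ) : ℤ := jacobiSym (-(D : ℤ)) (oddRep D a)

/-- The element `(1 + √-D)/2` of `ℂ`. -/
def okGen (D : ℕ) : ℂ := (1 + Real.sqrt D * Complex.I) / 2

/-- The ring of integers `O_k = ℤ[(1+√-D)/2]` of the imaginary quadratic field
`k = ℚ(√-D) ⊆ ℂ` of discriminant `-D` (for squarefree `D ≡ 3 mod 4`). -/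
def Ok (D : ℕ) : Subring ℂ := Subring.closure {okGen D}

/-! ### Positive definite forms and convergence -/

section

open Real Complex

/-- The real quadratic form `x ↦ xᵀ A x`. -/
def qf {r : ℕ} (A : Matrix (Fin r) (Fin r) ℝ) (x : Fin r → ℝ) : ℝ := x ⬝ᵥ (A.mulVec x)

/-- An integer vector seen as a real vector. -/
def ic {r : ℕ} (x : Fin r → ℤ) : Fin r → ℝ := fun i => (x i : ℝ)

/-- A symmetric positive definite real matrix. -/
structure SPD {r : ℕ} (A : Matrix (Fin r) (Fin r) ℝ) : Prop where
  symm : ∀ i j, A i j = A j i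
  pos : ∀ x, x ≠ 0 → 0 < qf A x

lemma qf_smul {r : ℕ} (A : Matrix (Fin r) (Fin r) ℝ) (t : ℝ) (x : Fin r → ℝ) :
    qf A (t • x) = t ^ 2 * qf A x := by
  simp only [qf, Matrix.mulVec_smul, smul_dotProduct, dotProduct_smul, smul_eq_mul]; ring

lemma qf_zero {r : ℕ} (A : Matrix (Fin r) (Fin r) ℝ) : qf A 0 = 0 := by
  simp [qf]

lemma qf_continuous {r : ℕ} (A : Matrix (Fin r) (Fin r) ℝ) : Continuous (qf A) := by
  unfold qf Matrix.mulVec dotProduct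
  fun_prop

lemma SPD.nonneg {r : ℕ} {A : Matrix (Fin r) (Fin r) ℝ} (hA : SPD A) (x : Fin r → ℝ) :
    0 ≤ qf A x := by
  by_cases hx : x = 0
  · simp [hx, qf_zero]
  · exact (hA.pos x hx).le

/-- Coercivity of a positive definite form, by compactness of the unit sphere. -/
lemma SPD.coercive {r : ℕ} {A : Matrix (Fin r) (Fin r) ℝ} (hA : SPD A) :
    ∃ δ > 0, ∀ x : Fin r → ℝ, δ * ‖x‖ ^ 2 ≤ qf A x := by
  by_cases hne : (Metric.sphere (0 : Fin r → ℝ) 1).Nonempty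
  · obtain ⟨x0, hx0, hmin⟩ := (isCompact_sphere (0 : Fin r → ℝ) 1).exists_isMinOn hne
      (qf_continuous A).continuousOn
    have hx0' : ‖x0‖ = 1 := by simpa using hx0
    have hx0n : x0 ≠ 0 := by rintro rfl; simp at hx0'
    refine ⟨qf A x0, hA.pos x0 hx0n, fun x => ?_⟩
    by_cases hx : x = 0
    · simp [hx, qf_zero]
    have hxn : 0 < ‖x‖ := norm_pos_iff.mpr hx
    have h1 : ‖x‖⁻¹ • x ∈ Metric.sphere (0 : Fin r → ℝ) 1 := by
      simp [norm_smul, hxn.ne']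
    have h2 := isMinOn_iff.mp hmin _ h1
    rw [qf_smul, inv_pow, inv_mul_eq_div, le_div_iff₀ (by positivity)] at h2
    exact h2
  · refine ⟨1, one_pos, fun x => ?_⟩
    have hx : x = 0 := by
      by_contra hx
      have hxn : 0 < ‖x‖ := norm_pos_iff.mpr hx
      exact hne ⟨‖x‖⁻¹ • x, by simp [norm_smul, hxn.ne']⟩
    simp [hx, qf_zero]

lemma summable_gauss_int (δ α : ℝ) (hδ : 0 < δ) :
    Summable fun n : ℤ => Real.exp (-δ * (n : ℝ) ^ 2 + α * |(n : ℝ)|) := by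
  have h0 : Summable fun n : ℤ => Real.exp (-|(n : ℝ)|) := by
    apply Summable.of_nat_of_neg
    · simpa using Real.summable_exp_neg_nat
    · simpa using Real.summable_exp_neg_nat
  refine Summable.of_nonneg_of_le (fun _ => (Real.exp_pos _).le) (fun n => ?_)
    (h0.mul_left (Real.exp ((α + 1) ^ 2 / (4 * δ))))
  rw [← Real.exp_add]
  apply Real.exp_le_exp.mpr
  have h1 : (α + 1) ^ 2 / (4 * δ) - (α + 1) * |(n : ℝ)| + δ * |(n : ℝ)| ^ 2
      = (2 * δ * |(n : ℝ)| - (α + 1)) ^ 2 / (4 * δ) := by field_simp; ring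
  have h2 : 0 ≤ (2 * δ * |(n : ℝ)| - (α + 1)) ^ 2 / (4 * δ) := by positivity
  rw [← sq_abs (n : ℝ)]
  linarith

lemma summable_prod_pi (f : ℤ → ℝ) (hf : ∀ n, 0 ≤ f n) (hs : Summable f) (r : ℕ) :
    Summable fun x : Fin r → ℤ => ∏ i, f (x i) := by
  induction r with
  | zero => exact (hasSum_fintype _).summable
  | succ r ih =>
    rw [← (Fin.consEquiv (fun _ : Fin (r + 1) => ℤ)).summable_iff]
    have := hs.mul_of_nonneg ih hf (fun x => Finset.prod_nonneg fun i _ => hf _)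
    refine this.congr fun p => ?_
    simp [Fin.prod_univ_succ, Fin.consEquiv]

lemma norm_ic_le {r : ℕ} (x : Fin r → ℤ) : ‖ic x‖ ≤ ∑ i, |(x i : ℝ)| := by
  refine (pi_norm_le_iff_of_nonneg (Finset.sum_nonneg fun i _ => abs_nonneg _)).mpr fun i => ?_
  simpa [ic] using Finset.single_le_sum (f := fun i => |(x i : ℝ)|)
    (fun i _ => abs_nonneg _) (Finset.mem_univ i)

lemma summable_gauss_norm (r : ℕ) (δ α : ℝ) (hδ : 0 < δ) (hα : 0 ≤ α) :
    Summable fun x : Fin r → ℤ => Real.exp (-δ * ‖ic x‖ ^ 2 + α * ‖ic x‖) := by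
  refine Summable.of_nonneg_of_le (fun _ => (Real.exp_pos _).le) (fun x => ?_)
    (summable_prod_pi _ (fun _ => (Real.exp_pos _).le)
      (summable_gauss_int (δ / (r + 1)) α (by positivity)) r)
  rw [← Real.exp_sum]
  apply Real.exp_le_exp.mpr
  rw [Finset.sum_add_distrib, ← Finset.mul_sum, ← Finset.mul_sum]
  have h1 := norm_ic_le x
  have h2 : ∑ i, (x i : ℝ) ^ 2 ≤ r * ‖ic x‖ ^ 2 := by
    calc ∑ i, (x i : ℝ) ^ 2 ≤ ∑ i : Fin r, ‖ic x‖ ^ 2 := by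
          refine Finset.sum_le_sum fun i _ => ?_
          rw [← sq_abs]
          have := norm_le_pi_norm (ic x) i
          gcongr
          simpa [ic] using this
      _ = _ := by simp
  have h3 : δ / (r + 1) * ∑ i, (x i : ℝ) ^ 2 ≤ δ * ‖ic x‖ ^ 2 := by
    calc _ ≤ δ / (r + 1) * (r * ‖ic x‖ ^ 2) := by gcongr
      _ = δ * ‖ic x‖ ^ 2 * (r / (r + 1)) := by ring
      _ ≤ δ * ‖ic x‖ ^ 2 * 1 := by
          gcongr
          rw [div_le_one (by positivity)]; linarith
      _ = _ := by ring
  have h4 := mul_le_mul_of_nonneg_left h1 hα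
  linarith

/-- Gaussian sums over a shifted lattice converge, even against exponential weights. -/
lemma SPD.summable {r : ℕ} {A : Matrix (Fin r) (Fin r) ℝ} (hA : SPD A) (ρ α : ℝ) (hρ : 0 < ρ)
    (hα : 0 ≤ α) (w : Fin r → ℝ) :
    Summable fun x : Fin r → ℤ => Real.exp (-ρ * qf A (ic x - w) + α * ‖ic x‖) := by
  obtain ⟨δ, hδ, h⟩ := hA.coercive
  refine Summable.of_nonneg_of_le (fun _ => (Real.exp_pos _).le) (fun x => ?_)
    ((summable_gauss_norm r (ρ * δ / 2) α (by positivity) hα).mul_left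
      (Real.exp (ρ * δ * ‖w‖ ^ 2)))
  rw [← Real.exp_add]
  apply Real.exp_le_exp.mpr
  have h1 := h (ic x - w)
  have h2 : ‖ic x‖ ≤ ‖ic x - w‖ + ‖w‖ := by
    simpa using norm_add_le (ic x - w) w
  have h3 : ‖ic x‖ ^ 2 ≤ 2 * ‖ic x - w‖ ^ 2 + 2 * ‖w‖ ^ 2 := by
    nlinarith [norm_nonneg (ic x), sq_nonneg (‖ic x - w‖ - ‖w‖)]
  have h4 := mul_le_mul_of_nonneg_left h1 hρ.le
  have h5 := mul_le_mul_of_nonneg_left h3 (by positivity : 0 ≤ ρ * δ / 2)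
  nlinarith

lemma norm_cexp_gauss (β : ℂ) (q s : ℝ) :
    ‖cexp (-π * β * q + 2 * π * I * s)‖ = Real.exp (-(π * β.re) * q) := by
  rw [Complex.norm_exp]; congr 1; simp

lemma norm_cexp_gauss' (β : ℂ) (q : ℝ) :
    ‖cexp (-π / β * q)‖ = Real.exp (-(π * (1 / β).re) * q) := by
  rw [div_eq_mul_one_div, Complex.norm_exp]; congr 1; simp

lemma inv_re_pos {β : ℂ} (hβ : 0 < β.re) : 0 < (1 / β).re := by
  rw [one_div, Complex.inv_re]
  have : β ≠ 0 := by rintro rfl; simp at hβ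
  have := Complex.normSq_pos.mpr this
  positivity

lemma SPD.summable_cexp {r : ℕ} {A : Matrix (Fin r) (Fin r) ℝ} (hA : SPD A) (β : ℂ)
    (hβ : 0 < β.re) (w : Fin r → ℝ) :
    Summable fun x : Fin r → ℤ => cexp (-π * β * qf A (ic x) + 2 * π * I * (w ⬝ᵥ ic x : ℝ)) := by
  apply Summable.of_norm
  simp_rw [norm_cexp_gauss]
  simpa using hA.summable (π * β.re) 0 (by positivity) le_rfl 0

lemma SPD.summable_cexp' {r : ℕ} {A : Matrix (Fin r) (Fin r) ℝ} (hA : SPD A) (β : ℂ)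
    (hβ : 0 < β.re) (w : Fin r → ℝ) :
    Summable fun x : Fin r → ℤ => cexp (-π / β * qf A (ic x - w)) := by
  apply Summable.of_norm
  simp_rw [norm_cexp_gauss']
  have := inv_re_pos hβ
  simpa using hA.summable (π * (1 / β).re) 0 (by positivity) le_rfl w

end

/-! ### Poisson summation for Gaussians -/

section

open Real Complex

/-- Schur complement of the `(0,0)` entry. -/
def schur {r : ℕ} (A : Matrix (Fin (r + 1)) (Fin (r + 1)) ℝ) : Matrix (Fin r) (Fin r) ℝ :=
  fun i j => A i.succ j.succ - A 0 i.succ * A 0 j.succ / A 0 0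

/-- First row of `A` divided by the corner entry. -/
def rowv {r : ℕ} (A : Matrix (Fin (r + 1)) (Fin (r + 1)) ℝ) : Fin r → ℝ :=
  fun j => A 0 j.succ / A 0 0

lemma SPD.corner_pos {r : ℕ} {A : Matrix (Fin (r + 1)) (Fin (r + 1)) ℝ} (hA : SPD A) :
    0 < A 0 0 := by
  have := hA.pos (Pi.single 0 1) (by simp)
  simpa [qf] using this

lemma qf_expand {r : ℕ} (A : Matrix (Fin r) (Fin r) ℝ) (x : Fin r → ℝ) :
    qf A x = ∑ i, ∑ j, A i j * x i * x j := by
  simp only [qf, dotProduct, Matrix.mulVec, Finset.mul_sum]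
  refine Finset.sum_congr rfl fun i _ => Finset.sum_congr rfl fun j _ => by ring

lemma qf_cons {r : ℕ} {A : Matrix (Fin (r + 1)) (Fin (r + 1)) ℝ} (hA : SPD A)
    (t : ℝ) (x : Fin r → ℝ) :
    qf A (Fin.cons t x) = A 0 0 * (t + rowv A ⬝ᵥ x) ^ 2 + qf (schur A) x := by
  have ha := hA.corner_pos.ne'
  have h1 : qf (schur A) x =
      ∑ i, ∑ j, A i.succ j.succ * x i * x j - A 0 0 * (rowv A ⬝ᵥ x) ^ 2 := by
    rw [qf_expand, pow_two, dotProduct, Finset.sum_mul_sum, Finset.mul_sum,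
      ← Finset.sum_sub_distrib]
    refine Finset.sum_congr rfl fun i _ => ?_
    rw [Finset.mul_sum, ← Finset.sum_sub_distrib]
    refine Finset.sum_congr rfl fun j _ => ?_
    simp only [schur, rowv]; field_simp
  have h2 : A 0 0 * (rowv A ⬝ᵥ x) = ∑ j, A 0 j.succ * x j := by
    rw [dotProduct, Finset.mul_sum]
    refine Finset.sum_congr rfl fun j _ => ?_
    simp only [rowv]; field_simp
  rw [h1, qf_expand, Fin.sum_univ_succ]
  simp only [Fin.sum_univ_succ, Fin.cons_zero, Fin.cons_succ, Finset.sum_add_distrib]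
  have h3 : ∑ i, A (Fin.succ i) 0 * x i * t = t * (A 0 0 * (rowv A ⬝ᵥ x)) := by
    rw [h2, Finset.mul_sum]
    refine Finset.sum_congr rfl fun j _ => ?_
    rw [hA.symm]; ring
  have h4 : ∑ i, A 0 (Fin.succ i) * t * x i = t * (A 0 0 * (rowv A ⬝ᵥ x)) := by
    rw [h2, Finset.mul_sum]
    refine Finset.sum_congr rfl fun j _ => ?_
    ring
  rw [h3, h4]; ring

lemma SPD.schur {r : ℕ} {A : Matrix (Fin (r + 1)) (Fin (r + 1)) ℝ} (hA : SPD A) :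
    SPD (schur A) := by
  refine ⟨fun i j => ?_, fun x hx => ?_⟩
  · simp only [_root_.schur]; rw [hA.symm i.succ]; ring
  · have := hA.pos (Fin.cons (-(rowv A ⬝ᵥ x)) x) (fun h => hx ?_)
    · rw [qf_cons hA] at this; simpa using this
    · ext i; simpa using congrFun h i.succ

/-- The lower right block of the inverse. -/
def lowerBlock {r : ℕ} (A : Matrix (Fin (r + 1)) (Fin (r + 1)) ℝ) : Matrix (Fin r) (Fin r) ℝ :=
  fun i j => A i.succ j.succ

lemma schur_mul {r : ℕ} {A A' : Matrix (Fin (r + 1)) (Fin (r + 1)) ℝ} (hA : SPD A)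
    (h : A * A' = 1) : schur A * lowerBlock A' = 1 := by
  have ha := hA.corner_pos.ne'
  ext i k
  have h1 := congrFun (congrFun h i.succ) k.succ
  have h2 := congrFun (congrFun h 0) k.succ
  simp only [Matrix.mul_apply, Fin.sum_univ_succ, Matrix.one_apply, Fin.succ_inj,
    (Fin.succ_ne_zero k).symm, if_false] at h1 h2
  rw [hA.symm i.succ 0] at h1
  simp only [Matrix.mul_apply, schur, lowerBlock, Matrix.one_apply]
  rw [← h1]
  have : ∀ j : Fin r, (A i.succ j.succ - A 0 i.succ * A 0 j.succ / A 0 0) * A' j.succ k.succ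
      = A i.succ j.succ * A' j.succ k.succ - A 0 i.succ / A 0 0 * (A 0 j.succ * A' j.succ k.succ) :=
    fun j => by ring
  simp_rw [this, Finset.sum_sub_distrib, ← Finset.mul_sum]
  have h3 : ∑ j : Fin r, A 0 j.succ * A' j.succ k.succ = - (A 0 0 * A' 0 k.succ) := by linarith
  rw [h3]; field_simp; ring

lemma SPD.inv {r : ℕ} {A A' : Matrix (Fin r) (Fin r) ℝ} (hA : SPD A)
    (h : A * A' = 1) : SPD A' := by
  have hAt : A.transpose = A := by ext i j; exact hA.symm j i
  have h' : A' * A = 1 := mul_eq_one_comm.mp h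
  have hs : A'.transpose = A' := by
    have : A'.transpose * A = 1 := by
      have := congrArg Matrix.transpose h
      rwa [Matrix.transpose_mul, hAt, Matrix.transpose_one] at this
    calc A'.transpose = A'.transpose * (A * A') := by rw [h, mul_one]
      _ = A' := by rw [← mul_assoc, this, one_mul]
  refine ⟨fun i j => ?_, fun x hx => ?_⟩
  · conv_lhs => rw [← hs]
    rfl
  · have h1 : A'.mulVec x ≠ 0 := by
      intro h0
      apply hx
      have := congrArg A.mulVec h0
      rwa [Matrix.mulVec_mulVec, h, Matrix.one_mulVec, Matrix.mulVec_zero] at this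
    have := hA.pos _ h1
    rwa [qf, Matrix.mulVec_mulVec, h, Matrix.one_mulVec, dotProduct_comm] at this

lemma qf_inv_cons {r : ℕ} {A A' : Matrix (Fin (r + 1)) (Fin (r + 1)) ℝ} (hA : SPD A)
    (h : A * A' = 1) (t : ℝ) (y : Fin r → ℝ) :
    qf A' (Fin.cons t y) = t ^ 2 / A 0 0 + qf (lowerBlock A') (y - t • rowv A) := by
  have ha := hA.corner_pos.ne'
  have hA' := hA.inv h
  have h' : A' * A = 1 := mul_eq_one_comm.mp h
  have e0 := congrFun (congrFun h' 0) 0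
  simp only [Matrix.mul_apply, Fin.sum_univ_succ, Matrix.one_apply, if_true] at e0
  have e1 : (lowerBlock A').mulVec (rowv A) = fun i => - A' i.succ 0 := by
    ext i
    have := congrFun (congrFun h' i.succ) 0
    simp only [Matrix.mul_apply, Fin.sum_univ_succ, Matrix.one_apply, (Fin.succ_ne_zero i),
      if_false] at this
    simp only [Matrix.mulVec, dotProduct, lowerBlock, rowv]
    have h3 : ∀ j : Fin r, A' i.succ j.succ * (A 0 j.succ / A 0 0)
        = (A' i.succ j.succ * A j.succ 0) / A 0 0 := fun j => by rw [hA.symm 0]; ring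
    simp_rw [h3, ← Finset.sum_div]
    field_simp; linarith
  have e2 : rowv A ⬝ᵥ (fun i : Fin r => - A' i.succ 0) = A' 0 0 - 1 / A 0 0 := by
    simp only [dotProduct, rowv]
    have h3 : ∀ j : Fin r, (A 0 j.succ / A 0 0) * - A' j.succ 0
        = - (A' 0 j.succ * A j.succ 0) / A 0 0 :=
      fun j => by rw [hA.symm 0, hA'.symm 0]; ring
    simp_rw [h3, ← Finset.sum_div, Finset.sum_neg_distrib]
    field_simp; linarith
  have e3 : rowv A ⬝ᵥ ((lowerBlock A').mulVec y) = y ⬝ᵥ (fun i : Fin r => - A' i.succ 0) := by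
    rw [← e1, Matrix.dotProduct_mulVec, dotProduct_comm]
    congr 1
    rw [← Matrix.mulVec_transpose]
    congr 1
    ext i j; exact hA'.symm _ _
  have e4 : qf (lowerBlock A') (y - t • rowv A) =
      qf (lowerBlock A') y - 2 * t * (y ⬝ᵥ (fun i : Fin r => - A' i.succ 0))
        + t ^ 2 * (A' 0 0 - 1 / A 0 0) := by
    simp only [qf, Matrix.mulVec_sub, sub_dotProduct, dotProduct_sub, Matrix.mulVec_smul,
      smul_dotProduct, dotProduct_smul, smul_eq_mul, e1, e2, e3]
    ring
  rw [e4, qf_expand, qf_expand]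
  simp only [Fin.sum_univ_succ, Fin.cons_zero, Fin.cons_succ, Finset.sum_add_distrib]
  have h3 : ∑ i, A' (Fin.succ i) 0 * y i * t = - t * (y ⬝ᵥ (fun i : Fin r => - A' i.succ 0)) := by
    rw [dotProduct, Finset.mul_sum]
    refine Finset.sum_congr rfl fun j _ => ?_
    ring
  have h4 : ∑ i, A' 0 (Fin.succ i) * t * y i = - t * (y ⬝ᵥ (fun i : Fin r => - A' i.succ 0)) := by
    rw [dotProduct, Finset.mul_sum]
    refine Finset.sum_congr rfl fun j _ => ?_
    rw [hA'.symm]; ring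
  rw [h3, h4]
  simp only [lowerBlock]
  field_simp; ring

lemma ic_cons {r : ℕ} (n : ℤ) (x : Fin r → ℤ) :
    ic (Fin.cons n x : Fin (r + 1) → ℤ) = Fin.cons (n : ℝ) (ic x) := by
  ext i; refine Fin.cases ?_ (fun j => ?_) i <;> simp [ic]

/-- Summing over the first coordinate by one-dimensional Poisson summation. -/
lemma poisson_first (a w0 s q W : ℝ) (ha : 0 < a) (β : ℂ) (hβ : 0 < β.re) :
    ∑' n : ℤ, cexp (-π * β * (a * ((n : ℝ) + s) ^ 2 + q : ℝ) + 2 * π * I * (w0 * n + W : ℝ)) =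
      1 / (a : ℂ) ^ (1 / 2 : ℂ) * (1 / β ^ (1 / 2 : ℂ)) *
        ∑' m : ℤ, cexp (-π / β * (((m : ℝ) - w0) ^ 2 / a : ℝ)) *
          cexp (-π * β * q + 2 * π * I * (W + (m - w0) * s : ℝ)) := by
  have hβ0 : β ≠ 0 := by rintro rfl; simp at hβ
  have haC : (a : ℂ) ≠ 0 := by exact_mod_cast ha.ne'
  have h1 := Complex.tsum_exp_neg_quadratic (a := a * β)
    (by simpa using mul_pos ha hβ) (I * w0 - a * β * s)
  have h2 : ((a : ℂ) * β) ^ (1 / 2 : ℂ) = (a : ℂ) ^ (1 / 2 : ℂ) * β ^ (1 / 2 : ℂ) := by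
    rw [Complex.cpow_def_of_ne_zero (mul_ne_zero haC hβ0), Complex.cpow_def_of_ne_zero haC,
      Complex.cpow_def_of_ne_zero hβ0, Complex.log_ofReal_mul ha hβ0, Complex.ofReal_log ha.le,
      ← Complex.exp_add, add_mul]
  rw [h2] at h1
  calc _ = ∑' n : ℤ, cexp (-π * β * a * s ^ 2 - π * β * q + 2 * π * I * W) *
        cexp (-π * (a * β) * n ^ 2 + 2 * π * (I * w0 - a * β * s) * n) := by
          congr 1; ext n
          rw [← Complex.exp_add]; congr 1; push_cast; ring
    _ = _ := by
      rw [tsum_mul_left, h1, mul_left_comm, ← tsum_mul_left]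
      congr 1
      · ring
      congr 1; ext m
      rw [← Complex.exp_add, ← Complex.exp_add]; congr 1; push_cast
      field_simp
      have e3 : (I : ℂ) ^ 3 = -I := by rw [pow_succ, Complex.I_sq]; ring
      ring_nf
      simp only [Complex.I_sq, e3, Complex.I_pow_four]
      ring_nf

/-- Poisson summation for a Gaussian attached to a positive definite matrix `A` with inverse `A'`.
The constant `K` is `det A ^ (-1/2)`, but only its independence of `β` and `w` matters. The proof
is by induction on the dimension, completing the square in the first coordinate. -/
theorem gauss_poisson (r : ℕ) : ∀ (A A' : Matrix (Fin r) (Fin r) ℝ), SPD A → A * A' = 1 →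
    ∃ K : ℂ, K ≠ 0 ∧ ∀ β : ℂ, 0 < β.re → ∀ w : Fin r → ℝ,
      ∑' x : Fin r → ℤ, cexp (-π * β * qf A (ic x) + 2 * π * I * (w ⬝ᵥ ic x : ℝ)) =
        K * (1 / β ^ (1 / 2 : ℂ)) ^ r * ∑' y : Fin r → ℤ, cexp (-π / β * qf A' (ic y - w)) := by
  induction r with
  | zero =>
    intro A A' hA h
    refine ⟨1, one_ne_zero, fun β hβ w => ?_⟩
    simp [qf]
  | succ r ih =>
    intro A A' hA h
    have ha := hA.corner_pos
    obtain ⟨K, hK, ihK⟩ := ih (schur A) (lowerBlock A') hA.schur (schur_mul hA h)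
    refine ⟨1 / (A 0 0 : ℂ) ^ (1 / 2 : ℂ) * K, mul_ne_zero ?_ hK, fun β hβ w => ?_⟩
    · refine one_div_ne_zero ?_
      rw [Ne, Complex.cpow_eq_zero_iff]
      rintro ⟨h0, -⟩
      exact ha.ne' (by exact_mod_cast h0)
    set a := A 0 0 with ha_def
    set w0 := w 0
    set w' : Fin r → ℝ := fun i => w i.succ
    have hw : ∀ (t : ℝ) (x : Fin r → ℝ), w ⬝ᵥ (Fin.cons t x : Fin (r + 1) → ℝ)
        = w0 * t + w' ⬝ᵥ x := fun t x => by simp [dotProduct, Fin.sum_univ_succ, w0, w']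
    have hsub : ∀ (t : ℝ) (x : Fin r → ℝ), (Fin.cons t x : Fin (r + 1) → ℝ) - w
        = Fin.cons (t - w0) (x - w') := fun t x => by
      ext i; refine Fin.cases ?_ (fun j => ?_) i <;> simp [w0, w']
    have hre := inv_re_pos hβ
    have hcons : ∀ (n : ℤ) (x : Fin r → ℤ),
        Fin.consEquiv (fun _ : Fin (r + 1) => ℤ) (n, x) = Fin.cons n x := fun _ _ => rfl
    -- one-dimensional Poisson summation in the first coordinate, the others being fixed
    have s1 := (Fin.consEquiv (fun _ : Fin (r + 1) => ℤ)).summable_iff.mpr (hA.summable_cexp β hβ w)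
    rw [← (Fin.consEquiv (fun _ : Fin (r + 1) => ℤ)).tsum_eq,
      ← (Equiv.prodComm (Fin r → ℤ) ℤ).tsum_eq]
    have s1' := (Equiv.prodComm (Fin r → ℤ) ℤ).summable_iff.mpr s1
    refine (Summable.tsum_prod s1').trans ?_
    simp only [Function.comp_apply]
    have e1 : ∀ x : Fin r → ℤ, ∑' n : ℤ, cexp (-π * β * qf A (ic (Fin.consEquiv
          (fun _ : Fin (r + 1) => ℤ) ((Equiv.prodComm (Fin r → ℤ) ℤ) (x, n)))) +
          2 * π * I * (w ⬝ᵥ ic (Fin.consEquiv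
          (fun _ : Fin (r + 1) => ℤ) ((Equiv.prodComm (Fin r → ℤ) ℤ) (x, n))) : ℝ)) =
        1 / (a : ℂ) ^ (1 / 2 : ℂ) * (1 / β ^ (1 / 2 : ℂ)) *
        ∑' m : ℤ, cexp (-π / β * (((m : ℝ) - w0) ^ 2 / a : ℝ)) *
          cexp (-π * β * qf (schur A) (ic x) +
            2 * π * I * (w' ⬝ᵥ ic x + (m - w0) * (rowv A ⬝ᵥ ic x) : ℝ)) := by
      intro x
      rw [← poisson_first a w0 _ _ _ ha β hβ]
      congr 1; ext n
      simp only [Equiv.prodComm_apply, Prod.swap_prod_mk]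
      rw [hcons, ic_cons, hw, qf_cons hA]
    simp_rw [e1]
    rw [tsum_mul_left]
    -- absolute convergence allows the dual variable `m` to become the outer one
    have s2 : Summable (Function.uncurry fun (x : Fin r → ℤ) (m : ℤ) =>
        cexp (-π / β * (((m : ℝ) - w0) ^ 2 / a : ℝ)) *
          cexp (-π * β * qf (schur A) (ic x) +
            2 * π * I * (w' ⬝ᵥ ic x + (m - w0) * (rowv A ⬝ᵥ ic x) : ℝ))) := by
      apply Summable.of_norm
      have t1 : Summable fun m : ℤ => Real.exp (-(π * (1 / β).re) * (((m : ℝ) - w0) ^ 2 / a)) := by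
        refine Summable.of_nonneg_of_le (fun _ => (Real.exp_pos _).le) (fun m => ?_)
          ((summable_gauss_int (π * (1 / β).re / a) (2 * π * (1 / β).re / a * |w0|)
            (by positivity)))
        apply Real.exp_le_exp.mpr
        have : (m : ℝ) * w0 ≤ |(m : ℝ)| * |w0| := by rw [← abs_mul]; exact le_abs_self _
        have h3 : 0 ≤ π * (1 / β).re / a := by positivity
        have h4 := mul_le_mul_of_nonneg_left
          (show (m : ℝ) ^ 2 - 2 * (|(m : ℝ)| * |w0|) ≤ ((m : ℝ) - w0) ^ 2 by nlinarith [sq_nonneg w0]) h3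
        have h5 : π * (1 / β).re * (((m : ℝ) - w0) ^ 2 / a)
          = π * (1 / β).re / a * (((m : ℝ) - w0) ^ 2) := by ring
        have h6 : 2 * π * (1 / β).re / a * |w0| * |(m : ℝ)| =
          π * (1 / β).re / a * (2 * (|(m : ℝ)| * |w0|)) := by ring
        rw [neg_mul, h5, h6]; linarith
      have t2 := hA.schur.summable (π * β.re) 0 (by positivity) le_rfl 0
      simp only [zero_mul, add_zero, sub_zero] at t2
      have t3 := t2.mul_of_nonneg t1 (fun _ => (Real.exp_pos _).le) (fun _ => (Real.exp_pos _).le)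
      refine t3.congr fun p => ?_
      simp only [Function.uncurry, norm_mul, norm_cexp_gauss, norm_cexp_gauss']
      ring
    rw [← s2.tsum_comm]
    -- the inductive hypothesis applies to the Schur complement, with a shift depending on `m`
    have e2 : ∀ m : ℤ, ∑' x : Fin r → ℤ, cexp (-π / β * (((m : ℝ) - w0) ^ 2 / a : ℝ)) *
          cexp (-π * β * qf (schur A) (ic x) +
            2 * π * I * (w' ⬝ᵥ ic x + (m - w0) * (rowv A ⬝ᵥ ic x) : ℝ)) =
        K * (1 / β ^ (1 / 2 : ℂ)) ^ r * ∑' y : Fin r → ℤ,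
          cexp (-π / β * qf A' (ic (Fin.cons m y : Fin (r + 1) → ℤ) - w)) := by
      intro m
      have := ihK β hβ (w' + ((m : ℝ) - w0) • rowv A)
      rw [tsum_mul_left]
      simp only [add_dotProduct, smul_dotProduct, smul_eq_mul] at this
      rw [this, mul_left_comm, ← tsum_mul_left]
      congr 2; ext y
      rw [← Complex.exp_add, ic_cons, hsub, qf_inv_cons hA h, ← sub_sub]
      congr 1; push_cast; ring
    simp_rw [e2]
    rw [tsum_mul_left, ← (Fin.consEquiv (fun _ : Fin (r + 1) => ℤ)).tsum_eq]
    have s3 := (Fin.consEquiv (fun _ : Fin (r + 1) => ℤ)).summable_iff.mpr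
      ((hA.inv h).summable_cexp' β hβ w)
    have e3 := Summable.tsum_prod s3
    simp only [Function.comp_apply] at e3
    rw [e3, pow_succ]
    simp_rw [hcons]
    ring

end

/-! ### Differentiation of exponential sums -/

section

open Real Complex

/-- Term by term differentiation on `(-1, 1)`; the factor `2` in the hypothesis leaves room to absorb
the linear factor `l i`. -/
lemma hasDerivAt_expSum {ι : Type*} (g l : ι → ℂ) (hs : Summable fun i => ‖g i‖ * Real.exp (2 * ‖l i‖))
    (t : ℝ) (ht : t ∈ Set.Ioo (-1 : ℝ) 1) :
    HasDerivAt (fun t : ℝ => ∑' i, g i * cexp (t * l i)) (∑' i, g i * l i * cexp (t * l i)) t := by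
  have hb : ∀ i, ∀ y ∈ Set.Ioo (-1 : ℝ) 1, ‖cexp (y * l i)‖ ≤ Real.exp ‖l i‖ := by
    intro i y hy
    rw [Complex.norm_exp]
    apply Real.exp_le_exp.mpr
    refine (Complex.re_le_norm _).trans ?_
    rw [norm_mul, Complex.norm_real]
    have : ‖y‖ ≤ 1 := abs_le.mpr ⟨hy.1.le, hy.2.le⟩
    nlinarith [norm_nonneg (l i)]
  have hl : ∀ i, ‖l i‖ ≤ Real.exp ‖l i‖ := fun i => by
    have := Real.add_one_le_exp ‖l i‖; linarith
  refine hasDerivAt_tsum_of_isPreconnected hs isOpen_Ioo isPreconnected_Ioo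
    (g := fun i (t : ℝ) => g i * cexp (t * l i))
    (g' := fun i (t : ℝ) => g i * l i * cexp (t * l i)) (fun i y hy => ?_) (fun i y hy => ?_)
    (y₀ := 0) (by simp) ?_ ht
  · have h1 : HasDerivAt (fun t : ℝ => (t : ℂ) * l i) (1 * l i) y :=
      (Complex.ofRealCLM.hasDerivAt (x := y)).mul_const (l i)
    have h2 := (h1.cexp).const_mul (g i)
    convert! h2 using 1
    ring
  · rw [norm_mul, norm_mul, mul_assoc]
    gcongr
    calc _ ≤ Real.exp ‖l i‖ * Real.exp ‖l i‖ := by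
          gcongr
          · exact hl i
          · exact hb i y hy
      _ = _ := by rw [← Real.exp_add]; ring_nf
  · apply Summable.of_norm
    refine Summable.of_nonneg_of_le (fun _ => norm_nonneg _) (fun i => ?_) hs
    simp only [Complex.ofReal_zero, zero_mul, Complex.exp_zero, mul_one]
    exact le_mul_of_one_le_right (norm_nonneg _) (Real.one_le_exp (by positivity))

/-- Comparison of second derivatives at `0` of two exponential sums. -/
lemma expSum_second {ι κ : Type} (g l : ι → ℂ) (h m : κ → ℂ)
    (hs : Summable fun i => ‖g i‖ * Real.exp (3 * ‖l i‖))
    (hs' : Summable fun i => ‖h i‖ * Real.exp (3 * ‖m i‖)) (a : ℂ)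
    (heq : ∀ t : ℝ, ∑' i, g i * cexp (t * l i) = cexp (-a * t ^ 2) * ∑' i, h i * cexp (t * m i)) :
    ∑' i, g i * l i ^ 2 = ∑' i, h i * m i ^ 2 - 2 * a * ∑' i, h i := by
  have w1 : ∀ {ι : Type} (g l : ι → ℂ), Summable (fun i => ‖g i‖ * Real.exp (3 * ‖l i‖)) →
      Summable fun i => ‖g i‖ * Real.exp (2 * ‖l i‖) := by
    intro ι g l hs
    refine Summable.of_nonneg_of_le (fun _ => by positivity) (fun i => ?_) hs
    gcongr; norm_num
  have w2 : ∀ {ι : Type} (g l : ι → ℂ), Summable (fun i => ‖g i‖ * Real.exp (3 * ‖l i‖)) →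
      Summable fun i => ‖g i * l i‖ * Real.exp (2 * ‖l i‖) := by
    intro ι g l hs
    refine Summable.of_nonneg_of_le (fun _ => by positivity) (fun i => ?_) hs
    have : ‖l i‖ ≤ Real.exp ‖l i‖ := by have := Real.add_one_le_exp ‖l i‖; linarith
    rw [norm_mul, mul_assoc]
    gcongr
    calc ‖l i‖ * Real.exp (2 * ‖l i‖) ≤ Real.exp ‖l i‖ * Real.exp (2 * ‖l i‖) := by gcongr
      _ = _ := by rw [← Real.exp_add]; ring_nf
  have h0 : (0 : ℝ) ∈ Set.Ioo (-1 : ℝ) 1 := by simp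
  have L1 := hasDerivAt_expSum g l (w1 g l hs)
  have R1 := hasDerivAt_expSum h m (w1 h m hs')
  have L2 := hasDerivAt_expSum _ l (w2 g l hs) 0 h0
  have R2 := hasDerivAt_expSum _ m (w2 h m hs') 0 h0
  have E1 : ∀ t : ℝ, HasDerivAt (fun t : ℝ => cexp (-a * t ^ 2)) (-2 * a * t * cexp (-a * t ^ 2)) t := by
    intro t
    have h1 : HasDerivAt (fun t : ℝ => (t : ℂ)) 1 t := Complex.ofRealCLM.hasDerivAt
    have h2 := ((h1.pow 2).const_mul (-a)).cexp
    convert! h2 using 1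
    simp; ring
  have E2 : HasDerivAt (fun t : ℝ => -2 * a * t * cexp (-a * t ^ 2)) (-2 * a) 0 := by
    have h1 : HasDerivAt (fun t : ℝ => (t : ℂ)) 1 0 := Complex.ofRealCLM.hasDerivAt
    have h2 := (h1.const_mul (-2 * a)).mul (E1 0)
    convert! h2 using 1
    simp
  have key : ∀ t ∈ Set.Ioo (-1 : ℝ) 1, ∑' i, g i * l i * cexp (t * l i) =
      -2 * a * t * cexp (-a * t ^ 2) * (∑' i, h i * cexp (t * m i)) +
        cexp (-a * t ^ 2) * ∑' i, h i * m i * cexp (t * m i) := by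
    intro t ht
    have h1 := (E1 t).mul (R1 t ht)
    refine (L1 t ht).unique (h1.congr_of_eventuallyEq ?_)
    exact Filter.Eventually.of_forall fun s => heq s
  have D2 := (E2.mul (R1 0 h0)).add ((E1 0).mul R2)
  have := L2.unique (D2.congr_of_eventuallyEq (by
    filter_upwards [isOpen_Ioo.mem_nhds h0] with t ht
    exact key t ht))
  simp only [Complex.ofReal_zero, zero_mul, Complex.exp_zero, mul_one] at this
  simp only [pow_two, ← mul_assoc]
  rw [this]
  simp
  ring

lemma abs_dot_le {r : ℕ} (u y : Fin r → ℝ) : |u ⬝ᵥ y| ≤ (∑ i, |u i|) * ‖y‖ := by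
  rw [dotProduct, Finset.sum_mul]
  refine (Finset.abs_sum_le_sum_abs _ _).trans (Finset.sum_le_sum fun i _ => ?_)
  rw [abs_mul]
  gcongr
  exact norm_le_pi_norm y i

lemma SPD.vecMul {r : ℕ} {A : Matrix (Fin r) (Fin r) ℝ} (hA : SPD A) (u v : Fin r → ℝ) :
    u ⬝ᵥ A.mulVec v = A.mulVec u ⬝ᵥ v := by
  rw [Matrix.dotProduct_mulVec, ← Matrix.mulVec_transpose]
  congr 2
  ext i j; exact hA.symm j i

lemma SPD.qf_add {r : ℕ} {A : Matrix (Fin r) (Fin r) ℝ} (hA : SPD A) (u v : Fin r → ℝ) :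
    qf A (u + v) = qf A u + 2 * (u ⬝ᵥ A.mulVec v) + qf A v := by
  simp only [qf, Matrix.mulVec_add, dotProduct_add, add_dotProduct]
  have h1 : v ⬝ᵥ A.mulVec u = u ⬝ᵥ A.mulVec v := by rw [hA.vecMul u v, dotProduct_comm]
  rw [h1]; ring

/-- Functions of at most exponential growth, on `ℝ^r`. -/
def ExpBdd {r : ℕ} (P : (Fin r → ℝ) → ℂ) : Prop := ∃ C α : ℝ, 0 ≤ C ∧ 0 ≤ α ∧ ∀ y, ‖P y‖ ≤ C * Real.exp (α * ‖y‖)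

lemma ExpBdd.summable_left {r : ℕ} {A : Matrix (Fin r) (Fin r) ℝ} (hA : SPD A)
    {P : (Fin r → ℝ) → ℂ} (hP : ExpBdd P) (σ : ℂ) (hσ : 0 < σ.re) (w : Fin r → ℝ) :
    Summable fun y : Fin r → ℤ =>
      ‖P (ic y) * cexp (-π * σ * qf A (ic y) + 2 * π * I * (w ⬝ᵥ ic y : ℝ))‖ := by
  obtain ⟨C, α, hC, hα, h⟩ := hP
  refine Summable.of_nonneg_of_le (fun _ => norm_nonneg _) (fun y => ?_)
    ((hA.summable (π * σ.re) α (by positivity) hα 0).mul_left C)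
  rw [norm_mul, norm_cexp_gauss, Real.exp_add, sub_zero]
  calc _ ≤ C * Real.exp (α * ‖ic y‖) * Real.exp (-(π * σ.re) * qf A (ic y)) := by
        gcongr; exact h _
    _ = _ := by ring

lemma mulVec_norm_le {r : ℕ} (A : Matrix (Fin r) (Fin r) ℝ) :
    ∃ M : ℝ, 0 ≤ M ∧ ∀ v, ‖A.mulVec v‖ ≤ M * ‖v‖ := by
  refine ⟨∑ i, ∑ j, |A i j|, by positivity, fun v => ?_⟩
  refine (pi_norm_le_iff_of_nonneg (by positivity)).mpr fun i => ?_
  refine (abs_dot_le (A i) v).trans ?_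
  exact mul_le_mul_of_nonneg_right (Finset.single_le_sum (f := fun i => ∑ j, |A i j|)
    (fun i _ => by positivity) (Finset.mem_univ i)) (norm_nonneg _)

lemma ExpBdd.summable_right {r : ℕ} {A : Matrix (Fin r) (Fin r) ℝ} (hA : SPD A)
    {P : (Fin r → ℝ) → ℂ} (hP : ExpBdd P) (σ : ℂ) (hσ : 0 < σ.re) (w : Fin r → ℝ) :
    Summable fun x : Fin r → ℤ =>
      ‖P (A.mulVec (ic x - w)) * cexp (-π / σ * qf A (ic x - w))‖ := by
  obtain ⟨C, α, hC, hα, h⟩ := hP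
  obtain ⟨M, hM, hM'⟩ := mulVec_norm_le A
  have hre := inv_re_pos hσ
  refine Summable.of_nonneg_of_le (fun _ => norm_nonneg _) (fun x => ?_)
    ((hA.summable (π * (1 / σ).re) (α * M) (by positivity) (by positivity) w).mul_left
      (C * Real.exp (α * M * ‖w‖)))
  rw [norm_mul, norm_cexp_gauss', Real.exp_add]
  have h1 : ‖ic x - w‖ ≤ ‖ic x‖ + ‖w‖ := norm_sub_le _ _
  calc _ ≤ C * Real.exp (α * M * ‖w‖ + α * M * ‖ic x‖) * Real.exp (-(π * (1 / σ).re) * qf A (ic x - w)) := by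
        gcongr
        refine (h _).trans ?_
        gcongr
        calc α * ‖A.mulVec (ic x - w)‖ ≤ α * (M * (‖ic x‖ + ‖w‖)) := by
              gcongr; exact (hM' _).trans (by gcongr)
          _ = _ := by ring
    _ = _ := by rw [Real.exp_add]; ring

lemma expBdd_one {r : ℕ} : ExpBdd (fun _ : Fin r → ℝ => (1 : ℂ)) :=
  ⟨1, 0, by norm_num, le_rfl, fun y => by simp⟩

lemma expBdd_dot {r : ℕ} (u : Fin r → ℝ) : ExpBdd (fun y : Fin r → ℝ => ((u ⬝ᵥ y : ℝ) : ℂ)) := by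
  refine ⟨∑ i, |u i|, 1, by positivity, by norm_num, fun y => ?_⟩
  rw [Complex.norm_real]
  refine (abs_dot_le u y).trans ?_
  gcongr
  have := Real.add_one_le_exp ‖y‖
  rw [one_mul]; linarith

lemma ExpBdd.mul {r : ℕ} {P P' : (Fin r → ℝ) → ℂ} (h : ExpBdd P) (h' : ExpBdd P') :
    ExpBdd (fun y => P y * P' y) := by
  obtain ⟨C, α, hC, hα, h⟩ := h
  obtain ⟨C', α', hC', hα', h'⟩ := h'
  refine ⟨C * C', α + α', by positivity, by positivity, fun y => ?_⟩
  rw [norm_mul]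
  calc _ ≤ (C * Real.exp (α * ‖y‖)) * (C' * Real.exp (α' * ‖y‖)) := by
        gcongr
        · exact h y
        · exact h' y
    _ = _ := by rw [add_mul, Real.exp_add]; ring

lemma ExpBdd.add {r : ℕ} {P P' : (Fin r → ℝ) → ℂ} (h : ExpBdd P) (h' : ExpBdd P') :
    ExpBdd (fun y => P y + P' y) := by
  obtain ⟨C, α, hC, hα, h⟩ := h
  obtain ⟨C', α', hC', hα', h'⟩ := h'
  refine ⟨C + C', α + α', by positivity, by positivity, fun y => ?_⟩
  refine (norm_add_le _ _).trans ?_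
  rw [add_mul]
  have h1 : Real.exp (α * ‖y‖) ≤ Real.exp ((α + α') * ‖y‖) := by gcongr; linarith
  have h2 : Real.exp (α' * ‖y‖) ≤ Real.exp ((α + α') * ‖y‖) := by gcongr; linarith
  exact add_le_add ((h y).trans (by gcongr)) ((h' y).trans (by gcongr))

lemma ExpBdd.const_mul {r : ℕ} {P : (Fin r → ℝ) → ℂ} (h : ExpBdd P) (c : ℂ) :
    ExpBdd (fun y => c * P y) :=
  ExpBdd.mul ⟨‖c‖, 0, norm_nonneg _, le_rfl, fun y => by simp⟩ h

lemma ExpBdd.sum {r : ℕ} {ι : Type*} (s : Finset ι) {P : ι → (Fin r → ℝ) → ℂ}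
    (h : ∀ i ∈ s, ExpBdd (P i)) : ExpBdd (fun y => ∑ i ∈ s, P i y) := by
  classical
  induction s using Finset.induction_on with
  | empty => exact ⟨0, 0, le_rfl, le_rfl, fun y => by simp⟩
  | insert a s ha ih =>
    simp_rw [Finset.sum_insert ha]
    exact (h a (by simp)).add (ih fun i hi => h i (by simp [hi]))

end

/-! ### Poisson summation with harmonic quadratic weights -/

section

open Real Complex

/-- `P` is a function, homogeneous of degree `2j` and of at most exponential growth, for which the
weighted Poisson summation formula between the forms `A'` and `A` has no lower order terms. The
constant `K` is the one for the trivial weight. -/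
structure Good {r : ℕ} (A A' : Matrix (Fin r) (Fin r) ℝ) (k : ℕ) (K : ℂ) (j : ℕ)
    (P : (Fin r → ℝ) → ℂ) : Prop where
  homog : ∀ (t : ℝ) y, P (t • y) = (t : ℂ) ^ (2 * j) * P y
  bdd : ExpBdd P
  pois : ∀ σ : ℂ, 0 < σ.re → ∀ w : Fin r → ℝ,
    ∑' y : Fin r → ℤ, P (ic y) * cexp (-π * σ * qf A' (ic y) + 2 * π * I * (w ⬝ᵥ ic y : ℝ)) =
      K * (-1) ^ j * (1 / σ) ^ (k + 2 * j) *
        ∑' x : Fin r → ℤ, P (A.mulVec (ic x - w)) * cexp (-π / σ * qf A (ic x - w))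

/-- The constant weight: `gauss_poisson` in even dimension `r = 2k`, where the power `σ^(-r/2)` is
`(1 / σ)^k`. -/
lemma good_one {r : ℕ} {A A' : Matrix (Fin r) (Fin r) ℝ} (hA' : SPD A') (hAA : A' * A = 1)
    {k : ℕ} (hr : r = 2 * k) : ∃ K ≠ 0, Good A A' k K 0 (fun _ => 1) := by
  obtain ⟨K, hK, h⟩ := gauss_poisson r A' A hA' hAA
  refine ⟨K, hK, ⟨by simp, expBdd_one, fun σ hσ w => ?_⟩⟩
  have := h σ hσ w
  simp only [one_mul]
  rw [this]
  have h0 : σ ≠ 0 := by rintro rfl; simp at hσ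
  have e : (1 / σ ^ (1 / 2 : ℂ)) ^ r = (1 / σ) ^ (k + 2 * 0) := by
    rw [hr, pow_mul, div_pow, one_pow]
    congr 2
    rw [← Complex.cpow_nat_mul]
    norm_num
  rw [e]; simp

/-- Weighted Poisson summation with a quadratic weight `P` whose trace with respect to `A` is `c`;
the trace is the coefficient of the lower order term. -/
structure Quad {r : ℕ} (A A' : Matrix (Fin r) (Fin r) ℝ) (k : ℕ) (K : ℂ) (c : ℂ)
    (P : (Fin r → ℝ) → ℂ) : Prop where
  homog : ∀ (t : ℝ) y, P (t • y) = (t : ℂ) ^ 2 * P y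
  bdd : ExpBdd P
  pois : ∀ σ : ℂ, 0 < σ.re → ∀ w : Fin r → ℝ,
    ∑' y : Fin r → ℤ, P (ic y) * cexp (-π * σ * qf A' (ic y) + 2 * π * I * (w ⬝ᵥ ic y : ℝ)) =
      K * (1 / σ) ^ k * (-(1 / σ) ^ 2 *
        (∑' x : Fin r → ℤ, P (A.mulVec (ic x - w)) * cexp (-π / σ * qf A (ic x - w))) +
        c / (2 * π * σ) * ∑' x : Fin r → ℤ, cexp (-π / σ * qf A (ic x - w)))

lemma Quad.add {r : ℕ} {A A' : Matrix (Fin r) (Fin r) ℝ} (hA : SPD A) (hA' : SPD A') {k : ℕ}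
    {K c c' : ℂ} {P P' : (Fin r → ℝ) → ℂ} (h : Quad A A' k K c P) (h' : Quad A A' k K c' P') :
    Quad A A' k K (c + c') (fun y => P y + P' y) := by
  refine ⟨fun t y => by rw [h.homog, h'.homog]; ring, h.bdd.add h'.bdd, fun σ hσ w => ?_⟩
  simp only [add_mul]
  rw [Summable.tsum_add (h.bdd.summable_left hA' σ hσ w).of_norm
    (h'.bdd.summable_left hA' σ hσ w).of_norm, Summable.tsum_add
    (h.bdd.summable_right hA σ hσ w).of_norm (h'.bdd.summable_right hA σ hσ w).of_norm,
    h.pois σ hσ w, h'.pois σ hσ w]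
  ring

lemma Quad.const_mul {r : ℕ} {A A' : Matrix (Fin r) (Fin r) ℝ} {k : ℕ}
    {K c : ℂ} {P : (Fin r → ℝ) → ℂ} (h : Quad A A' k K c P) (z : ℂ) :
    Quad A A' k K (z * c) (fun y => z * P y) := by
  refine ⟨fun t y => by rw [h.homog]; ring, h.bdd.const_mul z, fun σ hσ w => ?_⟩
  simp only [mul_assoc z]
  rw [tsum_mul_left, tsum_mul_left, h.pois σ hσ w]
  ring

lemma Quad.sum {r : ℕ} {A A' : Matrix (Fin r) (Fin r) ℝ} (hA : SPD A) (hA' : SPD A') {k : ℕ}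
    {K : ℂ} {ι : Type*} (s : Finset ι) (c : ι → ℂ) (P : ι → (Fin r → ℝ) → ℂ)
    (h : ∀ i ∈ s, Quad A A' k K (c i) (P i)) :
    Quad A A' k K (∑ i ∈ s, c i) (fun y => ∑ i ∈ s, P i y) := by
  classical
  induction s using Finset.induction_on with
  | empty => exact ⟨by simp, ⟨0, 0, le_rfl, le_rfl, fun y => by simp⟩, fun σ hσ w => by simp⟩
  | insert a s ha ih =>
    simp_rw [Finset.sum_insert ha]
    exact (h a (by simp)).add hA hA' (ih fun i hi => h i (by simp [hi]))

lemma exp3_bdd {r : ℕ} (u : Fin r → ℝ) (z : ℂ) :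
    ExpBdd (fun y : Fin r → ℝ => ((Real.exp (3 * ‖z * ((u ⬝ᵥ y : ℝ) : ℂ)‖) : ℝ) : ℂ)) := by
  refine ⟨1, 3 * ‖z‖ * ∑ i, |u i|, by norm_num, by positivity, fun y => ?_⟩
  rw [Complex.norm_real, Real.norm_of_nonneg (Real.exp_pos _).le, one_mul]
  apply Real.exp_le_exp.mpr
  rw [norm_mul, Complex.norm_real, mul_assoc 3, mul_assoc 3, mul_assoc]
  gcongr
  exact abs_dot_le u y

/-- Replacing the shift `w` by `w + t u` in the formula with constant weight and comparing second
derivatives at `t = 0` gives the weight `(u·y)²`; its trace is `uᵀ A u`. -/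
lemma quad_sq {r : ℕ} {A A' : Matrix (Fin r) (Fin r) ℝ} (hA : SPD A) (hA' : SPD A') {k : ℕ}
    {K : ℂ} (h : Good A A' k K 0 (fun _ => 1)) (u : Fin r → ℝ) :
    Quad A A' k K (qf A u) (fun y => ((u ⬝ᵥ y : ℝ) : ℂ) ^ 2) := by
  refine ⟨fun t y => by simp [dotProduct_smul]; ring, ?_, fun σ hσ w => ?_⟩
  · simpa only [pow_two] using (expBdd_dot u).mul (expBdd_dot u)
  have h0 : σ ≠ 0 := by rintro rfl; simp at hσ
  have hπ : (π : ℂ) ≠ 0 := by exact_mod_cast Real.pi_ne_zero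
  obtain ⟨K', hK'⟩ : ∃ K', K' = K * (1 / σ) ^ k := ⟨_, rfl⟩
  have s1 := (exp3_bdd u (2 * π * I)).summable_left hA' σ hσ w
  have s2 := (exp3_bdd u (2 * π / σ)).summable_right hA σ hσ w
  have key := expSum_second
    (fun y : Fin r → ℤ => cexp (-π * σ * qf A' (ic y) + 2 * π * I * (w ⬝ᵥ ic y : ℝ)))
    (fun y => 2 * π * I * ((u ⬝ᵥ ic y : ℝ) : ℂ))
    (fun x : Fin r → ℤ => K' * cexp (-π / σ * qf A (ic x - w)))
    (fun x => 2 * π / σ * ((u ⬝ᵥ A.mulVec (ic x - w) : ℝ) : ℂ))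
    (by
      refine s1.congr fun y => ?_
      rw [norm_mul, mul_comm, Complex.norm_real, Real.norm_of_nonneg (Real.exp_pos _).le])
    (by
      refine (s2.mul_left ‖K'‖).congr fun y => ?_
      rw [norm_mul, norm_mul K', Complex.norm_real, Real.norm_of_nonneg (Real.exp_pos _).le]
      ring)
    (π / σ * qf A u) (fun t => by
      have h1 := h.pois σ hσ (w + t • u)
      simp only [one_mul, pow_zero, mul_one, mul_zero, add_zero, ← hK'] at h1
      rw [← tsum_mul_left] at h1 ⊢
      convert h1 using 1
      · refine tsum_congr fun y => ?_
        rw [← Complex.exp_add]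
        congr 1
        simp only [add_dotProduct, smul_dotProduct, smul_eq_mul]
        push_cast; ring
      · refine tsum_congr fun x => ?_
        have e : ic x - (w + t • u) = (-t) • u + (ic x - w) := by
          rw [neg_smul]; abel
        rw [e, hA.qf_add, qf_smul, mul_left_comm, mul_assoc, ← Complex.exp_add, ← Complex.exp_add]
        congr 2
        simp only [smul_dotProduct, smul_eq_mul]
        push_cast; ring)
  simp only [mul_assoc K', tsum_mul_left] at key
  have e1 : ∀ y : Fin r → ℤ, cexp (-π * σ * qf A' (ic y) + 2 * π * I * (w ⬝ᵥ ic y : ℝ)) *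
      (2 * π * I * ((u ⬝ᵥ ic y : ℝ) : ℂ)) ^ 2 = -(4 * π ^ 2) * (((u ⬝ᵥ ic y : ℝ) : ℂ) ^ 2 *
        cexp (-π * σ * qf A' (ic y) + 2 * π * I * (w ⬝ᵥ ic y : ℝ))) := by
    intro y
    rw [mul_pow, mul_pow, I_sq]; ring
  have e2 : ∀ x : Fin r → ℤ, cexp (-π / σ * qf A (ic x - w)) *
      (2 * π / σ * ((u ⬝ᵥ A.mulVec (ic x - w) : ℝ) : ℂ)) ^ 2 = (4 * π ^ 2) * (1 / σ) ^ 2 *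
        (((u ⬝ᵥ A.mulVec (ic x - w) : ℝ) : ℂ) ^ 2 * cexp (-π / σ * qf A (ic x - w))) := by
    intro y
    ring
  simp only [e1, e2, tsum_mul_left] at key
  have hne : -(4 * (π : ℂ) ^ 2) ≠ 0 := by simp [hπ]
  apply mul_left_cancel₀ hne
  rw [key, ← hK']
  generalize (∑' x : Fin r → ℤ, ((u ⬝ᵥ A.mulVec (ic x - w) : ℝ) : ℂ) ^ 2 *
    cexp (-π / σ * qf A (ic x - w))) = S1
  generalize (∑' x : Fin r → ℤ, cexp (-π / σ * qf A (ic x - w))) = S2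
  field_simp
  ring

/-- The quadratic weight `∑ H i j yᵢ yⱼ`. -/
def PH {r : ℕ} (H : Matrix (Fin r) (Fin r) ℝ) (y : Fin r → ℝ) : ℂ :=
  ∑ i, ∑ j, (H i j : ℂ) * ((y i : ℂ) * (y j : ℂ))

/-- Polarisation of `quad_sq`. -/
lemma quad_mul {r : ℕ} {A A' : Matrix (Fin r) (Fin r) ℝ} (hA : SPD A) (hA' : SPD A') {k : ℕ}
    {K : ℂ} (h : Good A A' k K 0 (fun _ => 1)) (i j : Fin r) :
    Quad A A' k K (A i j) (fun y => (y i : ℂ) * (y j : ℂ)) := by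
  have main : ∀ u v : Fin r → ℝ, Quad A A' k K ((u ⬝ᵥ A.mulVec v : ℝ) : ℂ)
      (fun y => ((u ⬝ᵥ y : ℝ) : ℂ) * ((v ⬝ᵥ y : ℝ) : ℂ)) := by
    intro u v
    have h1 := (quad_sq hA hA' h (u + v)).const_mul (1 / 4)
    have h2 := (quad_sq hA hA' h (u + (-1 : ℝ) • v)).const_mul (-1 / 4)
    have h3 := h1.add hA hA' h2
    convert h3 using 1
    · rw [hA.qf_add, hA.qf_add, qf_smul, Matrix.mulVec_smul, dotProduct_smul, smul_eq_mul]
      push_cast; ring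
    · ext y
      simp only [add_dotProduct, smul_dotProduct, smul_eq_mul]
      push_cast; ring
  simpa using main (Pi.single i 1) (Pi.single j 1)

/-- If `H` is orthogonal to `A` for the trace form, i.e. the weight `∑ H i j yᵢ yⱼ` is harmonic, then
the lower order term in the Poisson formula disappears. -/
lemma good_PH {r : ℕ} {A A' : Matrix (Fin r) (Fin r) ℝ} (hA : SPD A) (hA' : SPD A') {k : ℕ}
    {K : ℂ} (h : Good A A' k K 0 (fun _ => 1)) (H : Matrix (Fin r) (Fin r) ℝ)
    (hH : ∑ i, ∑ j, H i j * A i j = 0) : Good A A' k K 1 (PH H) := by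
  have h1 : Quad A A' k K (∑ i, ∑ j, (H i j : ℂ) * A i j) (PH H) := by
    refine Quad.sum hA hA' _ _ _ fun i _ => Quad.sum hA hA' _ _ _ fun j _ => ?_
    exact (quad_mul hA hA' h i j).const_mul _
  have h2 : (∑ i, ∑ j, (H i j : ℂ) * A i j) = 0 := by exact_mod_cast hH
  rw [h2] at h1
  refine ⟨fun t y => by rw [h1.homog], h1.bdd, fun σ hσ w => ?_⟩
  rw [h1.pois σ hσ w]
  ring

end

/-! ### Even lattices and the transformation of their theta series -/

section

open Real Complex

/-- An even integral lattice `ℤ^r`, `r = 2k`, with positive definite Gram matrix `A` of level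
dividing `D` and determinant `D^k`; `q` is the associated integral quadratic form. -/
structure EvenLat (r k D : ℕ) where
  A : Matrix (Fin r) (Fin r) ℤ
  N : Matrix (Fin r) (Fin r) ℤ
  q : (Fin r → ℤ) → ℤ
  hr : r = 2 * k
  hk : 0 < k
  hD : 0 < D
  hDodd : Odd D
  AN : A * N = (D : ℤ) • (1 : Matrix (Fin r) (Fin r) ℤ)
  spd : SPD (A.map (fun x => (x : ℝ)))
  hq : ∀ x, x ⬝ᵥ A.mulVec x = 2 * q x
  hdet : A.det = (D : ℤ) ^ k

namespace EvenLat

variable {r k D : ℕ} (L : EvenLat r k D)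

/-- The Gram matrix, with real entries. -/
def Ar : Matrix (Fin r) (Fin r) ℝ := L.A.map (fun x => (x : ℝ))

/-- The inverse of the Gram matrix. -/
def A' : Matrix (Fin r) (Fin r) ℝ := (1 / (D : ℝ)) • L.N.map (fun x => (x : ℝ))

lemma spdA : SPD L.Ar := L.spd

lemma symm (i j : Fin r) : L.A i j = L.A j i := by
  have := L.spd.symm i j
  simpa using this

lemma AA' : L.Ar * L.A' = 1 := by
  have h := congrArg (fun M : Matrix (Fin r) (Fin r) ℤ => M.map (Int.castRingHom ℝ)) L.AN
  simp only [Matrix.map_mul] at h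
  have hD : (D : ℝ) ≠ 0 := by exact_mod_cast L.hD.ne'
  have e : L.Ar * L.A' = (1 / (D : ℝ)) • (L.A.map (Int.castRingHom ℝ) * L.N.map (Int.castRingHom ℝ)) := by
    rw [A', Matrix.mul_smul]; rfl
  rw [e, h]
  ext i j
  simp only [Matrix.smul_apply, Matrix.map_apply, Matrix.one_apply, smul_eq_mul]
  split_ifs <;> simp [hD]

lemma A'A : L.A' * L.Ar = 1 := mul_eq_one_comm.mp L.AA'

lemma spdA' : SPD L.A' := L.spdA.inv L.AA'

lemma ic_mulVec (x : Fin r → ℤ) : L.Ar.mulVec (ic x) = ic (L.A.mulVec x) := by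
  ext i
  simp [Ar, Matrix.mulVec, dotProduct, ic]

lemma qf_ic (x : Fin r → ℤ) : qf L.Ar (ic x) = 2 * (L.q x : ℝ) := by
  rw [qf, ic_mulVec]
  have := L.hq x
  have h2 : ((x ⬝ᵥ L.A.mulVec x : ℤ) : ℝ) = 2 * (L.q x : ℝ) := by rw [this]; push_cast; ring
  rw [← h2]
  simp [dotProduct, ic]

lemma q_add (x y : Fin r → ℤ) : L.q (x + y) = L.q x + x ⬝ᵥ L.A.mulVec y + L.q y := by
  have h1 := L.hq (x + y)
  have h2 := L.hq x
  have h3 := L.hq y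
  have h4 : y ⬝ᵥ L.A.mulVec x = x ⬝ᵥ L.A.mulVec y := by
    rw [Matrix.dotProduct_mulVec x, ← Matrix.mulVec_transpose, dotProduct_comm]
    congr 2
    ext i j; exact L.symm i j
  simp only [Matrix.mulVec_add, dotProduct_add, add_dotProduct] at h1
  omega

lemma q_smul (t : ℤ) (x : Fin r → ℤ) : L.q (t • x) = t ^ 2 * L.q x := by
  have h1 := L.hq (t • x)
  have h2 := L.hq x
  simp only [Matrix.mulVec_smul, dotProduct_smul, smul_dotProduct, smul_eq_mul] at h1
  rw [h2] at h1
  linarith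

end EvenLat

/-- The additive character `m ↦ exp(2πi m / c)`. -/
def ee (c : ℕ) (m : ℤ) : ℂ := cexp (2 * π * I * m / c)

lemma ee_add (c : ℕ) (m n : ℤ) : ee c (m + n) = ee c m * ee c n := by
  rw [ee, ee, ee, ← Complex.exp_add]; congr 1; push_cast; ring

lemma ee_mul_self (c : ℕ) (hc : c ≠ 0) (m : ℤ) : ee c (c * m) = 1 := by
  rw [ee]
  have hc' : (c : ℂ) ≠ 0 := by exact_mod_cast hc
  have : 2 * π * I * ((c * m : ℤ) : ℂ) / c = m * (2 * π * I) := by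
    push_cast; field_simp
  rw [this, Complex.exp_int_mul_two_pi_mul_I]

lemma ee_congr (c : ℕ) (hc : c ≠ 0) {m n : ℤ} (h : (c : ℤ) ∣ m - n) : ee c m = ee c n := by
  obtain ⟨t, ht⟩ := h
  have : m = n + c * t := by linarith
  rw [this, ee_add, ee_mul_self c hc, mul_one]

/-- The least nonnegative representative of a vector modulo `c`. -/
def zl {r c : ℕ} (s : Fin r → ZMod c) : Fin r → ℤ := fun i => ((s i).val : ℤ)

/-- Division with remainder by `c` in each coordinate. -/
def divEquiv (r c : ℕ) [NeZero c] : (Fin r → ℤ) ≃ (Fin r → ZMod c) × (Fin r → ℤ) where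
  toFun x := (fun i => (x i : ZMod c), fun i => x i / c)
  invFun p := zl p.1 + (c : ℤ) • p.2
  left_inv x := by
    ext i
    simp only [zl, Pi.add_apply, Pi.smul_apply, smul_eq_mul, ZMod.val_intCast]
    exact Int.emod_add_mul_ediv _ _
  right_inv p := by
    have hc : (0 : ℤ) < c := by exact_mod_cast Nat.pos_of_ne_zero (NeZero.ne c)
    ext i
    · simp [zl]
    · simp only [zl, Pi.add_apply, Pi.smul_apply, smul_eq_mul]
      rw [Int.add_mul_ediv_left _ _ hc.ne', Int.ediv_eq_zero_of_lt (by positivity), zero_add]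
      exact_mod_cast ZMod.val_lt _

/-- A function on `ℤ^r` is periodic modulo `c`. -/
def Per {r : ℕ} (c : ℕ) (F : (Fin r → ℤ) → ℂ) : Prop := ∀ x z, F (x + (c : ℤ) • z) = F x

lemma Per.zl_eq {r c : ℕ} [NeZero c] {F : (Fin r → ℤ) → ℂ} (h : Per c F) (x : Fin r → ℤ) :
    F (zl (fun i => (x i : ZMod c))) = F x := by
  have := h (zl (fun i => (x i : ZMod c))) (fun i => x i / c)
  rw [← this]
  congr 1
  exact (divEquiv r c).left_inv x

lemma Per.sum_shift {r c : ℕ} [NeZero c] {F : (Fin r → ℤ) → ℂ} (h : Per c F) (t : Fin r → ℤ) :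
    ∑ s : Fin r → ZMod c, F (zl s + t) = ∑ s : Fin r → ZMod c, F (zl s) := by
  rw [← Equiv.sum_comp (Equiv.addRight (fun i => (t i : ZMod c))) (fun s : Fin r → ZMod c => F (zl s))]
  refine Finset.sum_congr rfl fun s _ => ?_
  rw [← h.zl_eq (zl s + t)]
  congr 2
  ext i
  simp [zl]

namespace EvenLat

variable {r k D : ℕ} (L : EvenLat r k D)

/-- The Gauss sum `∑ e((a q(s) - y·s)/c)` over `s` modulo `c`. -/
def G (a : ℤ) (c : ℕ) [NeZero c] (y : Fin r → ℤ) : ℂ :=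
  ∑ s : Fin r → ZMod c, ee c (a * L.q (zl s) - y ⬝ᵥ zl s)

lemma q_congr (c : ℕ) (x z : Fin r → ℤ) : (c : ℤ) ∣ L.q (x + (c : ℤ) • z) - L.q x := by
  rw [q_add, q_smul, Matrix.mulVec_smul, dotProduct_smul, smul_eq_mul]
  exact ⟨x ⬝ᵥ L.A.mulVec z + c * L.q z, by ring⟩

lemma per_G (a : ℤ) (c : ℕ) (hc : c ≠ 0) (y : Fin r → ℤ) :
    Per c (fun x => ee c (a * L.q x - y ⬝ᵥ x)) := by
  intro x z
  apply ee_congr c hc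
  obtain ⟨t, ht⟩ := L.q_congr c x z
  rw [dotProduct_add, dotProduct_smul, smul_eq_mul]
  exact ⟨a * t - y ⬝ᵥ z, by linear_combination a * ht⟩

/-- The theta series of the lattice weighted by `P`. The weight is evaluated at `A x`, the
coordinates of `x` in the dual lattice. -/
def theta (P : (Fin r → ℝ) → ℂ) (τ : ℂ) : ℂ :=
  ∑' x : Fin r → ℤ, P (L.Ar.mulVec (ic x)) * cexp (2 * π * I * L.q x * τ)

lemma ic_add (x y : Fin r → ℤ) : ic (x + y) = ic x + ic y := by ext i; simp [ic]
lemma ic_smul (t : ℤ) (x : Fin r → ℤ) : ic (t • x) = (t : ℝ) • ic x := by ext i; simp [ic]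

lemma theta_summable {P : (Fin r → ℝ) → ℂ} (hP : ExpBdd P) (τ : ℂ) (hτ : 0 < τ.im) :
    Summable fun x : Fin r → ℤ => ‖P (L.Ar.mulVec (ic x)) * cexp (2 * π * I * L.q x * τ)‖ := by
  have h0 : τ ≠ 0 := by rintro rfl; simp at hτ
  have h1 := hP.summable_right L.spdA (I / τ) (by
    simp only [Complex.div_re, Complex.I_re, Complex.I_im, zero_mul, zero_div, zero_add, one_mul]
    exact div_pos hτ (Complex.normSq_pos.mpr h0)) 0
  refine h1.congr fun x => ?_
  rw [sub_zero, qf_ic]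
  congr 3
  have : -π / (I / τ) = π * I * τ := by
    have := Complex.I_ne_zero
    field_simp; rw [I_sq]
  rw [this]; push_cast; ring

/-- The sum over the lattice is split into classes modulo `c`, on which `e(a q(x)/c)` is constant.
Poisson summation in each class produces the Gauss sums `G a c y`, here with `y` in the dual
lattice in the coordinates `A⁻¹ y`. -/
lemma theta_transform {K : ℂ} (hK : K ≠ 0) {j : ℕ} {P : (Fin r → ℝ) → ℂ}
    (hP : Good L.Ar L.A' k K j P) (a b d : ℤ) (c : ℕ) [NeZero c] (hdet : a * d - b * c = 1)
    (τ : ℂ) (hτ : 0 < τ.im) :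
    L.theta P ((a * τ + b) / (c * τ + d)) = (c * τ + d) ^ (k + 2 * j) * ((1 / (I * c)) ^ k * K⁻¹ *
      ∑' y : Fin r → ℤ, P (ic y) * L.G a c y * cexp (π * I * qf L.A' (ic y) * (τ + d / c))) := by
  have hc0 : (c : ℂ) ≠ 0 := by exact_mod_cast NeZero.ne c
  have hcr : (0 : ℝ) < c := by exact_mod_cast Nat.pos_of_ne_zero (NeZero.ne c)
  have hI := Complex.I_ne_zero
  obtain ⟨J, hJ⟩ : ∃ J : ℂ, J = c * τ + d := ⟨_, rfl⟩
  rw [← hJ]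
  have hJim : J.im = c * τ.im := by simp [hJ]
  have hJ0 : J ≠ 0 := by
    intro h; rw [h, Complex.zero_im] at hJim
    exact (mul_pos hcr hτ).ne hJim
  obtain ⟨σ, hσdef⟩ : ∃ σ : ℂ, σ = J / (I * c) := ⟨_, rfl⟩
  have hσ' : σ = -I * (τ + d / c) := by
    rw [hσdef, hJ]; field_simp; rw [I_sq]; ring
  have hσ : 0 < σ.re := by
    rw [hσ']
    have : ((d : ℂ) / c).im = 0 := by
      rw [show ((d : ℂ) / c) = (((d : ℝ) / (c : ℝ) : ℝ) : ℂ) by push_cast; rfl]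
      exact Complex.ofReal_im _
    simp only [Complex.mul_re, Complex.neg_re, Complex.neg_im, Complex.I_re, Complex.I_im,
      Complex.add_re, Complex.add_im]
    rw [this]; simpa using hτ
  have hσ0 : σ ≠ 0 := by rintro h; rw [h] at hσ; simp at hσ
  obtain ⟨g, hg⟩ : ∃ g : ℂ, g = (a * τ + b) / J := ⟨_, rfl⟩
  rw [← hg]
  have hg' : g = a / c - 1 / (c * J) := by
    have : ((a : ℂ) * d - b * c) = 1 := by exact_mod_cast hdet
    rw [hg]
    field_simp
    rw [hJ]
    linear_combination -this
  have hgim : 0 < g.im := by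
    have h1 : g = ((a / c : ℝ) : ℂ) + ((1 / c : ℝ) ^ 2 : ℝ) * (I / σ) := by
      rw [hg', hσdef]; push_cast; field_simp; rw [I_sq]; ring
    have h2 : 0 < (I / σ).im := by
      simp only [Complex.div_im, Complex.I_re, Complex.I_im, zero_mul, zero_div, sub_zero, one_mul]
      exact div_pos hσ (Complex.normSq_pos.mpr hσ0)
    rw [h1, Complex.add_im, Complex.ofReal_im, Complex.im_ofReal_mul, zero_add]
    positivity
  have hsum := L.theta_summable hP.bdd g hgim
  have step1 : L.theta P g = ∑ s : Fin r → ZMod c, ∑' z : Fin r → ℤ,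
      P (L.Ar.mulVec (ic (zl s + (c : ℤ) • z))) * cexp (2 * π * I * L.q (zl s + (c : ℤ) • z) * g) := by
    rw [theta, ← (divEquiv r c).symm.tsum_eq, Summable.tsum_prod, tsum_fintype]
    · rfl
    · exact ((divEquiv r c).symm.summable_iff (f := fun x : Fin r → ℤ =>
        P (L.Ar.mulVec (ic x)) * cexp (2 * π * I * L.q x * g))).mpr hsum.of_norm
  have term : ∀ (s : Fin r → ZMod c) (z : Fin r → ℤ),
      P (L.Ar.mulVec (ic (zl s + (c : ℤ) • z))) * cexp (2 * π * I * L.q (zl s + (c : ℤ) • z) * g) =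
      (c : ℂ) ^ (2 * j) * ee c (a * L.q (zl s)) *
        (P (L.Ar.mulVec (ic z - (-(1 / (c : ℝ)) • ic (zl s)))) *
          cexp (-π / σ * qf L.Ar (ic z - (-(1 / (c : ℝ)) • ic (zl s))))) := by
    intro s z
    set v := ic z - (-(1 / (c : ℝ)) • ic (zl s)) with hv
    have e1 : ic (zl s + (c : ℤ) • z) = (c : ℝ) • v := by
      rw [ic_add, ic_smul, hv, smul_sub, smul_smul]
      have : (c : ℝ) * (-(1 / (c : ℝ))) = -1 := by field_simp
      rw [this, neg_one_smul, sub_neg_eq_add, add_comm]; simp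
    have e2 : (L.q (zl s + (c : ℤ) • z) : ℂ) = (c : ℂ) ^ 2 * qf L.Ar v / 2 := by
      have h := L.qf_ic (zl s + (c : ℤ) • z)
      rw [e1, qf_smul] at h
      have h' : (((c : ℝ) ^ 2 * qf L.Ar v : ℝ) : ℂ) = ((2 * (L.q (zl s + (c : ℤ) • z) : ℝ) : ℝ) : ℂ) := by
        rw [h]
      push_cast at h'
      rw [h']; ring
    have e3 : cexp (2 * π * I * L.q (zl s + (c : ℤ) • z) * g) =
        ee c (a * L.q (zl s)) * cexp (-π / σ * qf L.Ar v) := by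
      have e4 : ee c (a * L.q (zl s)) = ee c (a * L.q (zl s + (c : ℤ) • z)) := by
        apply ee_congr c (NeZero.ne c)
        obtain ⟨t, ht⟩ := L.q_congr c (zl s) z
        exact ⟨-a * t, by linear_combination -a * ht⟩
      rw [e4, ee, ← Complex.exp_add]
      congr 1
      have e5 : -π / σ * qf L.Ar v = -2 * π / σ / c ^ 2 * L.q (zl s + (c : ℤ) • z) := by
        rw [e2]; field_simp
      rw [e5, hg', hσdef]
      push_cast
      field_simp
      ring
    rw [e1, Matrix.mulVec_smul, hP.homog, e3]
    push_cast
    ring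
  have step2 : ∀ s : Fin r → ZMod c, ∑' z : Fin r → ℤ,
      P (L.Ar.mulVec (ic (zl s + (c : ℤ) • z))) * cexp (2 * π * I * L.q (zl s + (c : ℤ) • z) * g) =
      ∑' y : Fin r → ℤ, J ^ (k + 2 * j) * ((1 / (I * c)) ^ k * K⁻¹) *
        (P (ic y) * ee c (a * L.q (zl s) - y ⬝ᵥ zl s) *
          cexp (π * I * qf L.A' (ic y) * (τ + d / c))) := by
    intro s
    simp_rw [term s]
    rw [tsum_mul_left]
    have hp := hP.pois σ hσ (-(1 / (c : ℝ)) • ic (zl s))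
    have e : K⁻¹ * (-1) ^ j * σ ^ (k + 2 * j) * (K * (-1) ^ j * (1 / σ) ^ (k + 2 * j)) = 1 := by
      rw [div_pow, one_pow]
      have : ((-1 : ℂ) ^ j) * (-1) ^ j = 1 := by rw [← mul_pow]; simp
      have h2 := pow_ne_zero (k + 2 * j) hσ0
      generalize σ ^ (k + 2 * j) = x at *
      field_simp
      linear_combination this
    have hp2 : ∀ S T : ℂ, S = K * (-1) ^ j * (1 / σ) ^ (k + 2 * j) * T →
        T = K⁻¹ * (-1) ^ j * σ ^ (k + 2 * j) * S := fun S T h => by rw [h, ← mul_assoc, e, one_mul]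
    rw [hp2 _ _ hp, ← tsum_mul_left, ← tsum_mul_left]
    refine tsum_congr fun y => ?_
    have e6 : ee c (a * L.q (zl s) - y ⬝ᵥ zl s) * cexp (π * I * qf L.A' (ic y) * (τ + d / c)) =
        ee c (a * L.q (zl s)) * cexp (-π * σ * qf L.A' (ic y) + 2 * π * I *
          ((-(1 / (c : ℝ)) • ic (zl s)) ⬝ᵥ ic y : ℝ)) := by
      rw [ee, ee, ← Complex.exp_add, ← Complex.exp_add]
      congr 1
      have e7 : (((-(1 / (c : ℝ)) • ic (zl s)) ⬝ᵥ ic y : ℝ) : ℂ) = -(1 / (c : ℂ)) * ((y ⬝ᵥ zl s : ℤ) : ℂ) := by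
        rw [smul_dotProduct, smul_eq_mul, dotProduct_comm y]
        simp [dotProduct, ic]
      rw [e7, hσ']
      push_cast
      ring
    have e8 : J ^ (k + 2 * j) * (1 / (I * c)) ^ k = (c : ℂ) ^ (2 * j) * (-1) ^ j * σ ^ (k + 2 * j) := by
      rw [hσdef, div_pow, div_pow, one_pow, pow_add (I * (c : ℂ)), pow_mul (I * (c : ℂ)) 2, mul_pow I _ 2, I_sq]
      have : ((-1 : ℂ) ^ j) * (-1) ^ j = 1 := by rw [← mul_pow]; simp
      have hm : ((-1 : ℂ) ^ j) ≠ 0 := by simp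
      rw [mul_pow (-1 : ℂ), pow_mul (c : ℂ)]
      field_simp
    rw [mul_assoc (P _), e6]
    linear_combination K⁻¹ * P (ic y) * ee c (a * L.q (zl s)) * cexp (-π * σ * qf L.A' (ic y) + 2 * π * I *
          ((-(1 / (c : ℝ)) • ic (zl s)) ⬝ᵥ ic y : ℝ)) * (-e8)
  rw [step1]
  simp_rw [step2]
  rw [← Summable.tsum_finsetSum, ← tsum_mul_left, ← tsum_mul_left]
  · refine tsum_congr fun y => ?_
    rw [← Finset.mul_sum, ← Finset.sum_mul, ← Finset.mul_sum, G]
    ring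
  · intro s _
    refine Summable.mul_left _ ?_
    refine Summable.of_norm ((hP.bdd.summable_left L.spdA' σ hσ 0).congr fun y => ?_)
    rw [norm_mul, norm_mul, norm_mul]
    have : ‖ee c (a * L.q (zl s) - y ⬝ᵥ zl s)‖ = 1 := by
      rw [ee]
      have : 2 * π * I * ((a * L.q (zl s) - y ⬝ᵥ zl s : ℤ) : ℂ) / c =
        ((2 * π * (a * L.q (zl s) - y ⬝ᵥ zl s : ℤ) / c : ℝ) : ℂ) * I := by push_cast; ring
      rw [this, Complex.norm_exp_ofReal_mul_I]
    rw [this, mul_one]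
    congr 3
    rw [hσ']; simp; ring_nf

end EvenLat

end

/-! ### Gauss sums and cusp expansions -/

section

open Real Complex Filter Topology

/-- The filter `Im τ → ∞`. -/
def atInf : Filter ℂ := Filter.comap Complex.im Filter.atTop

instance : atInf.NeBot := by
  refine Filter.comap_neBot fun s hs => ?_
  obtain ⟨a, ha⟩ := (Filter.nonempty_of_mem hs)
  exact ⟨a * I, by simpa using ha⟩

lemma ee_norm (c : ℕ) (m : ℤ) : ‖ee c m‖ = 1 := by
  rw [ee]
  have : 2 * π * I * (m : ℂ) / c = ((2 * π * m / c : ℝ) : ℂ) * I := by push_cast; ring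
  rw [this, Complex.norm_exp_ofReal_mul_I]

lemma ee_eq_one {c : ℕ} (hc : c ≠ 0) {m : ℤ} (h : ee c m = 1) : (c : ℤ) ∣ m := by
  rw [ee, Complex.exp_eq_one_iff] at h
  obtain ⟨n, hn⟩ := h
  refine ⟨n, ?_⟩
  have hc' : (c : ℂ) ≠ 0 := by exact_mod_cast hc
  have hπ : (π : ℂ) ≠ 0 := by exact_mod_cast Real.pi_ne_zero
  have : (m : ℂ) = c * n := by
    have h2 : (2 * π * I) ≠ 0 := by simp [hπ]
    field_simp at hn
    rw [hn]
  exact_mod_cast this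

namespace EvenLat

variable {r k D : ℕ} (L : EvenLat r k D)

/-- The Fourier expansion of a theta series at the cusp `a / c`, without the normalising constant. -/
def cuspSum (P : (Fin r → ℝ) → ℂ) (a d : ℤ) (c : ℕ) [NeZero c] (τ : ℂ) : ℂ :=
  ∑' y : Fin r → ℤ, P (ic y) * L.G a c y * cexp (π * I * qf L.A' (ic y) * (τ + d / c))

lemma G_norm (a : ℤ) (c : ℕ) [NeZero c] (y : Fin r → ℤ) :
    ‖L.G a c y‖ ≤ Fintype.card (Fin r → ZMod c) := by
  refine (norm_sum_le _ _).trans ?_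
  simp [ee_norm]

lemma norm_cusp_exp (a : ℝ) (d : ℤ) (c : ℕ) (τ : ℂ) :
    ‖cexp (π * I * a * (τ + d / c))‖ = Real.exp (-(π * a) * τ.im) := by
  rw [Complex.norm_exp]
  congr 1
  have : π * I * a * (τ + d / c) = ((π * a * (d / c) : ℝ) : ℂ) * I + ((π * a : ℝ) : ℂ) * (I * τ) := by
    push_cast; ring
  rw [this, Complex.add_re, Complex.re_ofReal_mul, Complex.re_ofReal_mul]
  simp

lemma qfA'_pos (y : Fin r → ℤ) (hy : y ≠ 0) : 0 < qf L.A' (ic y) := by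
  apply L.spdA'.pos
  intro h
  apply hy
  ext i
  have := congrFun h i
  simpa [ic] using this

/-- Only the term `y = 0` survives as `Im τ → ∞`. -/
lemma cuspSum_tendsto {P : (Fin r → ℝ) → ℂ} (hP : ExpBdd P) (a d : ℤ) (c : ℕ) [NeZero c] :
    Tendsto (L.cuspSum P a d c) atInf (𝓝 (P 0 * L.G a c 0)) := by
  have h1 := hP.summable_left L.spdA' 1 (by simp) 0
  have hic : ic (0 : Fin r → ℤ) = 0 := by ext i; simp [ic]
  have key := tendsto_tsum_of_dominated_convergence (𝓕 := atInf)
    (f := fun τ (y : Fin r → ℤ) => P (ic y) * L.G a c y * cexp (π * I * qf L.A' (ic y) * (τ + d / c)))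
    (g := fun y => if y = 0 then P 0 * L.G a c 0 else 0)
    (h1.mul_left (Fintype.card (Fin r → ZMod c) : ℝ)) (fun y => ?_) ?_
  · rwa [tsum_ite_eq] at key
  · by_cases hy : y = 0
    · subst hy
      simp only [if_true, hic, qf_zero]
      simp
    · rw [if_neg hy]
      rw [tendsto_zero_iff_norm_tendsto_zero]
      simp_rw [norm_mul, norm_cusp_exp]
      rw [← mul_zero (‖P (ic y)‖ * ‖L.G a c y‖)]
      refine Tendsto.const_mul _ ?_
      refine Real.tendsto_exp_atBot.comp ?_
      have : -(π * qf L.A' (ic y)) < 0 := by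
        have := mul_pos Real.pi_pos (L.qfA'_pos y hy); linarith
      exact (tendsto_comap).const_mul_atTop_of_neg this
  · have : ∀ᶠ τ : ℂ in atInf, 1 ≤ τ.im := tendsto_comap.eventually (eventually_ge_atTop 1)
    filter_upwards [this] with τ hτ y
    rw [norm_mul, norm_mul, norm_cusp_exp, norm_mul, norm_cexp_gauss, one_re, mul_one,
      mul_comm ‖P _‖, mul_assoc]
    refine mul_le_mul (L.G_norm a c y) (mul_le_mul_of_nonneg_left ?_ (norm_nonneg _))
      (by positivity) (by positivity)
    · refine Real.exp_le_exp.mpr ?_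
      have : 0 ≤ π * qf L.A' (ic y) := mul_nonneg Real.pi_pos.le (L.spdA'.nonneg _)
      nlinarith

lemma dotA (x y : Fin r → ℤ) : L.A.mulVec x ⬝ᵥ y = x ⬝ᵥ L.A.mulVec y := by
  rw [Matrix.dotProduct_mulVec x, ← Matrix.mulVec_transpose]
  congr 2
  ext i j; exact L.symm i j

lemma NA : L.N * L.A = (D : ℤ) • (1 : Matrix (Fin r) (Fin r) ℤ) := by
  have hD : (D : ℤ) ≠ 0 := by exact_mod_cast L.hD.ne'
  have h1 : (L.A.det : ℤ) ≠ 0 := by rw [L.hdet]; exact pow_ne_zero _ hD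
  have h2 : L.A * (L.N * L.A) = L.A * ((D : ℤ) • (1 : Matrix (Fin r) (Fin r) ℤ)) := by
    rw [← mul_assoc, L.AN, Matrix.smul_mul, Matrix.mul_smul, one_mul, mul_one]
  have h3 := congrArg (fun M => L.A.adjugate * M) h2
  simp only [← mul_assoc, Matrix.adjugate_mul, Matrix.smul_mul, one_mul] at h3
  exact smul_right_injective _ h1 h3

/-- The level of the lattice divides `D`; the oddness of `D` is what removes the factor `2`. -/
lemma q_N (t : Fin r → ℤ) : (D : ℤ) ∣ L.q (L.N.mulVec t) := by
  have h := L.hq (L.N.mulVec t)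
  rw [Matrix.mulVec_mulVec, L.AN, Matrix.smul_mulVec, Matrix.one_mulVec, dotProduct_smul, smul_eq_mul] at h
  have hcop : IsCoprime (D : ℤ) 2 := by
    rw [Int.isCoprime_iff_gcd_eq_one]
    have : Nat.Coprime D 2 := Nat.coprime_two_right.mpr L.hDodd
    exact this
  exact hcop.dvd_of_dvd_mul_left ⟨_, h.symm⟩

/-- Shifting the summation variable by `(c/D) N t` multiplies the Gauss sum by
`e(-y·N t / D)`, so a nonzero sum forces `D ∣ y·N t` for all `t`, i.e. `y = A x`. -/
lemma G_eq_zero (a : ℤ) (c : ℕ) [NeZero c] (hDc : D ∣ c) (y : Fin r → ℤ)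
    (hy : y ∉ Set.range L.A.mulVec) : L.G a c y = 0 := by
  by_contra hG
  apply hy
  obtain ⟨e, he⟩ := hDc
  have he' : (c : ℤ) = D * e := by exact_mod_cast he
  have hc := NeZero.ne c
  have he0 : (e : ℤ) ≠ 0 := by rintro h; rw [h] at he'; simp at he'; exact hc he'
  have key : ∀ t : Fin r → ℤ, (D : ℤ) ∣ y ⬝ᵥ L.N.mulVec t := by
    intro t
    have h1 := (L.per_G a c hc y).sum_shift ((e : ℤ) • L.N.mulVec t)
    have h2 : ∀ s : Fin r → ZMod c,
        ee c (a * L.q (zl s + (e : ℤ) • L.N.mulVec t) - y ⬝ᵥ (zl s + (e : ℤ) • L.N.mulVec t)) =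
        ee c (-(e * (y ⬝ᵥ L.N.mulVec t))) * ee c (a * L.q (zl s) - y ⬝ᵥ zl s) := by
      intro s
      rw [← ee_add]
      apply ee_congr c hc
      obtain ⟨m, hm⟩ := L.q_N t
      rw [q_add, q_smul, Matrix.mulVec_smul, Matrix.mulVec_mulVec, L.AN, hm, Matrix.smul_mulVec,
        Matrix.one_mulVec]
      simp only [dotProduct_add, dotProduct_smul, smul_eq_mul]
      exact ⟨a * (zl s ⬝ᵥ t) + a * e * m, by rw [he']; ring⟩
    simp only [h2, ← Finset.mul_sum] at h1
    have h3 : ee c (-(e * (y ⬝ᵥ L.N.mulVec t))) = 1 := by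
      apply mul_right_cancel₀ (b := L.G a c y) hG
      rw [one_mul]; exact h1
    have h4 := ee_eq_one hc h3
    rw [he', dvd_neg, mul_comm (D : ℤ)] at h4
    exact Int.dvd_of_mul_dvd_mul_left he0 h4
  choose x hx using fun i => key (Pi.single i 1)
  refine ⟨x, ?_⟩
  have hD : (D : ℤ) ≠ 0 := by exact_mod_cast L.hD.ne'
  have h1 : Matrix.vecMul y L.N = (D : ℤ) • x := by
    ext i
    have := hx i
    rw [Matrix.dotProduct_mulVec, dotProduct_single_one] at this
    exact this
  have h2 := congrArg (fun v => Matrix.vecMul v L.A) h1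
  simp only [Matrix.vecMul_vecMul, L.NA, Matrix.vecMul_smul, Matrix.vecMul_one,
    Matrix.smul_vecMul] at h2
  have h3 := smul_right_injective _ hD h2
  rw [h3, ← Matrix.mulVec_transpose]
  congr 1
  ext i j; exact L.symm i j

/-- Completing the square, with `d` an inverse of `a` modulo `c`. -/
lemma G_A (a b d : ℤ) (c : ℕ) [NeZero c] (hdet : a * d - b * c = 1) (x : Fin r → ℤ) :
    L.G a c (L.A.mulVec x) = ee c (-(d * L.q x)) * L.G a c 0 := by
  have hc := NeZero.ne c
  rw [G, ← (L.per_G a c hc _).sum_shift (d • x), G, Finset.mul_sum]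
  refine Finset.sum_congr rfl fun s _ => ?_
  rw [← ee_add]
  apply ee_congr c hc
  rw [q_add, q_smul, Matrix.mulVec_smul, dotA, Matrix.mulVec_add, Matrix.mulVec_smul]
  have h1 : x ⬝ᵥ L.A.mulVec (zl s) = zl s ⬝ᵥ L.A.mulVec x := by rw [← dotA, dotProduct_comm]
  simp only [dotProduct_add, dotProduct_smul, smul_eq_mul, h1, L.hq, zero_dotProduct]
  refine ⟨b * (zl s ⬝ᵥ L.A.mulVec x) + b * d * L.q x, ?_⟩
  linear_combination (zl s ⬝ᵥ L.A.mulVec x + d * L.q x) * hdet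

lemma A_injective : Function.Injective L.A.mulVec := by
  intro x y h
  have hD : (D : ℤ) ≠ 0 := by exact_mod_cast L.hD.ne'
  have h2 := congrArg L.N.mulVec h
  simp only [Matrix.mulVec_mulVec, L.NA, Matrix.smul_mulVec, Matrix.one_mulVec] at h2
  exact smul_right_injective _ hD h2

lemma qfA'_A (x : Fin r → ℤ) : qf L.A' (ic (L.A.mulVec x)) = 2 * (L.q x : ℝ) := by
  rw [← L.qf_ic, ← L.ic_mulVec, qf, qf, Matrix.mulVec_mulVec, L.A'A, Matrix.one_mulVec, dotProduct_comm]

/-- When `D ∣ c` the expansion at `a / c` is again the theta series, up to the Gauss sum `G a c 0`. -/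
lemma cuspSum_of_dvd (P : (Fin r → ℝ) → ℂ) (a b d : ℤ) (c : ℕ) [NeZero c]
    (hdet : a * d - b * c = 1) (hDc : D ∣ c) (τ : ℂ) :
    L.cuspSum P a d c τ = L.G a c 0 * L.theta P τ := by
  rw [cuspSum, ← L.A_injective.tsum_eq, theta, ← tsum_mul_left]
  · refine tsum_congr fun x => ?_
    rw [L.G_A a b d c hdet, L.qfA'_A, L.ic_mulVec]
    have : cexp (π * I * ((2 * (L.q x : ℝ) : ℝ) : ℂ) * (τ + d / c)) =
        ee c (d * L.q x) * cexp (2 * π * I * L.q x * τ) := by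
      rw [ee, ← Complex.exp_add]; congr 1; push_cast; ring
    rw [this]
    have h2 : ee c (-(d * L.q x)) * ee c (d * L.q x) = 1 := by
      rw [← ee_add]; simp [ee]
    linear_combination P (ic (L.A.mulVec x)) * L.G a c 0 * cexp (2 * π * I * L.q x * τ) * h2
  · intro y hy
    by_contra h
    apply hy
    simp only [L.G_eq_zero a c hDc y h, mul_zero, zero_mul]

/-- The multiplier of the theta series under a matrix of `Γ₀(D)` with lower row `(c, d)` is a
normalised Gauss sum modulo `d`: the expansion of the theta series at the cusp `b / d` is computed
directly and through `τ ↦ -1/τ`, and the limits as `Im τ → ∞` are compared. -/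
lemma kappa_eq {K : ℂ} (hK : K ≠ 0) (hP : Good L.Ar L.A' k K 0 (fun _ => 1)) (a b : ℤ) (c d : ℕ)
    [NeZero c] [NeZero d] (hdet : a * d - b * c = 1) (hDc : D ∣ c) :
    (1 / (I * c)) ^ k * K⁻¹ * L.G a c 0 = (1 / (d : ℂ)) ^ k * L.G b d 0 := by
  set κ := (1 / (I * c)) ^ k * K⁻¹ * L.G a c 0 with hκ
  have hI := Complex.I_ne_zero
  have hd0 : (d : ℂ) ≠ 0 := by exact_mod_cast NeZero.ne d
  have hdr : (0 : ℝ) < d := by exact_mod_cast Nat.pos_of_ne_zero (NeZero.ne d)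
  have main : ∀ τ : ℂ, 0 < τ.im → κ * L.cuspSum (fun _ => 1) 0 0 1 τ =
      (1 / (d : ℂ)) ^ k * L.cuspSum (fun _ => 1) b (-c) d τ := by
    intro τ hτ
    have hτ0 : τ ≠ 0 := by rintro rfl; simp at hτ
    have hJ0 : (d : ℂ) * τ - c ≠ 0 := by
      intro h
      have := congrArg Complex.im h
      simp at this
      rcases this with h | h
      · exact NeZero.ne d h
      · exact hτ.ne' h
    have him : 0 < (-1 / τ).im := by
      rw [neg_div, Complex.neg_im, one_div, Complex.inv_im, neg_div, neg_neg]
      exact div_pos hτ (Complex.normSq_pos.mpr hτ0)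
    have t1 := L.theta_transform hK hP b (-a) (-c) d (by linear_combination hdet) τ hτ
    have t2 := L.theta_transform hK hP a b d c hdet (-1 / τ) him
    have t3 := L.theta_transform hK hP 0 (-1) 0 1 (by norm_num) τ hτ
    have e1 : (b * τ + ((-a : ℤ) : ℂ)) / (d * τ + ((-(c : ℤ) : ℤ) : ℂ)) =
        (a * (-1 / τ) + b) / (c * (-1 / τ) + (d : ℤ)) := by
      have h1 : (c : ℂ) * (-1 / τ) + (d : ℤ) = (d * τ - c) / τ := by
        push_cast; field_simp; ring
      have h2 : (a : ℂ) * (-1 / τ) + b = (b * τ - a) / τ := by field_simp; ring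
      rw [h1, h2, div_div_div_cancel_right₀ hτ0]
      push_cast; ring
    have e2 : ((0 : ℤ) * τ + (-1 : ℤ)) / ((1 : ℕ) * τ + (0 : ℤ)) = -1 / τ := by simp
    rw [e1, t2] at t1
    rw [e2] at t3
    have t4 := L.cuspSum_of_dvd (fun _ => 1) a b d c hdet hDc (-1 / τ)
    rw [cuspSum] at t4
    rw [t4, t3] at t1
    simp only [mul_zero, add_zero] at t1
    rw [cuspSum, cuspSum]
    generalize (∑' y : Fin r → ℤ, 1 * L.G 0 1 y * cexp (π * I * qf L.A' (ic y) * (τ + (0 : ℤ) / (1 : ℕ)))) = S1 at t1 ⊢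
    generalize (∑' y : Fin r → ℤ, 1 * L.G b d y * cexp (π * I * qf L.A' (ic y) * (τ + (-(c : ℤ) : ℤ) / d))) = S2 at t1 ⊢
    have h1 : (c : ℂ) * (-1 / τ) + (d : ℤ) = (d * τ - c) / τ := by
      push_cast; field_simp; ring
    have h5 : (d : ℂ) * τ + ((-(c : ℤ) : ℤ) : ℂ) = d * τ - c := by push_cast; ring
    rw [h1, h5] at t1
    have hJk := pow_ne_zero k hJ0
    have hτk := pow_ne_zero k hτ0
    have hIk := pow_ne_zero k hI
    have hdk := pow_ne_zero k hd0
    rw [hκ]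
    simp only [Int.cast_zero, add_zero, Nat.cast_one, one_mul, mul_one, div_pow, one_pow, mul_pow] at t1 ⊢
    generalize ((d : ℂ) * τ - c) ^ k = x1 at *
    generalize τ ^ k = x2 at *
    generalize I ^ k = x3 at *
    generalize (d : ℂ) ^ k = x4 at *
    generalize ((c : ℂ)) ^ k = x5 at *
    field_simp at t1 ⊢
    linear_combination t1
  have hb : ExpBdd (fun _ : Fin r → ℝ => (1 : ℂ)) := expBdd_one
  have l1 := (L.cuspSum_tendsto hb 0 0 1).const_mul κ
  have l2 := (L.cuspSum_tendsto hb b (-c) d).const_mul ((1 / (d : ℂ)) ^ k)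
  have hev : ∀ᶠ τ : ℂ in atInf, 0 < τ.im := tendsto_comap.eventually (eventually_gt_atTop 0)
  have l3 := tendsto_nhds_unique (l1.congr' (by filter_upwards [hev] with τ hτ; exact main τ hτ)) l2
  have g1 : L.G 0 1 0 = 1 := by
    rw [G]; simp [ee]
  rw [g1] at l3
  simpa using l3

end EvenLat

end

/-! ### Gauss sums modulo a prime -/

section

open Real Complex Filter Topology

/-- Diagonalisation of a symmetric bilinear form over a field of characteristic different from `2`. -/
lemma exists_diag {F : Type*} [Field F] (h2 : (2 : F) ≠ 0) {r : ℕ} (M : Matrix (Fin r) (Fin r) F)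
    (hM : M.transpose = M) : ∃ (U : Matrix (Fin r) (Fin r) F) (w : Fin r → F), U.det ≠ 0 ∧
      U.transpose * M * U = Matrix.diagonal w := by
  have : Invertible (2 : F) := invertibleOfNonzero h2
  set B := Matrix.toBilin' M with hB
  have hsymm : LinearMap.IsSymm B := by
    refine ⟨fun x y => ?_⟩
    rw [RingHom.id_apply, hB, Matrix.toBilin'_apply', Matrix.toBilin'_apply', Matrix.dotProduct_mulVec,
      ← Matrix.mulVec_transpose, hM, dotProduct_comm]
  obtain ⟨v, hv⟩ := LinearMap.BilinForm.exists_orthogonal_basis hsymm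
  have hr : Module.finrank F (Fin r → F) = r := by simp
  set v' := v.reindex (finCongr hr) with hv'
  refine ⟨(Pi.basisFun F (Fin r)).toMatrix v', fun i => B (v' i) (v' i), ?_, ?_⟩
  · have := (Pi.basisFun F (Fin r)).toMatrix_mul_toMatrix_flip v'
    intro h0
    have h1 := congrArg Matrix.det this
    rw [Matrix.det_mul, h0, zero_mul, Matrix.det_one] at h1
    exact zero_ne_one h1
  · have h1 := LinearMap.BilinForm.toMatrix_mul_basis_toMatrix (Pi.basisFun F (Fin r)) v' B
    rw [LinearMap.BilinForm.toMatrix_basisFun, hB, LinearMap.BilinForm.toMatrix'_toBilin'] at h1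
    rw [h1, ← hB]
    ext i j
    rw [LinearMap.BilinForm.toMatrix_apply, Matrix.diagonal_apply]
    split_ifs with hij
    · rw [hij]
    · have := hv (i := finCongr hr.symm i) (j := finCongr hr.symm j) (by
        simpa using hij)
      simpa [hv'] using this

section gauss

variable {p : ℕ} [Fact p.Prime]

/-- The Legendre symbol, as a complex multiplicative character. -/
def chiC (p : ℕ) [Fact p.Prime] : MulChar (ZMod p) ℂ :=
  (quadraticChar (ZMod p)).ringHomComp (Int.castRingHom ℂ)

lemma chiC_mul_self (t : ZMod p) (ht : t ≠ 0) : chiC p t * chiC p t = 1 := by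
  have h := quadraticChar_sq_one ht
  rw [pow_two] at h
  have h' := congrArg (Int.cast : ℤ → ℂ) h
  rw [Int.cast_mul, Int.cast_one] at h'
  exact h'

lemma addChar_sum {ι : Type*} {R : Type*} [AddCommGroup R] (ψ : AddChar R ℂ) (s : Finset ι)
    (g : ι → R) : ψ (∑ i ∈ s, g i) = ∏ i ∈ s, ψ (g i) := by
  classical
  induction s using Finset.induction_on with
  | empty => simp
  | insert a s ha ih => rw [Finset.sum_insert ha, Finset.prod_insert ha, AddChar.map_add_eq_mul, ih]

lemma sum_sq_char (hp : p ≠ 2) (t : ZMod p) (ht : t ≠ 0) :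
    ∑ x : ZMod p, ZMod.stdAddChar (t * x ^ 2) = chiC p t * gaussSum (chiC p) ZMod.stdAddChar := by
  have hF : ringChar (ZMod p) ≠ 2 := by rwa [ZMod.ringChar_zmod_n]
  have h1 : ∑ x : ZMod p, ZMod.stdAddChar (t * x ^ 2) =
      ∑ y : ZMod p, ((quadraticChar (ZMod p) y : ℂ) + 1) * ZMod.stdAddChar (t * y) := by
    rw [← Finset.sum_fiberwise (s := Finset.univ) (g := fun x : ZMod p => x ^ 2)]
    refine Finset.sum_congr rfl fun y _ => ?_
    rw [Finset.sum_congr rfl (g := fun _ => ZMod.stdAddChar (t * y)) (fun x hx => by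
      rw [(Finset.mem_filter.mp hx).2]), Finset.sum_const, nsmul_eq_mul]
    congr 1
    have := quadraticChar_card_sqrts hF y
    rw [← Int.cast_natCast, show (1 : ℂ) = ((1 : ℤ) : ℂ) by simp, ← Int.cast_add, ← this]
    congr 3
    ext; simp
  have hsq := chiC_mul_self t ht
  have h2 := gaussSum_mulShift (chiC p) ZMod.stdAddChar (Units.mk0 t ht)
  rw [h1]
  simp_rw [add_mul, one_mul]
  rw [Finset.sum_add_distrib, ← h2, ← mul_assoc, Units.val_mk0, hsq, one_mul]
  have h3 : ∑ y : ZMod p, ZMod.stdAddChar (t * y) = 0 := by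
    have := AddChar.sum_mulShift (ψ := ZMod.stdAddChar (N := p)) t (ZMod.isPrimitive_stdAddChar p)
    rw [if_neg ht] at this
    simpa [mul_comm] using this
  rw [h3, add_zero, gaussSum]
  refine Finset.sum_congr rfl fun y _ => ?_
  rw [AddChar.mulShift_apply]
  rfl

lemma gauss_sq (hp : p ≠ 2) : gaussSum (chiC p) ZMod.stdAddChar ^ 2 = chiC p (-1) * p := by
  have hF : ringChar (ZMod p) ≠ 2 := by rwa [ZMod.ringChar_zmod_n]
  have := gaussSum_sq (χ := chiC p) ?_ ?_ (ZMod.isPrimitive_stdAddChar p)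
  · simpa [ZMod.card] using this
  · exact (MulChar.ringHomComp_ne_one_iff (RingHom.injective_int _)).mpr (quadraticChar_ne_one hF)
  · exact (quadraticChar_isQuadratic _).comp _

/-- After diagonalisation the sum is a product of `2k` one-dimensional Gauss sums, which pair up
into squares. -/
lemma sum_form (hp : p ≠ 2) {r k : ℕ} (hr : r = 2 * k) (M : Matrix (Fin r) (Fin r) (ZMod p))
    (hM : M.transpose = M) (hdet : M.det ≠ 0) (t : ZMod p) (ht : t ≠ 0) :
    ∑ s : Fin r → ZMod p, ZMod.stdAddChar (t * (s ⬝ᵥ M.mulVec s)) =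
      chiC p M.det * (chiC p (-1) * p) ^ k := by
  have h2 : (2 : ZMod p) ≠ 0 := by
    intro h
    have : ((2 : ℕ) : ZMod p) = 0 := by exact_mod_cast h
    rw [ZMod.natCast_eq_zero_iff] at this
    exact hp ((Nat.prime_dvd_prime_iff_eq (Fact.out) Nat.prime_two).mp this)
  have hsq := chiC_mul_self (p := p)
  have hpw : ∀ z : ℂ, z ^ r = (z ^ 2) ^ k := by intro z; rw [hr, pow_mul]
  obtain ⟨U, w, hU, hw⟩ := exists_diag h2 M hM
  have hUu : IsUnit U := (Matrix.isUnit_iff_isUnit_det U).mpr (isUnit_iff_ne_zero.mpr hU)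
  have hbij : Function.Bijective U.mulVec := by
    refine ⟨Matrix.mulVec_injective_of_isUnit hUu, Matrix.mulVec_surjective_iff_isUnit.mpr hUu⟩
  have hwdet : U.det * U.det * M.det = ∏ i, w i := by
    have := congrArg Matrix.det hw
    rw [Matrix.det_mul, Matrix.det_mul, Matrix.det_transpose, Matrix.det_diagonal] at this
    rw [← this]; ring
  have hwi : ∀ i, w i ≠ 0 := by
    have : ∏ i, w i ≠ 0 := by rw [← hwdet]; exact mul_ne_zero (mul_ne_zero hU hU) hdet
    exact fun i => (Finset.prod_ne_zero_iff.mp this) i (Finset.mem_univ i)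
  have e1 : ∑ s : Fin r → ZMod p, ZMod.stdAddChar (t * (s ⬝ᵥ M.mulVec s)) =
      ∑ s : Fin r → ZMod p, ∏ i, ZMod.stdAddChar ((t * w i) * (s i) ^ 2) := by
    rw [← hbij.sum_comp]
    refine Finset.sum_congr rfl fun s _ => ?_
    rw [← addChar_sum]
    congr 1
    have h3 : U.mulVec s ⬝ᵥ M.mulVec (U.mulVec s) = s ⬝ᵥ (Matrix.diagonal w).mulVec s := by
      rw [← hw, ← Matrix.mulVec_mulVec, ← Matrix.mulVec_mulVec, Matrix.dotProduct_mulVec s,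
        Matrix.vecMul_transpose]
    rw [h3, dotProduct, Finset.mul_sum]
    refine Finset.sum_congr rfl fun i _ => ?_
    rw [Matrix.mulVec_diagonal]; ring
  have e2 : ∑ s : Fin r → ZMod p, ∏ i, ZMod.stdAddChar ((t * w i) * (s i) ^ 2) =
      ∏ i, ∑ x : ZMod p, ZMod.stdAddChar ((t * w i) * x ^ 2) := by
    rw [Finset.prod_univ_sum, Fintype.piFinset_univ]
  rw [e1, e2, Finset.prod_congr rfl fun i _ => sum_sq_char hp (t * w i) (mul_ne_zero ht (hwi i)),
    Finset.prod_mul_distrib, Finset.prod_const, Finset.card_univ, Fintype.card_fin]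
  simp_rw [map_mul]
  rw [Finset.prod_mul_distrib, Finset.prod_const, Finset.card_univ, Fintype.card_fin, ← map_prod,
    ← hwdet, map_mul, map_mul, hsq _ hU, one_mul, hpw, hpw, pow_two (chiC p t), hsq t ht, one_pow,
    one_mul, gauss_sq hp]

end gauss

namespace EvenLat

variable {r k D : ℕ} (L : EvenLat r k D)

/-- The lattice form modulo `p` has determinant `D^k`, whence the Legendre symbol of `-D`. -/
lemma G_prime {p : ℕ} [Fact p.Prime] (hp : p ≠ 2) (hpD : ¬ p ∣ D) (b : ℤ) (hb : ¬ (p : ℤ) ∣ b) :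
    L.G b p 0 = (p : ℂ) ^ k * ((legendreSym p (-(D : ℤ)) : ℤ) : ℂ) ^ k := by
  have h2 : (2 : ZMod p) ≠ 0 := by
    intro h
    have : ((2 : ℕ) : ZMod p) = 0 := by exact_mod_cast h
    rw [ZMod.natCast_eq_zero_iff] at this
    exact hp ((Nat.prime_dvd_prime_iff_eq (Fact.out) Nat.prime_two).mp this)
  have hb' : (b : ZMod p) ≠ 0 := by rwa [Ne, ZMod.intCast_zmod_eq_zero_iff_dvd]
  have hD' : (D : ZMod p) ≠ 0 := by rwa [Ne, ZMod.natCast_eq_zero_iff]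
  set M : Matrix (Fin r) (Fin r) (ZMod p) := L.A.map (Int.castRingHom (ZMod p)) with hM
  have hMdet : M.det = (D : ZMod p) ^ k := by
    rw [hM, ← RingHom.mapMatrix_apply, ← RingHom.map_det, L.hdet]; simp
  have h1 := sum_form hp L.hr M (by
    ext i j; simp only [hM, Matrix.transpose_apply, Matrix.map_apply, L.symm j i])
    (by rw [hMdet]; exact pow_ne_zero _ hD') ((b : ZMod p) / 2) (div_ne_zero hb' h2)
  have h3 : L.G b p 0 = ∑ s : Fin r → ZMod p,
      ZMod.stdAddChar ((b : ZMod p) / 2 * (s ⬝ᵥ M.mulVec s)) := by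
    rw [G]
    refine Finset.sum_congr rfl fun s => fun _ => ?_
    rw [ee, ← ZMod.stdAddChar_coe]
    congr 1
    have h4 := congrArg (Int.cast : ℤ → ZMod p) (L.hq (zl s))
    have h5 : ((zl s ⬝ᵥ L.A.mulVec (zl s) : ℤ) : ZMod p) = s ⬝ᵥ M.mulVec s := by
      simp [dotProduct, Matrix.mulVec, zl, hM]
    rw [← h5, h4]
    push_cast
    simp
    field_simp
  rw [h3, h1, hMdet, map_pow, ← mul_pow, ← mul_pow]
  congr 1
  rw [legendreSym, Int.cast_neg, Int.cast_natCast, neg_eq_neg_one_mul (D : ZMod p), map_mul (quadraticChar (ZMod p)),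
    Int.cast_mul]
  change ((quadraticChar (ZMod p) D : ℤ) : ℂ) * (((quadraticChar (ZMod p) (-1) : ℤ) : ℂ) * p) = _
  ring

end EvenLat

end

/-! ### Theta series on Γ₀(D) and at the cusps -/

section

open Real Complex Filter Topology

/-- Quadratic reciprocity for `D ≡ 3 mod 4`. -/
lemma jacobi_flip {D : ℕ} (hD4 : D % 4 = 3) {m : ℕ} (hm : Odd m) :
    jacobiSym (-(D : ℤ)) m = jacobiSym m D := by
  have hDo : Odd D := Nat.odd_iff.mpr (by omega)
  rw [jacobiSym.neg _ hm]
  rcases Nat.odd_mod_four_iff.mp (Nat.odd_iff.mp hm) with h | h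
  · rw [ZMod.χ₄_nat_one_mod_four h, one_mul, jacobiSym.quadratic_reciprocity_one_mod_four' hDo h]
  · rw [ZMod.χ₄_nat_three_mod_four h, jacobiSym.quadratic_reciprocity_three_mod_four hD4 h]
    ring

lemma chiK_eq {D : ℕ} (hD4 : D % 4 = 3) (a : ℤ) : chiK D a = jacobiSym a D := by
  have hD0 : (D : ℤ) ≠ 0 := by omega
  have hnn := Int.emod_nonneg a hD0
  have hodd : Odd (oddRep D a) := by
    rw [Nat.odd_iff, oddRep]; split_ifs <;> omega
  rw [chiK, jacobi_flip hD4 hodd]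
  apply jacobiSym.mod_left'
  rw [oddRep]
  split_ifs
  · rw [Int.toNat_of_nonneg hnn, Int.emod_emod]
  · push_cast
    rw [Int.toNat_of_nonneg hnn, Int.add_emod_right, Int.emod_emod]

namespace EvenLat

variable {r k D : ℕ} (L : EvenLat r k D)

lemma theta_neg_mat (P : (Fin r → ℝ) → ℂ) (a b c d : ℤ) (τ : ℂ) :
    L.theta P ((a * τ + b) / (c * τ + d)) =
      L.theta P (((-a : ℤ) * τ + (-b : ℤ)) / ((-c : ℤ) * τ + (-d : ℤ))) := by
  congr 1
  push_cast
  rw [show (-a : ℂ) * τ + -b = -(a * τ + b) by ring, show (-c : ℂ) * τ + -d = -(c * τ + d) by ring,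
    neg_div_neg_eq]

lemma theta_add_int (P : (Fin r → ℝ) → ℂ) (m : ℤ) (τ : ℂ) :
    L.theta P (τ + m) = L.theta P τ := by
  refine tsum_congr fun x => ?_
  congr 1
  rw [show 2 * π * I * L.q x * (τ + m) = 2 * π * I * L.q x * τ + ((L.q x * m : ℤ) : ℂ) * (2 * π * I) by
    push_cast; ring, Complex.exp_add, Complex.exp_int_mul_two_pi_mul_I, mul_one]

/-- By Dirichlet on primes in progressions, `d` may be replaced by a prime `p ≡ d mod c`. The
multiplier is then the normalised Gauss sum modulo `p` of `kappa_eq`, evaluated by `G_prime`. -/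
lemma theta_gamma_pos (hD4 : D % 4 = 3) {K : ℂ} (hK : K ≠ 0)
    (h1 : Good L.Ar L.A' k K 0 (fun _ => 1)) {j : ℕ} {P : (Fin r → ℝ) → ℂ}
    (hP : Good L.Ar L.A' k K j P) (a b d : ℤ) (c : ℕ) [NeZero c] (hdet : a * d - b * c = 1)
    (hDc : D ∣ c) (τ : ℂ) (hτ : 0 < τ.im) :
    L.theta P ((a * τ + b) / (c * τ + d)) =
      ((jacobiSym d D : ℤ) : ℂ) ^ k * (c * τ + d) ^ (k + 2 * j) * L.theta P τ := by
  have hcop : IsCoprime d (c : ℤ) := ⟨a, -b, by linarith⟩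
  obtain ⟨p, hpgt, hp, hpd⟩ := Nat.forall_exists_prime_gt_and_zmodEq (2 + D) (NeZero.ne c) hcop
  obtain ⟨t, ht⟩ := hpd.symm.dvd
  have : Fact p.Prime := ⟨hp⟩
  have hp2 : p ≠ 2 := by omega
  have hpo : Odd p := hp.odd_of_ne_two hp2
  have hpD : ¬ p ∣ D := fun h => by have := Nat.le_of_dvd L.hD h; omega
  have hdet' : a * p - (b + a * t) * c = 1 := by
    have : (p : ℤ) = d + c * t := by linarith
    rw [this]; linarith
  have hb : ¬ (p : ℤ) ∣ (b + a * t) := by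
    rintro ⟨u, hu⟩
    rw [hu] at hdet'
    have : (p : ℤ) ∣ 1 := ⟨a - u * c, by linarith⟩
    have := Int.natCast_dvd_natCast.mp (by exact_mod_cast this : (p : ℤ) ∣ ((1 : ℕ) : ℤ))
    exact hp.one_lt.ne' (Nat.dvd_one.mp this)
  have : NeZero p := ⟨hp.ne_zero⟩
  have hκ := L.kappa_eq hK h1 a (b + a * t) c p hdet' hDc
  rw [L.G_prime hp2 hpD _ hb, ← mul_assoc, ← mul_pow, one_div_mul_cancel
    (by exact_mod_cast hp.ne_zero), one_pow, one_mul, jacobiSym.legendreSym.to_jacobiSym,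
    jacobi_flip hD4 hpo, jacobiSym.mod_left' (a₂ := d) (b := D) (by
      obtain ⟨e, he⟩ := hDc
      rw [show (p : ℤ) = d + D * (e * t) by rw [he] at ht; push_cast at ht; linarith]
      simp)] at hκ
  have h2 := L.theta_transform hK hP a b d c hdet τ hτ
  have h3 := L.cuspSum_of_dvd P a b d c hdet hDc τ
  rw [cuspSum] at h3
  rw [h2, h3, ← hκ]
  ring

/-- The theta series with a weight of degree `2j` has weight `k + 2j` on `Γ₀(D)`, with character
`d ↦ (d / D)^k`. -/
lemma theta_gamma (hD4 : D % 4 = 3) {K : ℂ} (hK : K ≠ 0)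
    (h1 : Good L.Ar L.A' k K 0 (fun _ => 1)) {j : ℕ} {P : (Fin r → ℝ) → ℂ}
    (hP : Good L.Ar L.A' k K j P) (a b c d : ℤ) (hdet : a * d - b * c = 1)
    (hDc : (D : ℤ) ∣ c) (τ : ℂ) (hτ : 0 < τ.im) :
    L.theta P ((a * τ + b) / (c * τ + d)) =
      ((jacobiSym d D : ℤ) : ℂ) ^ k * (c * τ + d) ^ (k + 2 * j) * L.theta P τ := by
  have hDo : Odd D := Nat.odd_iff.mpr (by omega)
  have hj1 : jacobiSym (-1) D = -1 := by
    rw [jacobiSym.at_neg_one hDo, ZMod.χ₄_nat_three_mod_four hD4]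
  have hjneg : ∀ d, jacobiSym (-d) D = - jacobiSym d D := by
    intro d
    rw [jacobiSym.neg _ hDo, ZMod.χ₄_nat_three_mod_four hD4]; ring
  have hsgn : ∀ z : ℂ, ((-1 : ℂ)) ^ k * (-z) ^ (k + 2 * j) = z ^ (k + 2 * j) := by
    intro z
    rw [neg_pow z, pow_add (-1 : ℂ), ← mul_assoc, ← mul_assoc, ← mul_pow, pow_mul (-1 : ℂ)]
    simp
  rcases lt_trichotomy c 0 with hc | hc | hc
  · obtain ⟨e, rfl⟩ : ∃ e : ℕ, c = -(e : ℤ) := ⟨c.natAbs, by omega⟩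
    have : NeZero e := ⟨by omega⟩
    have h := L.theta_gamma_pos hD4 hK h1 hP (-a) (-b) (-d) e (by linarith)
      (by rw [← Int.natCast_dvd_natCast]; simpa using hDc) τ hτ
    rw [L.theta_neg_mat, neg_neg, Int.cast_natCast, h, hjneg, ← hsgn ((_ : ℤ) * τ + d)]
    push_cast
    rw [neg_pow (jacobiSym d D : ℂ), show -(-(e : ℂ) * τ + d) = e * τ + -d by ring]
    ring
  · subst hc
    have hd : a * d = 1 := by linarith
    rcases Int.eq_one_or_neg_one_of_mul_eq_one' hd with ⟨rfl, rfl⟩ | ⟨rfl, rfl⟩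
    · have := L.theta_add_int P b τ
      simp [this]
    · have := L.theta_add_int P (-b) τ
      rw [L.theta_neg_mat]
      have h0 := hsgn 1
      rw [hj1]
      push_cast
      simp only [one_mul, neg_zero, zero_mul, zero_add, div_one]
      push_cast at this
      rw [this, h0, one_pow, one_mul]
  · obtain ⟨e, rfl⟩ : ∃ e : ℕ, c = (e : ℤ) := ⟨c.natAbs, by omega⟩
    have : NeZero e := ⟨by omega⟩
    have h := L.theta_gamma_pos hD4 hK h1 hP a b d e hdet
      (by rw [← Int.natCast_dvd_natCast]; exact hDc) τ hτ
    exact_mod_cast h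

lemma eventually_im_pos : ∀ᶠ τ : ℂ in atInf, 1 ≤ τ.im :=
  Filter.eventually_comap.mpr ((Filter.eventually_ge_atTop 1).mono fun _ h _ h' => h' ▸ h)

lemma theta_cusp_pos {K : ℂ} (hK : K ≠ 0) {j : ℕ} {P : (Fin r → ℝ) → ℂ}
    (hP : Good L.Ar L.A' k K j P) (hP0 : P 0 = 0) (a b d : ℤ) (c : ℕ) [NeZero c]
    (hdet : a * d - b * c = 1) :
    Tendsto (fun τ => ‖L.theta P ((a * τ + b) / (c * τ + d))‖ / ‖(c * τ + d : ℂ)‖ ^ (k + 2 * j))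
      atInf (𝓝 0) := by
  have h := (L.cuspSum_tendsto hP.bdd a d c).const_mul ((1 / (I * c)) ^ k * K⁻¹)
  rw [hP0, zero_mul, mul_zero] at h
  have h' := h.norm
  rw [norm_zero] at h'
  refine h'.congr' (eventually_im_pos.mono fun τ hτ => ?_)
  have hτ' : 0 < τ.im := by linarith
  have h2 := L.theta_transform hK hP a b d c hdet τ hτ'
  beta_reduce
  rw [h2, cuspSum, norm_mul _ (_ * _), norm_pow, mul_div_cancel_left₀]
  apply pow_ne_zero
  rw [norm_ne_zero_iff]
  intro h0
  have := congrArg Complex.im h0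
  simp at this
  rcases this with h | h
  · exact NeZero.ne c h
  · exact hτ'.ne.symm h

/-- If the weight vanishes at `0`, the theta series tends to zero at every cusp `a / c`, `c ≠ 0`. -/
lemma theta_cusp {K : ℂ} (hK : K ≠ 0) {j : ℕ} {P : (Fin r → ℝ) → ℂ}
    (hP : Good L.Ar L.A' k K j P) (hP0 : P 0 = 0) (a b c d : ℤ) (hc : c ≠ 0)
    (hdet : a * d - b * c = 1) :
    Tendsto (fun τ => ‖L.theta P ((a * τ + b) / (c * τ + d))‖ / ‖(c * τ + d : ℂ)‖ ^ (k + 2 * j))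
      atInf (𝓝 0) := by
  rcases lt_or_gt_of_ne hc with hc | hc
  · obtain ⟨e, rfl⟩ : ∃ e : ℕ, c = -(e : ℤ) := ⟨c.natAbs, by omega⟩
    have : NeZero e := ⟨by omega⟩
    have h := L.theta_cusp_pos hK hP hP0 (-a) (-b) (-d) e (by linarith)
    refine h.congr fun τ => ?_
    rw [L.theta_neg_mat P a, neg_neg, Int.cast_natCast, ← norm_neg ((-(e : ℤ) : ℤ) * τ + d : ℂ)]
    congr 3
    push_cast; ring
  · obtain ⟨e, rfl⟩ : ∃ e : ℕ, c = (e : ℤ) := ⟨c.natAbs, by omega⟩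
    have : NeZero e := ⟨by omega⟩
    exact_mod_cast L.theta_cusp_pos hK hP hP0 a b d e hdet

lemma q_nonneg (x : Fin r → ℤ) : 0 ≤ L.q x := by
  have h := L.spdA.nonneg (ic x)
  rw [L.qf_ic] at h
  have : (0 : ℝ) ≤ L.q x := by linarith
  exact_mod_cast this

lemma theta_differentiable {P : (Fin r → ℝ) → ℂ} (hP : ExpBdd P) :
    DifferentiableOn ℂ (L.theta P) UHP := by
  intro τ₀ hτ₀
  have hτ₀' : 0 < τ₀.im := hτ₀
  obtain ⟨y, hy⟩ : ∃ y : ℝ, y = τ₀.im / 2 := ⟨_, rfl⟩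
  have hy0 : 0 < y := by rw [hy]; linarith
  have hopen : IsOpen {τ : ℂ | y < τ.im} := isOpen_lt continuous_const Complex.continuous_im
  have h := differentiableOn_tsum_of_summable_norm
    (F := fun (x : Fin r → ℤ) (τ : ℂ) => P (L.Ar.mulVec (ic x)) * cexp (2 * π * I * L.q x * τ))
    (L.theta_summable hP (y * I) (by simpa using hy0)) (by intro i; fun_prop) hopen (by
      intro x τ hτ
      rw [norm_mul, norm_mul, Complex.norm_exp, Complex.norm_exp]
      gcongr ‖_‖ * ?_
      apply Real.exp_le_exp.mpr
      have e1 : (2 * π * I * L.q x * τ).re = -(2 * π * L.q x * τ.im) := by simp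
      have e2 : (2 * π * I * L.q x * (y * I)).re = -(2 * π * L.q x * y) := by simp
      rw [e1, e2]
      have : (0 : ℝ) ≤ L.q x := by exact_mod_cast L.q_nonneg x
      have : y < τ.im := hτ
      gcongr)
  exact (h.differentiableAt (hopen.mem_nhds (by simp [hy]; linarith))).differentiableWithinAt

end EvenLat

end

/-! ### The residue theorem on Γ₀(D) -/

section

open Real Complex Filter Topology

lemma UHP_open : IsOpen UHP := isOpen_lt continuous_const Complex.continuous_im

lemma UHP_convex : Convex ℝ UHP := by
  have := (convex_Ioi (0 : ℝ)).is_linear_preimage Complex.imLm.isLinear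
  exact this

lemma const_of_deriv_zero {g : ℂ → ℂ} (h : ∀ z ∈ UHP, HasDerivAt g 0 z) {z w : ℂ} (hz : z ∈ UHP)
    (hw : w ∈ UHP) : g z = g w := by
  refine UHP_open.is_const_of_deriv_eq_zero UHP_convex.isPreconnected
    (fun z hz => (h z hz).differentiableAt.differentiableWithinAt) (fun z hz => (h z hz).deriv) hz hw

lemma neg_inv_mem {z : ℂ} (hz : z ∈ UHP) : -1 / z ∈ UHP := by
  have hz' : 0 < z.im := hz
  have h0 : z ≠ 0 := by rintro rfl; simp at hz'
  change 0 < (-1 / z).im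
  rw [neg_div, one_div, Complex.neg_im, Complex.inv_im, neg_div, neg_neg]
  exact div_pos hz' (Complex.normSq_pos.mpr h0)

/-- A holomorphic form of weight two on `SL₂(ℤ)` has zero period over a horizontal unit segment. Its
primitive `Φ` is invariant under `z ↦ -1/z`, because `i` is a fixed point. It is then invariant
under `z ↦ z + 1`, because this translation sends `ρ - 1 = -1/ρ` to `ρ`. -/
lemma period_zero {F : ℂ → ℂ} (hF : DifferentiableOn ℂ F UHP)
    (hT : ∀ z ∈ UHP, F (z + 1) = F z) (hS : ∀ z ∈ UHP, F (-1 / z) = z ^ 2 * F z)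
    (y : ℝ) (hy : 0 < y) : ∫ x in (0 : ℝ)..1, F (x + y * I) = 0 := by
  obtain ⟨Φ, hΦ⟩ := UHP_convex.exists_forall_hasDerivWithinAt hF
  have hΦ' : ∀ z ∈ UHP, HasDerivAt Φ (F z) z := fun z hz =>
    (hΦ z hz).hasDerivAt (UHP_open.mem_nhds hz)
  have hadd : ∀ z ∈ UHP, z + 1 ∈ UHP := fun z hz => by
    change 0 < (z + 1).im
    have h : 0 < z.im := hz
    simpa using h
  have e1 : ∀ z ∈ UHP, HasDerivAt (fun z => Φ (z + 1) - Φ z) 0 z := by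
    intro z hz
    have h1 := (hΦ' (z + 1) (hadd z hz)).comp_add_const z 1
    rw [hT z hz] at h1
    exact (h1.sub (hΦ' z hz)).congr_deriv (sub_self _)
  have e2 : ∀ z ∈ UHP, HasDerivAt (fun z => Φ (-1 / z) - Φ z) 0 z := by
    intro z hz
    have hz0 : z ≠ 0 := by rintro rfl; simp [UHP] at hz
    have h0 : HasDerivAt (fun z : ℂ => -1 / z) (1 / z ^ 2) z := by
      have := ((hasDerivAt_inv hz0).const_mul (-1)).congr_deriv
        (show -1 * -(z ^ 2)⁻¹ = 1 / z ^ 2 by simp)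
      exact this
    have h1 := (hΦ' (-1 / z) (neg_inv_mem hz)).comp z h0
    rw [hS z hz, mul_right_comm, mul_one_div_cancel (pow_ne_zero 2 hz0), one_mul] at h1
    exact (h1.sub (hΦ' z hz)).congr_deriv (sub_self _)
  have hI : I ∈ UHP := by simp [UHP]
  have hSI : ∀ z ∈ UHP, Φ (-1 / z) = Φ z := by
    intro z hz
    have h1 := const_of_deriv_zero e2 hz hI
    have h2 : -1 / I = I := by simp
    simp only [h2, sub_self] at h1
    exact sub_eq_zero.mp h1
  obtain ⟨ρ, hρ⟩ : ∃ ρ : ℂ, ρ = 1 / 2 + (Real.sqrt 3 / 2 : ℝ) * I := ⟨_, rfl⟩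
  have hρm : ρ ∈ UHP := by
    change 0 < ρ.im
    simp [hρ]
  have hρm' : ρ - 1 ∈ UHP := by
    change 0 < (ρ - 1).im
    have h : 0 < ρ.im := hρm
    simpa using h
  have h3 : ((Real.sqrt 3 : ℝ) : ℂ) ^ 2 = 3 := by
    rw [← Complex.ofReal_pow, Real.sq_sqrt (by norm_num)]; simp
  have hρ2 : ρ * (ρ - 1) = -1 := by
    rw [hρ]; push_cast
    linear_combination (1 / 4) * I ^ 2 * h3 + (3 / 4) * Complex.I_sq
  have hρ0 : ρ ≠ 0 := by rintro rfl; simp [UHP] at hρm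
  have hρi : -1 / ρ = ρ - 1 := by rw [div_eq_iff hρ0, ← hρ2]; ring
  have hTI : ∀ z ∈ UHP, Φ (z + 1) = Φ z := by
    intro z hz
    have h1 := const_of_deriv_zero e1 hz hρm'
    have h2 := hSI ρ hρm
    rw [hρi] at h2
    simp only [sub_add_cancel, h2, sub_self] at h1
    exact sub_eq_zero.mp h1
  have hline : ∀ x : ℝ, (x : ℂ) + y * I ∈ UHP := fun x => by
    change 0 < ((x : ℂ) + y * I).im
    simpa using hy
  have hcont : Continuous fun x : ℝ => F (x + y * I) := by
    refine hF.continuousOn.comp_continuous (by fun_prop) hline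
  rw [intervalIntegral.integral_eq_sub_of_hasDerivAt (f := fun x : ℝ => Φ (x + y * I)) _
    (hcont.intervalIntegrable _ _)]
  · have := hTI _ (hline 0)
    simp only [ofReal_zero, ofReal_one, zero_add] at this ⊢
    rw [add_comm, this, sub_self]
  · intro x _
    have := (hΦ' _ (hline x)).comp_add_const (x : ℂ) (y * I)
    exact this.comp_ofReal

open scoped MatrixGroups UpperHalfPlane ModularForm Manifold
open CongruenceSubgroup

lemma slash_formula (g : ℂ → ℂ) (γ : SL(2, ℤ)) (τ : ℍ) :
    ((fun z : ℍ => g z) ∣[(2 : ℤ)] γ) τ =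
      g ((γ 0 0 * (τ : ℂ) + γ 0 1) / (γ 1 0 * (τ : ℂ) + γ 1 1)) / (γ 1 0 * (τ : ℂ) + γ 1 1) ^ 2 := by
  rw [ModularForm.SL_slash_apply, UpperHalfPlane.coe_specialLinearGroup_apply,
    ModularGroup.denom_apply, div_eq_mul_inv _ (_ ^ 2)]
  congr 1

lemma tendsto_integral {h : ℂ → ℂ} (hh : Tendsto h atInf (𝓝 0)) :
    Tendsto (fun y : ℝ => ∫ x in (0 : ℝ)..1, h (x + y * I)) atTop (𝓝 0) := by
  rw [Metric.tendsto_nhds]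
  intro ε hε
  have h1 := Metric.tendsto_nhds.mp hh (ε / 2) (by linarith)
  refine (Filter.eventually_comap.mp h1).mono fun y hy => ?_
  rw [dist_zero_right]
  have := intervalIntegral.norm_integral_le_of_norm_le_const (a := (0 : ℝ)) (b := 1) (C := ε / 2)
    (f := fun x : ℝ => h (x + y * I)) (fun x _ => by
      have := hy (x + y * I) (by simp)
      rw [dist_zero_right] at this
      exact this.le)
  rw [sub_zero, abs_one, mul_one] at this
  linarith

/-- The residue theorem for a weight two form `g` on `Γ₀(D)` tending to zero at the cusps other than
`∞`: `period_zero` applies to the trace of `g` to `SL₂(ℤ)`, in which only the trivial coset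
contributes as the height of the segment goes to infinity. -/
lemma residue_zero (D : ℕ) [NeZero D] (g : ℂ → ℂ) (hg : DifferentiableOn ℂ g UHP)
    (hinv : ∀ γ : SL(2, ℤ), (D : ℤ) ∣ γ 1 0 → ∀ τ ∈ UHP,
      g ((γ 0 0 * τ + γ 0 1) / (γ 1 0 * τ + γ 1 1)) = (γ 1 0 * τ + γ 1 1) ^ 2 * g τ)
    (hcusp : ∀ γ : SL(2, ℤ), ¬ (D : ℤ) ∣ γ 1 0 →
      Tendsto (fun τ : ℂ => ‖g ((γ 0 0 * τ + γ 0 1) / (γ 1 0 * τ + γ 1 1))‖ /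
        ‖(γ 1 0 * τ + γ 1 1 : ℂ)‖ ^ 2) atInf (𝓝 0)) :
    Tendsto (fun y : ℝ => ∫ x in (0 : ℝ)..1, g (x + y * I)) atTop (𝓝 0) := by
  classical
  obtain ⟨gH, hgH⟩ : ∃ gH : ℍ → ℂ, gH = fun z : ℍ => g z := ⟨_, rfl⟩
  have hmem : ∀ γ : SL(2, ℤ), γ ∈ Gamma0 D ↔ (D : ℤ) ∣ γ 1 0 := fun γ => by
    rw [Gamma0_mem, ZMod.intCast_zmod_eq_zero_iff_dvd]
  have hgd : MDifferentiable 𝓘(ℂ) 𝓘(ℂ) gH := by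
    rw [UpperHalfPlane.mdifferentiable_iff]
    refine hg.congr fun z hz => ?_
    rw [hgH]
    simp [UpperHalfPlane.ofComplex_apply_of_im_pos hz]
  have hginv : ∀ γ ∈ Gamma0 D, gH ∣[(2 : ℤ)] γ = gH := by
    intro γ hγ
    ext τ
    have hne : (γ 1 0 * (τ : ℂ) + γ 1 1) ≠ 0 := by
      have := UpperHalfPlane.denom_ne_zero (γ : GL (Fin 2) ℝ) τ
      rwa [ModularGroup.denom_apply] at this
    rw [hgH, slash_formula, hinv γ ((hmem γ).mp hγ) τ τ.im_pos]
    field_simp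
  have : Fintype (SL(2, ℤ) ⧸ Gamma0 D) := Subgroup.fintypeQuotientOfFiniteIndex
  -- `s q` is the summand of the trace attached to the left coset `q`; it does not depend on the
  -- representative because `g` is invariant under `Γ₀(D)`
  obtain ⟨s, hs⟩ : ∃ s : SL(2, ℤ) ⧸ Gamma0 D → ℍ → ℂ, s = fun q => gH ∣[(2 : ℤ)] (q.out)⁻¹ := ⟨_, rfl⟩
  have hsmk : ∀ γ : SL(2, ℤ), s (QuotientGroup.mk γ) = gH ∣[(2 : ℤ)] γ⁻¹ := by
    intro γ
    obtain ⟨h, hh⟩ := QuotientGroup.mk_out_eq_mul (Gamma0 D) γ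
    rw [hs]
    beta_reduce
    rw [hh, mul_inv_rev, SlashAction.slash_mul, hginv _ ((Gamma0 D).inv_mem h.2)]
  obtain ⟨F, hF⟩ : ∃ F : ℍ → ℂ, F = ∑ q, s q := ⟨_, rfl⟩
  have hFinv : ∀ γ : SL(2, ℤ), F ∣[(2 : ℤ)] γ = F := by
    intro γ
    rw [hF, SlashAction.sum_slash]
    rw [← Equiv.sum_comp (MulAction.toPerm (γ⁻¹ : SL(2, ℤ))) s]
    refine Finset.sum_congr rfl fun q _ => ?_
    obtain ⟨δ, rfl⟩ := QuotientGroup.mk_surjective q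
    rw [MulAction.toPerm_apply, MulAction.Quotient.smul_mk, smul_eq_mul, hsmk, hsmk, mul_inv_rev,
      inv_inv, SlashAction.slash_mul]
  have hsd : ∀ q, MDifferentiable 𝓘(ℂ) 𝓘(ℂ) (s q) := by
    intro q
    rw [hs]
    exact hgd.slash _ _
  have hsd' : ∀ q, DifferentiableOn ℂ (s q ∘ UpperHalfPlane.ofComplex) UHP := fun q =>
    UpperHalfPlane.mdifferentiable_iff.mp (hsd q)
  have hFinv' : ∀ (γ : SL(2, ℤ)), ∀ z ∈ UHP, (F ∘ UpperHalfPlane.ofComplex)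
      ((γ 0 0 * z + γ 0 1) / (γ 1 0 * z + γ 1 1)) / (γ 1 0 * z + γ 1 1) ^ 2 =
      (F ∘ UpperHalfPlane.ofComplex) z := by
    intro γ z hz
    have hFf : F = fun τ : ℍ => (F ∘ UpperHalfPlane.ofComplex) (τ : ℂ) := by
      ext τ; simp [UpperHalfPlane.ofComplex_apply]
    have h1 := congrFun (hFinv γ) ⟨z, hz⟩
    rw [hFf, slash_formula] at h1
    exact h1
  have hFsum : F ∘ UpperHalfPlane.ofComplex =
      fun z => ∑ q, (s q ∘ UpperHalfPlane.ofComplex) z := by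
    ext z; simp [hF]
  have hper := fun y hy => period_zero (F := F ∘ UpperHalfPlane.ofComplex) (by
      rw [hFsum]
      exact DifferentiableOn.fun_sum fun q _ => hsd' q) (by
      intro z hz
      have h1 := hFinv' ModularGroup.T z hz
      simpa [ModularGroup.T] using h1) (by
      intro z hz
      have hz0 : z ≠ 0 := by rintro rfl; simp [UHP] at hz
      have h1 := hFinv' ModularGroup.S z hz
      simp only [ModularGroup.S, Matrix.of_apply, Matrix.cons_val', Matrix.cons_val_zero,
        Matrix.cons_val_one, Matrix.cons_val_fin_one, Int.cast_zero, zero_mul, zero_add,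
        Int.cast_neg, Int.cast_one, one_mul, add_zero] at h1
      rw [← h1]
      field_simp) y hy
  have hline : ∀ y : ℝ, 0 < y → ∀ x : ℝ, (x : ℂ) + y * I ∈ UHP := fun y hy x => by
    change 0 < ((x : ℂ) + y * I).im
    simpa using hy
  have hintg : ∀ q (y : ℝ), 0 < y → IntervalIntegrable
      (fun x : ℝ => (s q ∘ UpperHalfPlane.ofComplex) (x + y * I)) MeasureTheory.volume 0 1 := by
    intro q y hy
    exact ((hsd' q).continuousOn.comp_continuous (by fun_prop) (hline y hy)).intervalIntegrable _ _
  have hone : ∀ z ∈ UHP, (s (QuotientGroup.mk 1) ∘ UpperHalfPlane.ofComplex) z = g z := by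
    intro z hz
    rw [hsmk, inv_one, SlashAction.slash_one, hgH]
    simp [UpperHalfPlane.ofComplex_apply_of_im_pos hz]
  have hother : ∀ q, q ≠ QuotientGroup.mk 1 →
      Tendsto (s q ∘ UpperHalfPlane.ofComplex) atInf (𝓝 0) := by
    intro q hq
    obtain ⟨δ, rfl⟩ := QuotientGroup.mk_surjective q
    have hδ : δ⁻¹ ∉ Gamma0 D := by
      intro h
      apply hq
      rw [QuotientGroup.eq, mul_one]
      exact h
    rw [tendsto_zero_iff_norm_tendsto_zero]
    refine (hcusp δ⁻¹ (fun h => hδ ((hmem _).mpr h))).congr'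
      (EvenLat.eventually_im_pos.mono fun z hz => ?_)
    have hz' : 0 < z.im := by linarith
    beta_reduce
    rw [hsmk, hgH, Function.comp_apply, UpperHalfPlane.ofComplex_apply_of_im_pos hz', slash_formula,
      norm_div, norm_pow]
  have hsum : ∀ y : ℝ, 0 < y → ∫ x in (0 : ℝ)..1, g (x + y * I) =
      -∑ q ∈ Finset.univ.erase (QuotientGroup.mk 1 : SL(2, ℤ) ⧸ Gamma0 D),
        ∫ x in (0 : ℝ)..1, (s q ∘ UpperHalfPlane.ofComplex) (x + y * I) := by
    intro y hy
    have h1 := hper y hy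
    rw [hFsum, intervalIntegral.integral_finsetSum (fun q _ => hintg q y hy),
      ← Finset.add_sum_erase _ _ (Finset.mem_univ (QuotientGroup.mk 1))] at h1
    rw [← eq_neg_of_add_eq_zero_left h1]
    exact intervalIntegral.integral_congr fun x _ => (hone _ (hline y hy x)).symm
  have hlim := (tendsto_finsetSum (Finset.univ.erase (QuotientGroup.mk 1 : SL(2, ℤ) ⧸ Gamma0 D))
    fun q hq => tendsto_integral (hother q (Finset.ne_of_mem_erase hq))).neg
  rw [Finset.sum_const_zero, neg_zero] at hlim
  exact hlim.congr' ((Filter.eventually_gt_atTop 0).mono fun y hy => (hsum y hy).symm)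

end

/-! ### Pairing a weakly holomorphic form with a theta series -/

section

open Real Complex Filter Topology

open scoped MatrixGroups

lemma matR_det (γ : SL(2, ℤ)) : (matR γ).det = 1 := by
  have h := γ.det_coe
  rw [Matrix.det_fin_two] at h
  rw [Matrix.det_fin_two]
  simp only [matR, Matrix.map_apply]
  exact_mod_cast h

lemma slash_matR (w : ℤ) (γ : SL(2, ℤ)) (f : ℂ → ℂ) (τ : ℂ) :
    slash w (matR γ) f τ = (γ 1 0 * τ + γ 1 1) ^ (-w) *
      f ((γ 0 0 * τ + γ 0 1) / (γ 1 0 * τ + γ 1 1)) := by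
  rw [slash, matR_det]
  simp [matR]

lemma denom_ne (γ : SL(2, ℤ)) (τ : ℂ) (hτ : τ ∈ UHP) : (γ 1 0 * τ + γ 1 1 : ℂ) ≠ 0 := by
  have hτ' : 0 < τ.im := hτ
  intro h
  have h1 := congrArg Complex.im h
  simp at h1
  rcases h1 with h1 | h1
  · have hd := γ.det_coe
    rw [Matrix.det_fin_two] at hd
    rw [h1] at h hd
    simp at h
    rw [h] at hd
    simp at hd
  · exact hτ'.ne' h1

lemma integral_e (m : ℤ) (y : ℝ) :
    ∫ x in (0 : ℝ)..1, cexp (2 * π * I * m * (x + y * I)) = if m = 0 then 1 else 0 := by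
  split_ifs with h
  · simp [h]
  · have hc : 2 * π * I * m ≠ 0 := by
      have : (m : ℂ) ≠ 0 := by exact_mod_cast h
      have hpi : (π : ℂ) ≠ 0 := by exact_mod_cast Real.pi_ne_zero
      simp [this, hpi]
    have e : ∀ x : ℝ, cexp (2 * π * I * m * (x + y * I)) =
        cexp (2 * π * I * m * (y * I)) * cexp ((2 * π * I * m) * x) := by
      intro x; rw [← Complex.exp_add]; ring_nf
    simp_rw [e]
    rw [intervalIntegral.integral_const_mul, integral_exp_mul_complex hc]
    have : cexp (2 * π * I * m * (1 : ℝ)) = 1 := by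
      rw [show 2 * π * I * m * (1 : ℝ) = m * (2 * π * I) by push_cast; ring]
      exact Complex.exp_int_mul_two_pi_mul_I m
    rw [this]
    simp

namespace EvenLat

variable {r k D : ℕ} (L : EvenLat r k D)

/-- Integration over a horizontal unit segment extracts the constant Fourier coefficient of the
product of `f` with a theta series. -/
lemma constant_term {P : (Fin r → ℝ) → ℂ} (hP : ExpBdd P) (f : ℂ → ℂ) (c : ℤ → ℂ)
    (hf : ∀ τ ∈ UHP, HasSum (fun m : ℤ => c m * cexp (2 * π * I * m * τ)) (f τ)) (y : ℝ) (hy : 0 < y) :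
    HasSum (fun x : Fin r → ℤ => c (-L.q x) * P (L.Ar.mulVec (ic x)))
      (∫ x in (0 : ℝ)..1, f (x + y * I) * L.theta P (x + y * I)) := by
  have hline : ∀ x : ℝ, (x : ℂ) + y * I ∈ UHP := fun x => by
    change 0 < ((x : ℂ) + y * I).im
    simpa using hy
  have hyI : (y * I : ℂ) ∈ UHP := by simpa using hline 0
  obtain ⟨u, hu⟩ : ∃ u : ℤ → ℂ → ℂ, u = fun m τ => c m * cexp (2 * π * I * m * τ) := ⟨_, rfl⟩
  obtain ⟨v, hv⟩ : ∃ v : (Fin r → ℤ) → ℂ → ℂ, v = fun x τ =>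
    P (L.Ar.mulVec (ic x)) * cexp (2 * π * I * L.q x * τ) := ⟨_, rfl⟩
  have hus : ∀ τ ∈ UHP, Summable fun m => ‖u m τ‖ := fun τ hτ => by
    rw [hu]; exact (hf τ hτ).summable.norm
  have hvs : ∀ τ ∈ UHP, Summable fun x => ‖v x τ‖ := fun τ hτ => by
    rw [hv]; exact L.theta_summable hP τ hτ
  have hlim : ∀ τ ∈ UHP, HasSum (fun p : ℤ × (Fin r → ℤ) => u p.1 τ * v p.2 τ)
      (f τ * L.theta P τ) := by
    intro τ hτ
    have h1 : HasSum (fun m => u m τ) (f τ) := by rw [hu]; exact hf τ hτ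
    have h2 : HasSum (fun x => v x τ) (L.theta P τ) := by
      have := (hvs τ hτ).of_norm.hasSum
      rw [theta]; rw [hv] at this ⊢; exact this
    have h3 := summable_mul_of_summable_norm (f := fun m => u m τ) (g := fun x => v x τ)
      (hus τ hτ) (hvs τ hτ)
    exact HasSum.mul (f := fun m => u m τ) (g := fun x => v x τ) h1 h2 h3
  have hnorm : ∀ (z : ℤ) (x : ℝ), ‖cexp (2 * π * I * z * (x + y * I))‖ =
      ‖cexp (2 * π * I * z * (y * I))‖ := by
    intro z x
    rw [Complex.norm_exp, Complex.norm_exp]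
    congr 1
    simp
  have key := intervalIntegral.hasSum_integral_of_dominated_convergence
    (μ := MeasureTheory.volume) (a := (0 : ℝ)) (b := 1)
    (F := fun (p : ℤ × (Fin r → ℤ)) (x : ℝ) => u p.1 (x + y * I) * v p.2 (x + y * I))
    (f := fun x : ℝ => f (x + y * I) * L.theta P (x + y * I))
    (fun p _ => ‖u p.1 (y * I)‖ * ‖v p.2 (y * I)‖)
    (fun p => by
      apply Continuous.aestronglyMeasurable
      rw [hu, hv]; fun_prop)
    (fun p => Filter.Eventually.of_forall fun x _ => by
      rw [norm_mul, hu, hv]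
      beta_reduce
      rw [norm_mul, norm_mul, norm_mul, norm_mul, hnorm, hnorm])
    (Filter.Eventually.of_forall fun x _ => (hus _ hyI).mul_of_nonneg (hvs _ hyI)
      (fun _ => norm_nonneg _) (fun _ => norm_nonneg _))
    intervalIntegrable_const
    (Filter.Eventually.of_forall fun x _ => hlim _ (hline x))
  have hterm : ∀ p : ℤ × (Fin r → ℤ), ∫ x in (0 : ℝ)..1, u p.1 (x + y * I) * v p.2 (x + y * I) =
      c p.1 * P (L.Ar.mulVec (ic p.2)) * if p.1 + L.q p.2 = 0 then 1 else 0 := by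
    intro p
    rw [← integral_e _ y, ← intervalIntegral.integral_const_mul]
    refine intervalIntegral.integral_congr fun x _ => ?_
    rw [hu, hv]
    beta_reduce
    rw [mul_mul_mul_comm, ← Complex.exp_add]
    congr 2
    push_cast; ring
  rw [funext hterm] at key
  have hinj : Function.Injective (fun x : Fin r → ℤ => ((-L.q x, x) : ℤ × (Fin r → ℤ))) :=
    fun x x' h => (Prod.ext_iff.mp h).2
  rw [← hinj.hasSum_iff] at key
  · have e : (fun p : ℤ × (Fin r → ℤ) => c p.1 * P (L.Ar.mulVec (ic p.2)) *
        if p.1 + L.q p.2 = 0 then (1 : ℂ) else 0) ∘ (fun x : Fin r → ℤ => (-L.q x, x)) =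
        fun x : Fin r → ℤ => c (-L.q x) * P (L.Ar.mulVec (ic x)) := by
      ext x; simp
    rw [e] at key
    exact key
  · rintro ⟨m, x⟩ hx
    rw [if_neg, mul_zero]
    intro h
    exact hx ⟨x, by simp at h ⊢; omega⟩

/-- The product of `f` with a weighted theta series of weight `k + 2` has weight two and trivial
character, and it tends to zero at all cusps other than `∞`, so its constant term vanishes. -/
lemma pairing_zero (hD4 : D % 4 = 3) {K : ℂ} (hK : K ≠ 0)
    (h1 : Good L.Ar L.A' k K 0 (fun _ => 1)) {P : (Fin r → ℝ) → ℂ}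
    (hP : Good L.Ar L.A' k K 1 P) (hP0 : P 0 = 0) (f : ℂ → ℂ) (c : ℤ → ℂ)
    (hf : IsWeaklyHolInfty D (fun a => ((chiK D a : ℤ) : ℂ) ^ k) (-(k : ℤ)) f c) :
    HasSum (fun x : Fin r → ℤ => c (-L.q x) * P (L.Ar.mulVec (ic x))) 0 := by
  have : NeZero D := ⟨L.hD.ne'⟩
  have hct := fun y hy => L.constant_term hP.bdd f c hf.fourier y hy
  have hlim := residue_zero D (fun τ => f τ * L.theta P τ)
    (hf.holo.mul (L.theta_differentiable hP.bdd)) (by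
      intro γ hγ τ hτ
      have h2 := hf.transform γ hγ τ hτ
      have hdet := γ.det_coe
      rw [Matrix.det_fin_two] at hdet
      rw [slash_matR, neg_neg, zpow_natCast] at h2
      have h3 := L.theta_gamma hD4 hK h1 hP (γ 0 0) (γ 0 1) (γ 1 0) (γ 1 1) hdet hγ τ hτ
      have hχ : ((jacobiSym (γ 1 1) D : ℤ) : ℂ) ^ 2 = 1 := by
        have hcop : Int.gcd (γ 1 1) D = 1 := by
          rw [← Int.isCoprime_iff_gcd_eq_one]
          obtain ⟨e, he⟩ := hγ
          exact ⟨γ 0 0, -(γ 0 1 * e), by rw [he] at hdet; linarith⟩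
        exact_mod_cast jacobiSym.sq_one hcop
      rw [chiK_eq hD4] at h2
      rw [h3]
      obtain ⟨J, hJ⟩ : ∃ J : ℂ, J = γ 1 0 * τ + γ 1 1 := ⟨_, rfl⟩
      rw [← hJ] at h2 ⊢
      calc _ = (J ^ k * f ((γ 0 0 * τ + γ 0 1) / J)) *
            ((jacobiSym (γ 1 1) D : ℂ) ^ k * J ^ 2 * L.theta P τ) := by ring
        _ = ((jacobiSym (γ 1 1) D : ℂ) ^ 2) ^ k * J ^ 2 * (f τ * L.theta P τ) := by rw [h2]; ring
        _ = _ := by rw [hχ, one_pow, one_mul]) (by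
      intro γ hγ
      obtain ⟨C, hC⟩ := hf.bdd_at_other_cusps γ hγ
      have hdet := γ.det_coe
      rw [Matrix.det_fin_two] at hdet
      have hc : γ 1 0 ≠ 0 := fun h => hγ (by rw [h]; exact dvd_zero _)
      have h2 := (L.theta_cusp hK hP hP0 (γ 0 0) (γ 0 1) (γ 1 0) (γ 1 1) hc hdet).const_mul C
      rw [mul_zero] at h2
      refine squeeze_zero' (Filter.Eventually.of_forall fun τ => by positivity)
        (eventually_im_pos.mono fun τ hτ => ?_) h2
      have h3 := hC τ hτ
      have hne := denom_ne γ τ (show 0 < τ.im by linarith)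
      rw [slash_matR, neg_neg, zpow_natCast, norm_mul, norm_pow] at h3
      obtain ⟨J, hJ⟩ : ∃ J : ℂ, J = γ 1 0 * τ + γ 1 1 := ⟨_, rfl⟩
      rw [← hJ] at h3 hne ⊢
      have hJ0 : 0 < ‖J‖ := norm_pos_iff.mpr hne
      calc _ = (‖J‖ ^ k * ‖f ((γ 0 0 * τ + γ 0 1) / J)‖) *
            (‖L.theta P ((γ 0 0 * τ + γ 0 1) / J)‖ / ‖J‖ ^ (k + 2 * 1)) := by
              rw [norm_mul]; field_simp; ring
        _ ≤ _ := by gcongr)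
  have hc := hct 1 one_pos
  have heq : ∀ y : ℝ, 0 < y → ∫ x in (0 : ℝ)..1, f (x + y * I) * L.theta P (x + y * I) =
      ∫ x in (0 : ℝ)..1, f (x + (1 : ℝ) * I) * L.theta P (x + (1 : ℝ) * I) :=
    fun y hy => (hct y hy).unique hc
  have h0 := tendsto_nhds_unique (hlim.congr'
    ((Filter.eventually_gt_atTop 0).mono fun y hy => heq y hy)) tendsto_const_nhds
  rw [← h0] at hc
  exact hc

end EvenLat

end

/-! ### Integrality for an even lattice -/

section

open Real Complex Filter Topology

namespace EvenLat

variable {r k D : ℕ} (L : EvenLat r k D)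

lemma finite_le (M : ℤ) : {x : Fin r → ℤ | L.q x ≤ M}.Finite := by
  have h := L.spdA.summable 1 0 one_pos le_rfl 0
  have h2 := h.tendsto_cofinite_zero.eventually_lt_const (Real.exp_pos (-(2 * M)))
  refine (Filter.eventually_cofinite.mp h2).subset fun x hx => ?_
  have hx' : (L.q x : ℝ) ≤ M := by exact_mod_cast (show L.q x ≤ M from hx)
  change ¬ _
  rw [sub_zero, L.qf_ic, not_lt, Real.exp_le_exp]
  linarith

lemma trace_A' : ∑ a, ∑ b, L.A' a b * L.Ar a b = r := by
  have h : ∀ a, ∑ b, L.A' a b * L.Ar a b = 1 := by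
    intro a
    have := congrFun (congrFun L.A'A a) a
    rw [Matrix.mul_apply, Matrix.one_apply_eq] at this
    rw [← this]
    exact Finset.sum_congr rfl fun b _ => by rw [L.spdA.symm a b]
  simp [h]

/-- The weight `yᵢ yⱼ - t A⁻¹(y)` at the vector `y = A x`. -/
lemma PH_eval (i j : Fin r) (t : ℝ) (x : Fin r → ℤ) :
    PH (Matrix.of fun a b => (if a = i then if b = j then (1 : ℝ) else 0 else 0) - t * L.A' a b)
      (L.Ar.mulVec (ic x)) =
      (((L.A.mulVec x) i * (L.A.mulVec x) j : ℤ) : ℂ) - t * (2 * L.q x : ℤ) := by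
  have h := L.qfA'_A x
  have h' : ∑ a, ∑ b, (L.A' a b : ℂ) * (((L.A.mulVec x) a : ℂ) * ((L.A.mulVec x) b : ℂ)) =
      2 * L.q x := by
    have h2 : ((qf L.A' (ic (L.A.mulVec x)) : ℝ) : ℂ) = 2 * L.q x := by rw [h]; push_cast; ring
    rw [← h2, qf, dotProduct]
    simp only [Matrix.mulVec, dotProduct, ic, Finset.mul_sum]
    push_cast
    simp only [Finset.mul_sum]
    refine Finset.sum_congr rfl fun a _ => Finset.sum_congr rfl fun b _ => ?_
    ring_nf
  rw [PH, L.ic_mulVec]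
  simp only [Matrix.of_apply, ic, Complex.ofReal_sub, sub_mul, Finset.sum_sub_distrib,
    Complex.ofReal_mul, mul_assoc, ← Finset.mul_sum, Complex.ofReal_intCast]
  rw [h']
  push_cast
  congr 1
  rw [Finset.sum_eq_single i, Finset.sum_eq_single j]
  · simp
  · intro b _ hb; simp [hb]
  · simp
  · intro a _ ha; simp [ha]
  · simp

/-- The entries of the Gram matrix are coprime: if `g` divides all of them, then `g^(2k)` divides the
determinant `D^k`, so `g²` divides the squarefree integer `D`. -/
lemma bezout (hDsf : Squarefree D) : ∃ u : Fin r × Fin r → ℤ, ∑ p, u p * L.A p.1 p.2 = 1 := by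
  obtain ⟨g, hg⟩ := (IsPrincipalIdealRing.principal
    (Ideal.span (Set.range fun p : Fin r × Fin r => L.A p.1 p.2))).principal
  rw [Ideal.submodule_span_eq] at hg
  have hdvd : ∀ i j, g ∣ L.A i j := fun i j => by
    rw [← Ideal.mem_span_singleton, ← hg]
    exact Ideal.subset_span ⟨(i, j), rfl⟩
  choose B hB using hdvd
  have hA : L.A = g • Matrix.of B := by
    ext i j; simp [hB]
  have hdet := L.hdet
  rw [hA, Matrix.det_smul, Fintype.card_fin] at hdet
  have hd : (g ^ 2) ^ k ∣ (D : ℤ) ^ k := by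
    rw [← pow_mul, ← L.hr]; exact ⟨_, hdet.symm⟩
  have hg2 : g ^ 2 ∣ (D : ℤ) := (Int.pow_dvd_pow_iff L.hk.ne').mp hd
  have hu : IsUnit g := by
    have := Int.squarefree_natCast.mpr hDsf
    exact this g (by rwa [pow_two] at hg2)
  have h1 : (1 : ℤ) ∈ Ideal.span (Set.range fun p : Fin r × Fin r => L.A p.1 p.2) := by
    rw [hg, Ideal.span_singleton_eq_top.mpr hu]; trivial
  exact Ideal.mem_span_range_iff_exists_fun.mp h1

/-- With `μ` the number to be shown integral, the pairing with the weight `yᵢ yⱼ - (Aᵢⱼ / r) A⁻¹(y)`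
reads `∑ c(-q(x)) (Ax)ᵢ (Ax)ⱼ = Aᵢⱼ μ`, and an integral combination of these equations has right
side `μ` by `bezout`. -/
lemma mult_int (hD4 : D % 4 = 3) (hDsf : Squarefree D) (f : ℂ → ℂ) (c : ℤ → ℂ)
    (hf : IsWeaklyHolInfty D (fun a => ((chiK D a : ℤ) : ℂ) ^ k) (-(k : ℤ)) f c)
    (hcint : ∀ m : ℤ, m ≤ 0 → ∃ z : ℤ, c m = (z : ℂ)) (S : Finset (Fin r → ℤ))
    (hS : ∀ x ∉ S, c (-L.q x) = 0) :
    ∃ z : ℤ, (∑ x ∈ S, (L.q x : ℂ) * c (-L.q x)) / (k : ℂ) = z := by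
  obtain ⟨K, hK, h1⟩ := good_one L.spdA' L.A'A L.hr
  have hk0 : (k : ℂ) ≠ 0 := by exact_mod_cast L.hk.ne'
  have hr0 : (r : ℝ) ≠ 0 := by have := L.hk; have := L.hr; exact_mod_cast (by omega : r ≠ 0)
  have hrk : (r : ℂ) = 2 * k := by exact_mod_cast L.hr
  obtain ⟨mu, hmu⟩ : ∃ mu : ℂ, mu = (∑ x ∈ S, (L.q x : ℂ) * c (-L.q x)) / (k : ℂ) := ⟨_, rfl⟩
  have hij : ∀ i j, ∑ x ∈ S, c (-L.q x) * (((L.A.mulVec x) i * (L.A.mulVec x) j : ℤ) : ℂ) =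
      L.A i j * mu := by
    intro i j
    obtain ⟨t, ht⟩ : ∃ t : ℝ, t = L.Ar i j / r := ⟨_, rfl⟩
    have hgood := good_PH L.spdA L.spdA' h1
      (Matrix.of fun a b => (if a = i then if b = j then (1 : ℝ) else 0 else 0) - t * L.A' a b) (by
        simp only [Matrix.of_apply, sub_mul, Finset.sum_sub_distrib, mul_assoc, ← Finset.mul_sum]
        rw [L.trace_A', ht, div_mul_cancel₀ _ hr0, Finset.sum_eq_single i, Finset.sum_eq_single j]
        · simp
        · intro b _ hb; simp [hb]
        · simp
        · intro a _ ha; simp [ha]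
        · simp)
    have h0 := L.pairing_zero hD4 hK h1 hgood (by simp [PH]) f c hf
    have h2 := (hasSum_sum_of_ne_finset_zero (s := S) (fun x hx => by
      rw [hS x hx, zero_mul])).unique h0
    simp only [L.PH_eval, mul_sub, Finset.sum_sub_distrib] at h2
    rw [sub_eq_zero.mp h2, hmu, mul_div_assoc', Finset.mul_sum, Finset.sum_div]
    refine Finset.sum_congr rfl fun x _ => ?_
    have : (t : ℂ) = L.A i j / (2 * k) := by
      rw [ht, ← hrk]; push_cast; simp [Ar]
    rw [this]
    push_cast
    field_simp
  obtain ⟨u, hu⟩ := L.bezout hDsf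
  choose! z hz using hcint
  refine ⟨∑ p, u p * ∑ x ∈ S, z (-L.q x) * ((L.A.mulVec x) p.1 * (L.A.mulVec x) p.2), ?_⟩
  rw [← hmu]
  have hu' : ∑ p, (u p : ℂ) * L.A p.1 p.2 = 1 := by exact_mod_cast hu
  calc mu = (∑ p, (u p : ℂ) * L.A p.1 p.2) * mu := by rw [hu', one_mul]
    _ = ∑ p, (u p : ℂ) * (L.A p.1 p.2 * mu) := by
      rw [Finset.sum_mul]; exact Finset.sum_congr rfl fun p _ => by ring
    _ = _ := by
      simp only [← hij]
      push_cast
      refine Finset.sum_congr rfl fun p _ => ?_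
      congr 1
      refine Finset.sum_congr rfl fun x _ => ?_
      rw [hz _ (by have := L.q_nonneg x; omega)]

end EvenLat

end

section

open Real Complex

/-! ### The even lattice underlying a self-dual hermitian lattice -/

/-- A positive definite integral quadratic form with nonzero determinant is positive definite
over `ℝ`: it is nonnegative on the dense subset `ℚ^r`, hence positive semidefinite. -/
lemma spd_of_int {r : ℕ} (A : Matrix (Fin r) (Fin r) ℤ) (hs : ∀ i j, A i j = A j i)
    (hp : ∀ x : Fin r → ℤ, x ≠ 0 → 0 < x ⬝ᵥ A.mulVec x) (hd : A.det ≠ 0) :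
    (A.map (fun x => (x : ℝ))).PosDef := by
  obtain ⟨R, hR⟩ : ∃ R, R = A.map (fun x => (x : ℝ)) := ⟨_, rfl⟩
  rw [← hR]
  have hintg : ∀ x : Fin r → ℤ, 0 ≤ qf R (ic x) := by
    intro x
    have : qf R (ic x) = ((x ⬝ᵥ A.mulVec x : ℤ) : ℝ) := by
      simp [qf, hR, ic, dotProduct, Matrix.mulVec]
    rw [this]
    by_cases hx : x = 0
    · simp [hx]
    · exact_mod_cast (hp x hx).le
  have hrat : ∀ x : Fin r → ℚ, 0 ≤ qf R (fun i => (x i : ℝ)) := by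
    intro x
    obtain ⟨d, hd⟩ : ∃ d : ℕ, d = ∏ i, (x i).den := ⟨_, rfl⟩
    have hd0 : 0 < d := by
      rw [hd]; exact Finset.prod_pos fun i _ => (x i).den_pos
    have hy : ∀ i, ∃ y : ℤ, (d : ℝ) * (x i : ℝ) = y := by
      intro i
      obtain ⟨e, he⟩ : (x i).den ∣ d := hd ▸ Finset.dvd_prod_of_mem _ (Finset.mem_univ i)
      refine ⟨(x i).num * e, ?_⟩
      have h1 : (x i : ℚ) * (x i).den = (x i).num := Rat.mul_den_eq_num _
      have h2 : ((x i : ℚ) : ℝ) * (x i).den = (x i).num := by exact_mod_cast h1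
      rw [he]; push_cast; rw [← h2]; ring
    choose y hy using hy
    have h1 := hintg y
    have h2 : ic y = (d : ℝ) • (fun i => (x i : ℝ)) := by
      ext i; simp [ic, hy]
    rw [h2, qf_smul] at h1
    exact nonneg_of_mul_nonneg_right h1 (by positivity)
  have hreal : ∀ x, 0 ≤ qf R x := by
    intro x
    have hdense : DenseRange (Pi.map (fun (_ : Fin r) (q : ℚ) => (q : ℝ))) :=
      DenseRange.piMap fun _ => Rat.denseRange_cast
    refine hdense.induction_on (p := fun x => 0 ≤ qf R x) x
      (isClosed_le continuous_const (qf_continuous R)) fun q => hrat q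
  have hH : R.IsHermitian := by
    ext i j; simp [hR, hs i j]
  have hps : R.PosSemidef := Matrix.PosSemidef.of_dotProduct_mulVec_nonneg hH
    fun x => by simpa [qf] using hreal x
  rw [hps.posDef_iff_det_ne_zero]
  have : R.det = (A.det : ℝ) := by
    rw [hR]; exact (RingHom.map_det (Int.castRingHom ℝ) A).symm
  rw [this]; exact_mod_cast hd

/-- The lattice whose Gram matrix is the matrix `A = Mᵀ E` of the trace form `B(x, y) = E(√-D x, y)`, where `E` is
unimodular and `M` is the matrix of multiplication by `√-D`. -/
lemma exists_evenLat {k D : ℕ} (hk : 0 < k) (hDodd : Odd D)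
    (M E F : Matrix (Fin (2 * k)) (Fin (2 * k)) ℤ) (hM : M * M = -((D : ℤ) • 1))
    (hEF : E * F = 1) (hs : ∀ i j, (M.transpose * E) i j = (M.transpose * E) j i)
    (q : (Fin (2 * k) → ℤ) → ℤ) (hq : ∀ x, x ⬝ᵥ (M.transpose * E).mulVec x = 2 * q x)
    (hp : ∀ x, x ≠ 0 → 0 < q x) : ∃ L : EvenLat (2 * k) k D, L.q = q := by
  have hD : 0 < D := hDodd.pos
  have hdM : M.det ^ 2 = ((D : ℤ) ^ k) ^ 2 := by
    have := congrArg Matrix.det hM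
    rw [Matrix.det_mul, Matrix.det_neg, Matrix.det_smul, Matrix.det_one] at this
    simp only [Fintype.card_fin, mul_one] at this
    rw [pow_two, this, pow_mul (-1 : ℤ)]; norm_num; ring
  have hdE : E.det * F.det = 1 := by rw [← Matrix.det_mul, hEF, Matrix.det_one]
  have hdE' : E.det = 1 ∨ E.det = -1 := by
    exact Int.isUnit_iff.mp (IsUnit.of_mul_eq_one _ hdE)
  have hDk : (0 : ℤ) < (D : ℤ) ^ k := by positivity
  have hdA : (M.transpose * E).det = (D : ℤ) ^ k ∨ (M.transpose * E).det = -(D : ℤ) ^ k := by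
    rw [Matrix.det_mul, Matrix.det_transpose]
    rcases sq_eq_sq_iff_eq_or_eq_neg.mp hdM with h | h <;> rcases hdE' with h' | h' <;>
      simp [h, h']
  have hpd := spd_of_int (M.transpose * E) hs (fun x hx => by
    rw [hq]; have := hp x hx; omega) (by rcases hdA with h | h <;> rw [h] <;> omega)
  have hpos : 0 < (M.transpose * E).det := by
    have h1 := hpd.det_pos
    have h2 : ((M.transpose * E).map (fun x => (x : ℝ))).det = ((M.transpose * E).det : ℝ) :=
      (RingHom.map_det (Int.castRingHom ℝ) _).symm
    rw [h2] at h1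
    exact_mod_cast h1
  refine ⟨{ A := M.transpose * E, N := -(F * M.transpose), q := q, hr := rfl, hk := hk, hD := hD,
            hDodd := hDodd, AN := ?_, spd := ⟨?_, ?_⟩, hq := hq, hdet := ?_ }, rfl⟩
  · rw [mul_neg, mul_assoc, ← mul_assoc E, hEF, one_mul, ← Matrix.transpose_mul, hM]
    simp
  · intro i j; simp only [Matrix.map_apply]; rw [hs]
  · intro x hx
    simpa [qf] using hpd.dotProduct_mulVec_pos hx
  · rcases hdA with h | h
    · exact h
    · omega

section Ok
variable {D : ℕ}

/-- The generator `ω = (1 + √-D)/2` as an element of `O_k`. -/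
def okw (D : ℕ) : Ok D := ⟨okGen D, Subring.subset_closure rfl⟩

lemma okGen_im (D : ℕ) : (okGen D).im = Real.sqrt D / 2 := by
  simp [okGen]

lemma okGen_conj (D : ℕ) : (starRingEnd ℂ) (okGen D) = 1 - okGen D := by
  simp only [okGen, map_div₀, map_add, map_one, map_mul, Complex.conj_ofReal, Complex.conj_I,
    map_ofNat]
  ring

lemma okw_sq (hD4 : D % 4 = 3) : okw D * okw D = okw D - (((D + 1) / 4 : ℕ) : ℤ) := by
  apply Subtype.ext
  obtain ⟨t, ht⟩ : ∃ t : ℕ, D + 1 = 4 * t := ⟨(D + 1) / 4, by omega⟩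
  have h1 : (D + 1) / 4 = t := by omega
  have h2 : (Real.sqrt D : ℂ) ^ 2 = D := by
    rw [← Complex.ofReal_pow, Real.sq_sqrt (Nat.cast_nonneg D)]; simp
  have h3 : (D : ℂ) = 4 * t - 1 := by
    rw [eq_sub_iff_add_eq]; exact_mod_cast ht
  rw [h1]
  simp only [okw, okGen, Subring.coe_mul, AddSubgroupClass.coe_sub]
  push_cast
  have hI : Complex.I ^ 2 = -1 := Complex.I_sq
  linear_combination (1/4 : ℂ) * Complex.I ^ 2 * h2 + (D : ℂ) / 4 * hI - (1 / 4 : ℂ) * h3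

/-- The `ℤ`-span of `1, ω` is closed under multiplication, so it is all of `O_k`. -/
lemma ok_repr (hD4 : D % 4 = 3) (a : Ok D) : ∃ u v : ℤ, a = u + v * okw D := by
  obtain ⟨a, ha⟩ := a
  induction ha using Subring.closure_induction with
  | mem x hx => exact ⟨0, 1, by rw [Set.mem_singleton_iff] at hx; subst hx; simp [okw]⟩
  | zero => exact ⟨0, 0, by simp; rfl⟩
  | one => exact ⟨1, 0, by simp; rfl⟩
  | add x y hx hy h1 h2 =>
    obtain ⟨u, v, h1⟩ := h1
    obtain ⟨u', v', h2⟩ := h2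
    refine ⟨u + u', v + v', ?_⟩
    have : (⟨x + y, add_mem hx hy⟩ : Ok D) = ⟨x, hx⟩ + ⟨y, hy⟩ := rfl
    erw [this, h1, h2]; push_cast; ring
  | neg x hx h1 =>
    obtain ⟨u, v, h1⟩ := h1
    refine ⟨-u, -v, ?_⟩
    have : (⟨-x, neg_mem hx⟩ : Ok D) = -⟨x, hx⟩ := rfl
    erw [this, h1]; push_cast; ring
  | mul x y hx hy h1 h2 =>
    obtain ⟨u, v, h1⟩ := h1
    obtain ⟨u', v', h2⟩ := h2
    refine ⟨u * u' - v * v' * ((D + 1) / 4 : ℕ), u * v' + v * u' + v * v', ?_⟩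
    have : (⟨x * y, mul_mem hx hy⟩ : Ok D) = ⟨x, hx⟩ * ⟨y, hy⟩ := rfl
    have hw := okw_sq hD4
    erw [this, h1, h2]; push_cast at hw ⊢
    linear_combination (v : Ok D) * v' * hw

lemma ok_unique (hD : 0 < D) {u v u' v' : ℤ}
    (h : (u : ℂ) + v * okGen D = u' + v' * okGen D) : u = u' ∧ v = v' := by
  have h1 := congrArg Complex.im h
  have hs : 0 < Real.sqrt D := Real.sqrt_pos.mpr (by exact_mod_cast hD)
  simp [okGen_im, hs.ne'] at h1
  subst h1
  simpa using h

/-- `O_k` is free over `ℤ` with basis `1, ω`. -/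
lemma ok_basis (hD4 : D % 4 = 3) : Module.Finite ℤ (Ok D) ∧ Module.Free ℤ (Ok D) ∧
    Module.finrank ℤ (Ok D) = 2 := by
  have hD : 0 < D := by omega
  have hli : LinearIndependent ℤ ![(1 : Ok D), okw D] := by
    rw [LinearIndependent.pair_iff]
    intro s t hst
    have := congrArg (fun a : Ok D => (a : ℂ)) hst
    simp [okw] at this
    exact ok_unique hD (u' := 0) (v' := 0) (by simpa using this)
  have hsp : ⊤ ≤ Submodule.span ℤ (Set.range ![(1 : Ok D), okw D]) := by
    intro a _
    obtain ⟨u, v, rfl⟩ := ok_repr hD4 a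
    refine add_mem ?_ ?_
    · have : (u : Ok D) = u • (1 : Ok D) := by simp
      rw [this]
      exact Submodule.smul_mem _ _ (Submodule.subset_span ⟨0, rfl⟩)
    · rw [← zsmul_eq_mul]
      exact Submodule.smul_mem _ _ (Submodule.subset_span ⟨1, rfl⟩)
  let b := Module.Basis.mk hli hsp
  exact ⟨Module.Finite.of_basis b, Module.Free.of_basis b, by
    rw [Module.finrank_eq_card_basis b]; simp⟩

/-- Every nonzero element of `O_k` divides a nonzero integer, its norm. -/
lemma ok_norm (hD4 : D % 4 = 3) (a : Ok D) (ha : a ≠ 0) :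
    ∃ (b : Ok D) (m : ℤ), m ≠ 0 ∧ b * a = m := by
  have hD : 0 < D := by omega
  obtain ⟨u, v, rfl⟩ := ok_repr hD4 a
  have hw := okw_sq hD4
  refine ⟨u + v - v * okw D, u * u + u * v + v * v * ((D + 1) / 4 : ℕ), ?_, ?_⟩
  · intro h0
    apply ha
    have ht : (1 : ℤ) ≤ ((D + 1) / 4 : ℕ) := by omega
    have hv : v = 0 := by
      by_contra hv
      have : 0 < v * v := mul_self_pos.mpr hv
      nlinarith [sq_nonneg (2 * u + v)]
    subst hv
    have hu : u = 0 := by simpa using h0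
    simp [hu]
  · push_cast at hw ⊢
    linear_combination -(v : Ok D) * v * hw

/-- The rank over `ℤ` of an `O_k`-module of finite rank is twice its rank over `O_k`. -/
lemma finrank_int (hD4 : D % 4 = 3) {L₀ : Type*} [AddCommGroup L₀] [Module (Ok D) L₀] (k : ℕ)
    (hrank : Module.rank (Ok D) L₀ = (k : Cardinal)) : Module.finrank ℤ L₀ = 2 * k := by
  obtain ⟨hfin, hfree, hf2⟩ := ok_basis hD4
  have hfr : Module.finrank (Ok D) L₀ = k := Module.finrank_eq_of_rank_eq hrank
  obtain ⟨v, hv⟩ := exists_linearIndependent_of_le_finrank (R := Ok D) (M := L₀) hfr.ge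
  let N := Submodule.span (Ok D) (Set.range v)
  let b : Module.Basis (Fin k) (Ok D) N := Module.Basis.span hv
  have hN : Module.rank (Ok D) N = (k : Cardinal) := by
    rw [rank_eq_card_basis b]; simp
  have hq0 : Module.rank (Ok D) (L₀ ⧸ N) = 0 := by
    have h1 := rank_quotient_add_rank_of_isDomain N
    rw [hN, hrank] at h1
    obtain ⟨m, hm⟩ := Cardinal.lt_aleph0.mp
      (lt_of_le_of_lt (le_self_add.trans_eq h1) (Cardinal.natCast_lt_aleph0 (n := k)))
    rw [hm] at h1 ⊢
    have : m + k = k := by exact_mod_cast h1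
    have : m = 0 := by omega
    simp [this]
  have hqZ : Module.rank ℤ (L₀ ⧸ N) = 0 := by
    rw [rank_eq_zero_iff] at hq0 ⊢
    intro x
    obtain ⟨a, ha, hax⟩ := hq0 x
    obtain ⟨c, m, hm, hc⟩ := ok_norm hD4 a ha
    refine ⟨m, hm, ?_⟩
    rw [← Int.cast_smul_eq_zsmul (Ok D), ← hc, mul_smul, hax, smul_zero]
  have hNZ : Module.finrank ℤ N = 2 * k := by
    have : Module.Free (Ok D) N := Module.Free.of_basis b
    rw [← Module.finrank_mul_finrank ℤ (Ok D) N, hf2, Module.finrank_eq_card_basis b]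
    simp
  have h2 := rank_quotient_add_rank_of_isDomain (N.restrictScalars ℤ)
  have h3 : Module.rank ℤ (L₀ ⧸ N.restrictScalars ℤ) = 0 := hqZ
  rw [h3, zero_add] at h2
  rw [← hNZ]
  exact congrArg Cardinal.toNat h2.symm

end Ok

end

/-! ### From hermitian lattices to even lattices -/

section

open Real Complex

/-- A self-dual positive definite hermitian lattice of rank `k`, with the quadratic form `Q`, is
isometric to one of the lattices `EvenLat (2 * k) k D`. The Gram matrix is that of the trace form
`h(x, y) + h(y, x)`; self-duality enters through the alternating form `E = (h - h̄)/√-D`, which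
takes the value `β` on `(x, y)` when `h(x, y) = α + β ω` and which is unimodular over `ℤ`. -/
lemma exists_lattice {D : ℕ} (hDodd : Odd D) (hD4 : D % 4 = 3) {k : ℕ} (hk : 0 < k)
    {L₀ : Type*} [AddCommGroup L₀] [Module (Ok D) L₀] [Module.Finite (Ok D) L₀]
    (hrank : Module.rank (Ok D) L₀ = (k : Cardinal))
    (h : L₀ → L₀ → ℂ)
    (hvals : ∀ x y : L₀, h x y ∈ Ok D)
    (hadd : ∀ x x' y : L₀, h (x + x') y = h x y + h x' y)
    (hsmul : ∀ (a : Ok D) (x y : L₀), h (a • x) y = (a : ℂ) * h x y)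
    (hherm : ∀ x y : L₀, h y x = (starRingEnd ℂ) (h x y))
    (Q : L₀ → ℤ) (hQ : ∀ x : L₀, (Q x : ℂ) = h x x)
    (hposdef : ∀ x : L₀, x ≠ 0 → 0 < Q x)
    (hselfdual : ∀ φ : L₀ →ₗ[Ok D] Ok D, ∃! y : L₀, ∀ x : L₀, (φ x : ℂ) = h x y) :
    ∃ (L : EvenLat (2 * k) k D) (e : L₀ ≃ (Fin (2 * k) → ℤ)), ∀ x, L.q (e x) = Q x := by
  have hD : 0 < D := by omega
  obtain ⟨hfinO, hfreeO, -⟩ := ok_basis hD4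
  have hw := okw_sq hD4
  obtain ⟨t, ht⟩ : ∃ t : ℤ, t = (((D + 1) / 4 : ℕ) : ℤ) := ⟨_, rfl⟩
  have htD : 4 * t = D + 1 := by omega
  rw [← ht] at hw
  -- the coordinates of `h x y` in the basis `1, ω`
  have hrep : ∀ x y, ∃ u v : ℤ, h x y = u + v * okGen D := by
    intro x y
    obtain ⟨u, v, huv⟩ := ok_repr hD4 ⟨h x y, hvals x y⟩
    refine ⟨u, v, ?_⟩
    simpa [okw] using congrArg (fun a : Ok D => (a : ℂ)) huv
  choose α β hαβ using hrep
  have hw' : okGen D * okGen D = okGen D - t := by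
    simpa [okw] using congrArg (fun a : Ok D => (a : ℂ)) hw
  have hadd_l : ∀ x x' y, α (x + x') y = α x y + α x' y ∧ β (x + x') y = β x y + β x' y := by
    intro x x' y
    apply ok_unique hD
    rw [← hαβ, hadd, hαβ, hαβ]; push_cast; ring
  have hconj : ∀ x y, α y x = α x y + β x y ∧ β y x = -β x y := by
    intro x y
    apply ok_unique hD
    rw [← hαβ, hherm, hαβ]
    simp only [map_add, map_mul, map_intCast, okGen_conj]
    push_cast; ring
  have hw_l : ∀ x y, α (okw D • x) y = -t * β x y ∧ β (okw D • x) y = α x y + β x y := by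
    intro x y
    apply ok_unique hD
    rw [← hαβ, hsmul, hαβ]
    simp only [okw]
    push_cast
    linear_combination (β x y : ℂ) * hw'
  have hadd_r : ∀ x y y', β x (y + y') = β x y + β x y' := by
    intro x y y'
    rw [(hconj (y + y') x).2, (hadd_l y y' x).2, (hconj y x).2, (hconj y' x).2]; ring
  -- `E(x, y)` is the coefficient of `ω` in `h x y`; it is alternating since `h x x` is rational
  let Eb : L₀ →ₗ[ℤ] L₀ →ₗ[ℤ] ℤ := (AddMonoidHom.mk' (fun x =>
    (AddMonoidHom.mk' (fun y => β x y) (hadd_r x)).toIntLinearMap)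
    (fun x x' => by ext y; exact (hadd_l x x' y).2)).toIntLinearMap
  have hEb : ∀ x y, Eb x y = β x y := fun x y => rfl
  have hQαβ : ∀ x, α x x = Q x ∧ β x x = 0 := by
    intro x
    apply ok_unique hD
    rw [← hαβ, ← hQ]; simp
  -- `s = √-D = 2ω - 1`, for which `E(s x, y) = h x y + h y x`
  obtain ⟨s, hs⟩ : ∃ s : Ok D, s = 2 * okw D - 1 := ⟨_, rfl⟩
  have hss : s * s = -(D : ℤ) := by
    have htD' : (4 : Ok D) * t = D + 1 := by exact_mod_cast congrArg (Int.cast : ℤ → Ok D) htD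
    rw [hs]; push_cast; linear_combination 4 * hw - htD'
  have hsx : ∀ x : L₀, s • x = okw D • x + okw D • x - x := by
    intro x; rw [hs, sub_smul, two_mul, add_smul, one_smul]
  have hEs : ∀ x y, Eb (s • x) y = 2 * α x y + β x y := by
    intro x y
    rw [hsx, map_sub, map_add, LinearMap.sub_apply, LinearMap.add_apply, hEb, hEb,
      (hw_l x y).2]; ring
  -- a torsion element would have `Q x = 0`; so `L₀` is free over `ℤ`
  have : Module.Finite ℤ L₀ := Module.Finite.trans (Ok D) L₀
  have htf : Module.IsTorsionFree ℤ L₀ := by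
    refine Module.IsTorsionFree.of_smul_eq_zero fun m x hmx => ?_
    by_contra! hne
    have h1 : (m : Ok D) • x = 0 := by rw [Int.cast_smul_eq_zsmul, hmx]
    have h2 := hsmul (m : Ok D) x x
    have h3 := hsmul (0 : Ok D) x x
    rw [zero_smul] at h3
    rw [h1, h3, ← hQ] at h2
    have h4 := hposdef x hne.2
    simp [hne.1, h4.ne'] at h2
  have hfr : Module.finrank ℤ L₀ = 2 * k := finrank_int hD4 k hrank
  let b : Module.Basis (Fin (2 * k)) ℤ L₀ := (Module.finBasis ℤ L₀).reindex (finCongr hfr)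
  let sl : L₀ →ₗ[ℤ] L₀ := (AddMonoidHom.mk' (fun x => s • x) (smul_add s)).toIntLinearMap
  have hsl : ∀ x, sl x = s • x := fun x => rfl
  obtain ⟨M, hM⟩ : ∃ M, M = LinearMap.toMatrix b b sl := ⟨_, rfl⟩
  obtain ⟨E, hE⟩ : ∃ E, E = LinearMap.toMatrix₂ b b Eb := ⟨_, rfl⟩
  have hMM : M * M = -((D : ℤ) • 1) := by
    have : sl ∘ₗ sl = -((D : ℤ) • LinearMap.id) := by
      ext x
      simp only [LinearMap.comp_apply, hsl, LinearMap.neg_apply, LinearMap.smul_apply,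
        LinearMap.id_apply]
      rw [← mul_smul, hss, neg_smul, Int.cast_smul_eq_zsmul]
    rw [hM, ← LinearMap.toMatrix_comp, this, map_neg, map_smul, LinearMap.toMatrix_id]
  have hME : M.transpose * E = LinearMap.toMatrix₂ b b (Eb ∘ₗ sl) := by
    rw [LinearMap.toMatrix₂_comp b b, hM, hE]
  have hBsymm : ∀ x y, Eb (sl x) y = Eb (sl y) x := by
    intro x y
    rw [hsl, hsl, hEs, hEs, (hconj x y).1, (hconj x y).2]; ring
  -- a `ℤ`-linear form `lam` is the `ω`-coordinate of a unique `O_k`-linear form `φ`, which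
  -- self-duality represents by a vector `y`
  have hdual : ∀ l : Fin (2 * k), ∃ y, ∀ x, b.coord l x = Eb x y := by
    intro l
    obtain ⟨lam, hlam⟩ : ∃ lam : L₀ →ₗ[ℤ] ℤ, lam = b.coord l := ⟨_, rfl⟩
    rw [← hlam]
    let φ : L₀ →ₗ[Ok D] Ok D :=
      { toFun := fun x => (lam (okw D • x) - lam x : ℤ) + (lam x : ℤ) * okw D
        map_add' := by
          intro x y
          rw [smul_add, map_add, map_add]; push_cast; ring
        map_smul' := by
          intro a x
          obtain ⟨u, v, rfl⟩ := ok_repr hD4 a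
          have e1 : ((u : Ok D) + v * okw D) • x = u • x + v • (okw D • x) := by
            rw [add_smul, mul_smul, Int.cast_smul_eq_zsmul, Int.cast_smul_eq_zsmul]
          have e2 : okw D • okw D • x = okw D • x - t • x := by
            rw [← mul_smul, hw, sub_smul, Int.cast_smul_eq_zsmul]
          have e3 : okw D • ((u : Ok D) + v * okw D) • x =
              u • (okw D • x) + v • (okw D • x - t • x) := by
            rw [e1, smul_add, smul_comm, smul_comm (okw D) v, e2]
          rw [e3, e1]
          simp only [map_add, map_sub, map_smul, smul_eq_mul, RingHom.id_apply]
          push_cast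
          linear_combination -(v : Ok D) * lam x * hw }
    obtain ⟨y, hy, -⟩ := hselfdual φ
    refine ⟨y, fun x => ?_⟩
    have h1 := hy x
    rw [hαβ] at h1
    have h2 : ((φ x : Ok D) : ℂ) = ((lam (okw D • x) - lam x : ℤ) : ℂ) + (lam x : ℤ) * okGen D := by
      simp [φ, okw]
    rw [h2] at h1
    exact (ok_unique hD h1).2
  choose y hy using hdual
  have hEF : E * (Matrix.of fun j l => b.repr (y l) j) = 1 := by
    ext i l
    have h1 := hy l (b i)
    have h2 : Eb (b i) (y l) = ∑ j, b.repr (y l) j * Eb (b i) (b j) := by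
      have h3 := congrArg (Eb (b i)) (b.sum_repr (y l))
      rw [map_sum] at h3
      simp only [map_smul, smul_eq_mul] at h3
      exact h3.symm
    rw [Matrix.mul_apply, hE]
    simp only [LinearMap.toMatrix₂_apply, Matrix.of_apply]
    simp only [mul_comm (Eb _ _)]
    rw [← h2, ← h1, Matrix.one_apply, Module.Basis.coord_apply, Module.Basis.repr_self,
      Finsupp.single_apply]
  have hQB : ∀ x, Eb (sl x) x = 2 * Q x := by
    intro x
    rw [hsl, hEs, (hQαβ x).1, (hQαβ x).2]; ring
  have hdot : ∀ x, x ⬝ᵥ (M.transpose * E).mulVec x = 2 * Q (b.equivFun.symm x) := by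
    intro x
    rw [hME, ← hQB]
    have := apply_eq_dotProduct_toMatrix₂_mulVec b b (Eb ∘ₗ sl)
      (b.equivFun.symm x) (b.equivFun.symm x)
    rw [LinearMap.comp_apply] at this
    have hx : ⇑(RingHom.id ℤ) ∘ ⇑(b.repr (b.equivFun.symm x)) = x :=
      b.equivFun.apply_symm_apply x
    rw [this, hx]
  obtain ⟨L, hL⟩ := exists_evenLat hk hDodd M E _ hMM hEF (fun i j => by
      rw [hME]; simp only [LinearMap.toMatrix₂_apply, LinearMap.comp_apply]; exact hBsymm _ _)
    (fun x => Q (b.equivFun.symm x)) hdot (fun x hx => hposdef _ ((LinearEquiv.map_ne_zero_iff _).mpr hx))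
  exact ⟨L, b.equivFun.toEquiv, fun x => by rw [hL]; simp⟩

/-- Rewriting the finite sum over `m` as a sum over lattice vectors. -/
lemma finsum_eq {X : Type*} (Q : X → ℤ) (c : ℤ → ℂ) (m₀ : ℤ)
    (hc : ∀ m : ℤ, m < -m₀ → c m = 0) (hQ : ∀ x, 0 ≤ Q x) (S : Finset X)
    (hS : ∀ x, x ∈ S ↔ Q x ≤ m₀) :
    ∑ᶠ m ∈ {m : ℤ | 0 < m}, (m : ℂ) * c (-m) * (Nat.card {x : X // Q x = m} : ℂ) =
      ∑ x ∈ S, (Q x : ℂ) * c (-Q x) := by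
  classical
  have h1 : ∑ᶠ m ∈ {m : ℤ | 0 < m}, (m : ℂ) * c (-m) * (Nat.card {x : X // Q x = m} : ℂ) =
      ∑ m ∈ Finset.Icc 0 m₀, (m : ℂ) * c (-m) * (Nat.card {x : X // Q x = m} : ℂ) := by
    refine finsum_mem_eq_sum_of_inter_support_eq _ ?_
    ext m
    simp only [Set.mem_inter_iff, Set.mem_ofPred_eq, Function.mem_support, Finset.coe_Icc,
      Set.mem_Icc, and_congr_left_iff]
    intro hm
    have hm0 : m ≠ 0 := by rintro rfl; simp at hm
    have hmm : m ≤ m₀ := by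
      by_contra hlt
      apply hm
      rw [hc (-m) (by omega)]; simp
    omega
  rw [h1, ← Finset.sum_fiberwise_of_maps_to (s := S) (t := Finset.Icc 0 m₀) (g := Q)
    (fun x hx => Finset.mem_Icc.mpr ⟨hQ x, (hS x).mp hx⟩)]
  refine Finset.sum_congr rfl fun m hm => ?_
  have hcard : Nat.card {x : X // Q x = m} = (S.filter (fun x => Q x = m)).card := by
    rw [← Nat.card_eq_finsetCard]
    refine Nat.card_congr (Equiv.subtypeEquivRight fun x => ?_)
    rw [Finset.mem_filter, hS]
    have := (Finset.mem_Icc.mp hm).2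
    constructor
    · intro h; exact ⟨by omega, h⟩
    · exact fun h => h.2
  rw [hcard, Finset.sum_congr rfl (g := fun _ => (m : ℂ) * c (-m))
    (fun x hx => by rw [(Finset.mem_filter.mp hx).2]), Finset.sum_const, nsmul_eq_mul, mul_comm]

end

/-- The rational number `mult(f) = (1/(n-2)) ∑_{m>0} m ⬝ c(-m) ⬝ #{x ∈ L₀ : Q(x) = m}`
is an integer. -/
theorem mult_of_f_integral
    (D : ℕ) (hD : Odd D) (hDsf : Squarefree D) (hD4 : D % 4 = 3)
    (n : ℕ) (hn : 3 ≤ n)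
    -- the self-dual positive definite hermitian O_k-lattice (L₀, h) of rank n-2
    (L₀ : Type*) [AddCommGroup L₀] [Module (Ok D) L₀]
    [Module.Finite (Ok D) L₀] [Module.Projective (Ok D) L₀]
    (hrank : Module.rank (Ok D) L₀ = ((n - 2 : ℕ) : Cardinal))
    (h : L₀ → L₀ → ℂ)
    (hvals : ∀ x y : L₀, h x y ∈ Ok D)
    (hadd : ∀ x x' y : L₀, h (x + x') y = h x y + h x' y)
    (hsmul : ∀ (a : Ok D) (x y : L₀), h (a • x) y = (a : ℂ) * h x y)
    (hherm : ∀ x y : L₀, h y x = (starRingEnd ℂ) (h x y))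
    (Q : L₀ → ℤ) (hQ : ∀ x : L₀, (Q x : ℂ) = h x x)
    (hposdef : ∀ x : L₀, x ≠ 0 → 0 < Q x)
    (hselfdual : ∀ φ : L₀ →ₗ[Ok D] Ok D, ∃! y : L₀, ∀ x : L₀, (φ x : ℂ) = h x y)
    -- the weakly holomorphic modular form f ∈ M^{!,∞}_{2-n}(D, χ_k^{n-2}),
    -- with integral Fourier coefficients c(m) for m ≤ 0
    (f : ℂ → ℂ) (c : ℤ → ℂ)
    (hf : IsWeaklyHolInfty D (fun a => ((chiK D a : ℤ) : ℂ) ^ (n - 2)) (2 - (n : ℤ)) f c)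
    (hcint : ∀ m : ℤ, m ≤ 0 → ∃ z : ℤ, c m = (z : ℂ)) :
    ∃ z : ℤ,
      (∑ᶠ m ∈ {m : ℤ | 0 < m}, (m : ℂ) * c (-m) * (Nat.card {x : L₀ // Q x = m} : ℂ))
          / ((n : ℂ) - 2) = (z : ℂ) := by
  obtain ⟨k, rfl⟩ : ∃ k, n = k + 2 := ⟨n - 2, by omega⟩
  rw [Nat.add_sub_cancel] at hf hrank
  have hw : 2 - ((k + 2 : ℕ) : ℤ) = -(k : ℤ) := by push_cast; ring
  rw [hw] at hf
  have hn' : ((k + 2 : ℕ) : ℂ) - 2 = k := by push_cast; ring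
  rw [hn']
  obtain ⟨L, e, he⟩ := exists_lattice hD hD4 (by omega : 0 < k) hrank h hvals hadd hsmul hherm Q hQ
    hposdef hselfdual
  obtain ⟨m₀, hm₀⟩ := hf.coeff_bddBelow
  obtain ⟨S, hS⟩ : ∃ S, S = (L.finite_le m₀).toFinset := ⟨_, rfl⟩
  obtain ⟨z, hz⟩ := L.mult_int hD4 hDsf f c hf hcint S (fun x hx => hm₀ _ (by
    simp only [hS, Set.Finite.mem_toFinset, Set.mem_ofPred_eq, not_le] at hx; omega))
  refine ⟨z, ?_⟩
  rw [finsum_eq Q c m₀ hm₀ (fun x => he x ▸ L.q_nonneg _) (S.map e.symm.toEmbedding) (fun x => by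
    simp [hS, Finset.mem_map_equiv, he]), ← hz, Finset.sum_map]
  congr 1
  refine Finset.sum_congr rfl fun x _ => ?_
  have : Q (e.symm x) = L.q x := by rw [← he, e.apply_symm_apply]
  simp [this]
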